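/- Let ρ̄, μ̂, p̂ > 0 be constants and k ∈ {0,1,2,3,4}. There exist constants κ > 0 and C > 0 such that for every smooth M : ℝ² → ℝ with ∑_{j=0}^{9} ∫_{ℝ²} |∇^j M|² dx' ≤ κ², with Ω := {x∈ℝ³ : x₁ > M(x₂,x₃)}, and for every pair u : closure(Ω) → ℝ³ of class C^{k+2}, p : closure(Ω) → ℝ of class C^{k+1} with ∫_Ω|∇^j u|² dx < ∞ for 0 ≤ j ≤ k+2, ∫_Ω|∇^j p|² dx < ∞ for 0 ≤ j ≤ k+1, h := ρ̄ div u with ‖h‖_{H^{k+1}(Ω)} < ∞, g := −μ̂Δu + p̂∇p with ‖g‖_{H^{k}(Ω)} < ∞, u = 0 on ∂Ω and u(x) → 0 as |x| → ∞, one has ∫_Ω |∇^{k+2}u|² dx + ∫_Ω |∇^{k+1}p|² dx ≤ C ( ‖h‖²_{H^{k+1}(Ω)} + ‖g‖²_{H^{k}(Ω)} + ∫_Ω |∇u|² dx ), with C independent of M. -/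

import Mathlib

/- STATEMENT 10: uniform Cattabriga-type estimate for the Stokes system on
sufficiently flat perturbed half-spaces: the constant is independent of M
provided ‖M‖_{H⁹(ℝ²)} ≤ κ. -/

noncomputable section

open MeasureTheory Real Set Filter

abbrev E3 : Type := EuclideanSpace ℝ (Fin 3)
abbrev E2 : Type := EuclideanSpace ℝ (Fin 2)

/-- Projection on the tangential variables `x' = (x₂, x₃)`. -/
def proj2 (x : E3) : E2 := (WithLp.equiv 2 (Fin 2 → ℝ)).symm ![x 1, x 2]

/-- The perturbed half-space `Ω = {x : x₁ > M(x₂,x₃)}`. -/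
def Omg (M : E2 → ℝ) : Set E3 := {x : E3 | M (proj2 x) < x 0}

/-- The boundary point `(M(x'), x')` of `∂Ω` over `x' ∈ ℝ²`. -/
def gph (M : E2 → ℝ) (x' : E2) : E3 := (WithLp.equiv 2 (Fin 3 → ℝ)).symm ![M x', x' 0, x' 1]

/-- The vector in `ℝ³` with the given coordinates. -/
def vecE3 (v : Fin 3 → ℝ) : E3 := (WithLp.equiv 2 (Fin 3 → ℝ)).symm v

/-- Partial derivative `∂ᵢf`. -/
def pd (i : Fin 3) (f : E3 → ℝ) (x : E3) : ℝ := fderiv ℝ f x (EuclideanSpace.single i 1)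

/-- Divergence `div u = ∑ᵢ ∂ᵢuᵢ`. -/
def vdiv (u : E3 → E3) (x : E3) : ℝ := ∑ i, pd i (fun y => u y i) x

/-- Gradient `∇f`. -/
def grad (f : E3 → ℝ) (x : E3) : E3 := vecE3 fun i => pd i f x

/-- Componentwise Laplacian `Δu`. -/
def vlap (u : E3 → E3) (x : E3) : E3 := vecE3 fun i => ∑ j, pd j (pd j fun y => u y i) x

/-!
Subtracting `M` from the first coordinate maps `Ω` onto a half-space and turns the Stokes system
into a perturbation of itself whose coefficients are controlled by the derivatives of `M`; by
Sobolev embedding these are uniformly small when the Sobolev norm of `M` is, so it suffices to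
treat the flat half-space and absorb the perturbation.

On the half-space the tangential derivatives of the velocity also vanish on the boundary. Testing
the system with second tangential derivatives bounds the tangential derivatives of the velocity by
the data and a small multiple of the tangential pressure gradient. The pressure is recovered from
its divergence equation tested with `q - q ∘ D`, where `D` dilates the normal variable: this
function vanishes on the boundary, and `q ∘ D` has a strictly smaller `L²` norm than `q`. Normal
derivatives are then read off the equations, and higher orders follow by induction.
-/

/-! ## Iterated derivatives and directional derivatives -/

section DirectionalDerivatives

variable {E F : Type*} [NormedAddCommGroup E] [NormedSpace ℝ E] [NormedAddCommGroup F]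
  [NormedSpace ℝ F] {s : Set E} {f : E → F} {x : E} {n : ℕ}

lemma contDiffOn_fderivWithin_apply_const (hs : UniqueDiffOn ℝ s)
    (hf : ContDiffOn ℝ (n + 1 : ℕ) f s) (v : E) :
    ContDiffOn ℝ n (fun y => fderivWithin ℝ f s y v) s :=
  (hf.fderivWithin hs (by push_cast; rfl)).clm_apply contDiffOn_const

lemma norm_iteratedFDerivWithin_fderivWithin_apply_le (hs : UniqueDiffOn ℝ s)
    (hf : ContDiffOn ℝ (n + 1 : ℕ) f s) (hx : x ∈ s) (v : E) :
    ‖iteratedFDerivWithin ℝ n (fun y => fderivWithin ℝ f s y v) s x‖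
      ≤ ‖v‖ * ‖iteratedFDerivWithin ℝ (n + 1) f s x‖ := by
  have hcomp := (ContinuousLinearMap.apply ℝ F v).norm_iteratedFDerivWithin_comp_left
    (hf.fderivWithin (m := n) hs (by push_cast; rfl) x hx) hs hx (n := n) le_rfl
  rw [norm_iteratedFDerivWithin_fderivWithin hs hx] at hcomp
  have happly : ‖ContinuousLinearMap.apply ℝ F v‖ ≤ ‖v‖ :=
    ContinuousLinearMap.opNorm_le_bound _ (norm_nonneg v) fun L => by
      simpa [mul_comm] using L.le_opNorm v
  exact hcomp.trans (by gcongr)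

lemma fderivWithin_fderivWithin_apply (hs : UniqueDiffOn ℝ s) (hf : ContDiffOn ℝ 2 f s)
    (hx : x ∈ s) (v w : E) :
    fderivWithin ℝ (fun y => fderivWithin ℝ f s y w) s x v
      = fderivWithin ℝ (fderivWithin ℝ f s) s x v w := by
  have hdiff : DifferentiableWithinAt ℝ (fderivWithin ℝ f s) s x :=
    (hf.fderivWithin (m := 1) hs (by norm_num)).differentiableOn (by norm_num) x hx
  rw [fderivWithin_clm_apply (hs x hx) hdiff (differentiableWithinAt_const w)]
  simp

lemma fderivWithin_fderivWithin_apply_comm (hs : UniqueDiffOn ℝ s) (hf : ContDiffOn ℝ 2 f s)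
    (hx : x ∈ s) (hx' : x ∈ closure (interior s)) (v w : E) :
    fderivWithin ℝ (fun y => fderivWithin ℝ f s y w) s x v
      = fderivWithin ℝ (fun y => fderivWithin ℝ f s y v) s x w := by
  rw [fderivWithin_fderivWithin_apply hs hf hx, fderivWithin_fderivWithin_apply hs hf hx]
  exact (hf x hx).isSymmSndFDerivWithinAt (by simp) hs hx' hx v w

end DirectionalDerivatives

section CoordinateDerivatives

variable {ι F : Type*} [Fintype ι] [NormedAddCommGroup F] [NormedSpace ℝ F]

lemma norm_proj_le (i : ι) : ‖(EuclideanSpace.proj i : EuclideanSpace ℝ ι →L[ℝ] ℝ)‖ ≤ 1 :=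
  ContinuousLinearMap.opNorm_le_bound _ zero_le_one fun x => by
    simpa using PiLp.norm_apply_le x i

variable [DecidableEq ι]

/-- The standard basis vector of `ℝ^ι`. -/
abbrev stdVec (i : ι) : EuclideanSpace ℝ ι := EuclideanSpace.single i 1

lemma sum_coord_smul_stdVec (x : EuclideanSpace ℝ ι) : ∑ i, x i • stdVec i = x := by
  simpa using (EuclideanSpace.basisFun ι ℝ).sum_repr x

lemma clm_eq_sum_proj_smulRight (L : EuclideanSpace ℝ ι →L[ℝ] F) :
    L = ∑ i, (EuclideanSpace.proj i).smulRight (L (stdVec i)) := by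
  ext x
  conv_lhs => rw [← sum_coord_smul_stdVec x, map_sum]
  simp

lemma norm_iteratedFDerivWithin_succ_le_sum {s : Set (EuclideanSpace ℝ ι)}
    {f : EuclideanSpace ℝ ι → F} {x : EuclideanSpace ℝ ι} {n : ℕ} (hs : UniqueDiffOn ℝ s)
    (hf : ContDiffOn ℝ (n + 1 : ℕ) f s) (hx : x ∈ s) :
    ‖iteratedFDerivWithin ℝ (n + 1) f s x‖
      ≤ ∑ i, ‖iteratedFDerivWithin ℝ n (fun y => fderivWithin ℝ f s y (stdVec i)) s x‖ := by
  let embed (i : ι) : F →L[ℝ] EuclideanSpace ℝ ι →L[ℝ] F :=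
    ContinuousLinearMap.smulRightL ℝ (EuclideanSpace ℝ ι) F (EuclideanSpace.proj i)
  have hembed (i : ι) : ‖embed i‖ ≤ 1 :=
    ContinuousLinearMap.opNorm_le_bound _ zero_le_one fun w => by
      refine (ContinuousLinearMap.norm_smulRight_apply _ _).trans_le ?_
      gcongr
      exact norm_proj_le i
  have hpartial (i : ι) := contDiffOn_fderivWithin_apply_const hs hf (stdVec i)
  have hsplit : fderivWithin ℝ f s
      = fun y => ∑ i, (embed i ∘ fun z => fderivWithin ℝ f s z (stdVec i)) y :=
    funext fun y => clm_eq_sum_proj_smulRight (fderivWithin ℝ f s y)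
  have hsum : iteratedFDerivWithin ℝ n (fderivWithin ℝ f s) s x
      = ∑ i, iteratedFDerivWithin ℝ n (embed i ∘ fun z => fderivWithin ℝ f s z (stdVec i)) s x := by
    conv_lhs => rw [hsplit]
    exact iteratedFDerivWithin_fun_sum_apply hs hx
      fun i _ => ((embed i).contDiff.comp_contDiffOn (hpartial i)) x hx
  rw [← norm_iteratedFDerivWithin_fderivWithin hs hx, hsum]
  refine (norm_sum_le _ _).trans (Finset.sum_le_sum fun i _ => ?_)
  have hcomp := (embed i).norm_iteratedFDerivWithin_comp_left (hpartial i x hx) hs hx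
    (n := n) le_rfl
  exact hcomp.trans (mul_le_of_le_one_left (norm_nonneg _) (hembed i))

end CoordinateDerivatives

/-! ## Exchanging derivatives of Lipschitz functions under the integral -/

section Translation

variable {E : Type*} [NormedAddCommGroup E] [MeasurableSpace E] [BorelSpace E] {μ : Measure E}
  [μ.IsAddHaarMeasure]

lemma integral_difference_mul_difference {a ψ : E → ℝ} (ha : Continuous a) (hψ : Continuous ψ)
    (hc : HasCompactSupport ψ) (v w : E) :
    ∫ x, (a (x + v) - a x) * (ψ (x + w) - ψ x) ∂μ
      = ∫ x, (a (x - w) - a x) * (ψ (x - v) - ψ x) ∂μ := by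
  let pairing (p q : E) : ℝ := ∫ x, a (x + p) * ψ (x + q) ∂μ
  have hInt (p q : E) : Integrable (fun x => a (x + p) * ψ (x + q)) μ :=
    Continuous.integrable_of_hasCompactSupport (by fun_prop)
      (hc.comp_homeomorph (Homeomorph.addRight q)).mul_left
  have hshift (p q r : E) : pairing p q = pairing (p + r) (q + r) := by
    refine (integral_add_right_eq_self (fun x => a (x + p) * ψ (x + q)) r).symm.trans ?_
    simp only [pairing, add_assoc, add_comm r]
  have hexpand (p q : E) : ∫ x, (a (x + p) - a x) * (ψ (x + q) - ψ x) ∂μ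
      = pairing p q - pairing p 0 - (pairing 0 q - pairing 0 0) := by
    simp only [pairing, ← integral_sub (hInt _ _) (hInt _ _)]
    refine Eq.trans ?_ (integral_sub ((hInt _ _).sub (hInt _ _)) ((hInt _ _).sub (hInt _ _)))
    simp only [add_zero, sub_mul, mul_sub]
    congr! 2
    ring
  simp only [sub_eq_add_neg _ w, sub_eq_add_neg _ v]
  rw [hexpand v w, hexpand (-w) (-v), hshift (-w) (-v) (w + v), hshift (-w) 0 w, hshift 0 (-v) v]
  simp only [neg_add_cancel, zero_add, neg_add_cancel_left, neg_add_cancel_comm_assoc]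
  ring

end Translation

section Lipschitz

variable {E : Type*} [NormedAddCommGroup E] [NormedSpace ℝ E] {a ψ : E → ℝ} {A B : NNReal}

lemma norm_slope_le_of_lipschitzWith (ha : LipschitzWith A a) (x v : E) (s : ℝ) :
    ‖s⁻¹ * (a (x + s • v) - a x)‖ ≤ A * ‖v‖ := by
  rcases eq_or_ne s 0 with rfl | hs
  · simpa using by positivity
  have hdist : ‖a (x + s • v) - a x‖ ≤ A * (‖s‖ * ‖v‖) := by
    simpa [norm_smul] using ha.norm_sub_le (x + s • v) x
  rw [norm_mul, norm_inv, inv_mul_le_iff₀ (norm_pos_iff.2 hs)]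
  linarith

lemma slope_eq_zero_of_notMem_cthickening {x w : E} {s : ℝ} (hs : |s| ≤ 1)
    (hx : x ∉ Metric.cthickening ‖w‖ (tsupport ψ)) : s⁻¹ * (ψ (x + s • w) - ψ x) = 0 := by
  have hzero (y : E) (hy : dist x y ≤ ‖w‖) : ψ y = 0 := by
    by_contra hne
    exact hx (Metric.mem_cthickening_of_dist_le x y _ _ (subset_tsupport _ hne) hy)
  rw [hzero x (by simp), hzero (x + s • w), sub_zero, mul_zero]
  simpa [norm_smul] using mul_le_of_le_one_left (norm_nonneg w) hs

variable [MeasurableSpace E] [BorelSpace E] [FiniteDimensional ℝ E] {μ : Measure E}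
  [μ.IsAddHaarMeasure]

lemma tendsto_integral_slope_mul_slope (ha : LipschitzWith A a) (hψ : LipschitzWith B ψ)
    (hc : HasCompactSupport ψ) (v w : E) :
    Tendsto (fun s : ℝ =>
        ∫ x, (s⁻¹ * (a (x + s • v) - a x)) * (s⁻¹ * (ψ (x + s • w) - ψ x)) ∂μ)
      (nhdsWithin 0 {0}ᶜ) (nhds (∫ x, lineDeriv ℝ a x v * lineDeriv ℝ ψ x w ∂μ)) := by
  set S := Metric.cthickening ‖w‖ (tsupport ψ)
  have hS : IsCompact S := IsCompact.cthickening hc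
  refine tendsto_integral_filter_of_dominated_convergence
    (S.indicator fun _ => A * ‖v‖ * (B * ‖w‖)) ?_ ?_ ?_ ?_
  · refine Eventually.of_forall fun s => Continuous.aestronglyMeasurable ?_
    have := ha.continuous
    have := hψ.continuous
    fun_prop
  · have hsmall : ∀ᶠ s : ℝ in nhdsWithin 0 {0}ᶜ, |s| ≤ 1 := by
      filter_upwards [nhdsWithin_le_nhds (Metric.ball_mem_nhds (0 : ℝ) one_pos)] with s hs
      simpa using le_of_lt (mem_ball_zero_iff.1 hs)
    filter_upwards [hsmall] with s hs
    refine Eventually.of_forall fun x => ?_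
    by_cases hx : x ∈ S
    · rw [indicator_of_mem hx, norm_mul]
      gcongr <;> exact norm_slope_le_of_lipschitzWith ‹_› _ _ _
    · rw [indicator_of_notMem hx, slope_eq_zero_of_notMem_cthickening hs hx, mul_zero, norm_zero]
  · exact (integrable_indicator_iff hS.measurableSet).2 (integrableOn_const hS.measure_lt_top.ne)
  · filter_upwards [ha.ae_lineDifferentiableAt (μ := μ) v, hψ.ae_lineDifferentiableAt (μ := μ) w]
      with x hax hψx
    exact hax.hasLineDerivAt.tendsto_slope_zero.mul hψx.hasLineDerivAt.tendsto_slope_zero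

lemma integral_lineDeriv_mul_lineDeriv_comm (ha : LipschitzWith A a) (hψ : LipschitzWith B ψ)
    (hc : HasCompactSupport ψ) (v w : E) :
    ∫ x, lineDeriv ℝ a x v * lineDeriv ℝ ψ x w ∂μ
      = ∫ x, lineDeriv ℝ a x w * lineDeriv ℝ ψ x v ∂μ := by
  have hneg : Tendsto (fun s : ℝ => -s) (nhdsWithin 0 {0}ᶜ) (nhdsWithin 0 {0}ᶜ) :=
    (continuous_neg.tendsto' 0 0 neg_zero).inf
      (tendsto_principal_principal.2 fun _ hs => neg_ne_zero.2 hs)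
  refine tendsto_nhds_unique (tendsto_integral_slope_mul_slope ha hψ hc v w)
    (((tendsto_integral_slope_mul_slope ha hψ hc w v).comp hneg).congr fun s => ?_)
  have hfactor (r : ℝ) (b c : E → ℝ) :
      ∫ x, r * b x * (r * c x) ∂μ = r ^ 2 * ∫ x, b x * c x ∂μ := by
    rw [← integral_const_mul]
    congr! 2
    ring
  rw [Function.comp_apply, hfactor, hfactor, integral_difference_mul_difference ha.continuous
    hψ.continuous hc (s • v) (s • w)]
  simp [sub_eq_add_neg]

end Lipschitz

/-! ## Cut-off functions -/

section Cutoff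

variable {E : Type*} [NormedAddCommGroup E]

lemma exists_lipschitzOnWith_of_hasCompactSupport [NormedSpace ℝ E] {f : E → ℝ} {s : Set E}
    (hs : Convex ℝ s) (hu : UniqueDiffOn ℝ s) (hcl : IsClosed s) (hf : ContDiffOn ℝ 1 f s)
    (hc : HasCompactSupport f) : ∃ C : NNReal, LipschitzOnWith C f s := by
  obtain ⟨B, hB⟩ := (hc.inter_left hcl).bddAbove_image
    ((hf.continuousOn_fderivWithin hu le_rfl).norm.mono inter_subset_left)
  refine ⟨(max B 0).toNNReal, Convex.lipschitzOnWith_of_nnnorm_fderivWithin_le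
    (hf.differentiableOn one_ne_zero) (fun x hx => ?_) hs⟩
  rw [← NNReal.coe_le_coe, coe_nnnorm, Real.coe_toNNReal _ (le_max_right _ _)]
  by_cases hxs : x ∈ tsupport f
  · exact (hB (mem_image_of_mem _ ⟨hx, hxs⟩)).trans (le_max_left _ _)
  · have hzero : f =ᶠ[nhdsWithin x s] fun _ => 0 :=
      nhdsWithin_le_nhds (notMem_tsupport_iff_eventuallyEq.1 hxs)
    rw [hzero.fderivWithin_eq (image_eq_zero_of_notMem_tsupport hxs)]
    simp

variable [InnerProductSpace ℝ E]

/-- A fixed bump function, equal to `1` on the unit ball and supported in the ball of radius `2`. -/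
def unitBump (E : Type*) [NormedAddCommGroup E] : ContDiffBump (0 : E) :=
  ⟨1, 2, one_pos, one_lt_two⟩

/-- Cut-off functions converging to `1` whose gradients converge uniformly to `0`. -/
def cutoff (n : ℕ) (x : E) : ℝ := unitBump E (((n : ℝ) + 1)⁻¹ • x)

lemma tendsto_inv_nat_add_one : Tendsto (fun n : ℕ => ((n : ℝ) + 1)⁻¹) atTop (nhds 0) := by
  simpa using tendsto_one_div_add_atTop_nhds_zero_nat (𝕜 := ℝ)

lemma abs_cutoff_le_one (n : ℕ) (x : E) : |cutoff n x| ≤ 1 := by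
  rw [cutoff, abs_of_nonneg (unitBump E).nonneg]
  exact (unitBump E).le_one

lemma tendsto_cutoff (x : E) : Tendsto (fun n => cutoff n x) atTop (nhds 1) := by
  have hscale : Tendsto (fun n : ℕ => ((n : ℝ) + 1)⁻¹ • x) atTop (nhds 0) := by
    simpa using tendsto_inv_nat_add_one.smul_const x
  have hone : unitBump E 0 = 1 := (unitBump E).one_of_mem_closedBall (by simp [unitBump])
  exact hone ▸ ((unitBump E).continuous.tendsto 0).comp hscale

variable [FiniteDimensional ℝ E]

lemma contDiff_cutoff (n : ℕ) : ContDiff ℝ 1 (cutoff n : E → ℝ) :=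
  (unitBump E).contDiff.comp (contDiff_const_smul (((n : ℝ) + 1)⁻¹))

lemma hasCompactSupport_cutoff (n : ℕ) : HasCompactSupport (cutoff n : E → ℝ) :=
  (unitBump E).hasCompactSupport.comp_smul (by positivity)

variable (E) in
lemma exists_norm_fderiv_cutoff_le : ∃ B : ℝ, 0 ≤ B ∧
    ∀ (n : ℕ) (x : E), ‖fderiv ℝ (cutoff n) x‖ ≤ ((n : ℝ) + 1)⁻¹ * B := by
  obtain ⟨B, hB⟩ := ((unitBump E).hasCompactSupport.fderiv (𝕜 := ℝ)).exists_bound_of_continuous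
    (((unitBump E).contDiff (n := 1)).continuous_fderiv one_ne_zero)
  refine ⟨B, (norm_nonneg _).trans (hB 0), fun n x => ?_⟩
  have hscale : fderiv ℝ (cutoff n) x
      = ((n : ℝ) + 1)⁻¹ • fderiv ℝ (unitBump E) (((n : ℝ) + 1)⁻¹ • x) :=
    fderiv_comp_smul _
  rw [hscale, norm_smul, Real.norm_of_nonneg (by positivity)]
  gcongr
  exact hB _

end Cutoff

/-! ## Sobolev functions on the closed half-space -/

section HalfSpace

/-- The Euclidean space `ℝ^(d+1)`; coordinate `0` is normal to the boundary of the half-space and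
the coordinates `τ.succ`, `τ : Fin d`, are tangential. -/
abbrev Space (d : ℕ) : Type := EuclideanSpace ℝ (Fin (d + 1))

/-- The closed half-space `{x₀ ≥ 0}`. It also serves as the domain of integration, its boundary
being null. -/
def halfSpace (d : ℕ) : Set (Space d) := {x | 0 ≤ x 0}

variable {d : ℕ} {f g : Space d → ℝ} {x : Space d} {n : ℕ}

/-- The partial derivative on the half-space, one-sided at the boundary. -/
def hderiv (i : Fin (d + 1)) (f : Space d → ℝ) (x : Space d) : ℝ :=
  fderivWithin ℝ f (halfSpace d) x (stdVec i)

/-- The pointwise norm of the `n`-th derivative on the half-space. -/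
def jetNorm (n : ℕ) (f : Space d → ℝ) (x : Space d) : ℝ :=
  ‖iteratedFDerivWithin ℝ n f (halfSpace d) x‖

/-- `f` is `C^n` up to the boundary of the half-space and belongs to the Sobolev space `H^n`. -/
def SobolevReg (n : ℕ) (f : Space d → ℝ) : Prop :=
  ContDiffOn ℝ n f (halfSpace d) ∧
    ∀ j ≤ n, IntegrableOn (fun x => jetNorm j f x ^ 2) (halfSpace d)

/-- The squared homogeneous Sobolev seminorm of order `n` on the half-space. -/
def energy (n : ℕ) (f : Space d → ℝ) : ℝ := ∫ x in halfSpace d, jetNorm n f x ^ 2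

local notation:max "∂[" i "]" => hderiv i

lemma mem_halfSpace : x ∈ halfSpace d ↔ 0 ≤ x 0 := Iff.rfl

lemma isClosed_halfSpace : IsClosed (halfSpace d) := isClosed_le continuous_const (by fun_prop)

lemma measurableSet_halfSpace : MeasurableSet (halfSpace d) := isClosed_halfSpace.measurableSet

lemma isOpen_normal_pos : IsOpen {x : Space d | 0 < x 0} := isOpen_lt continuous_const (by fun_prop)

lemma halfSpace_mem_nhds (hx : 0 < x 0) : halfSpace d ∈ nhds x :=
  mem_of_superset (isOpen_normal_pos.mem_nhds hx) fun _ hy => le_of_lt (mem_ofPred.1 hy)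

lemma convex_halfSpace : Convex ℝ (halfSpace d) := by
  intro x hx y hy a b ha hb _
  rw [mem_halfSpace] at *
  simp only [PiLp.add_apply, PiLp.smul_apply, smul_eq_mul]
  positivity

lemma nonempty_interior_halfSpace : (interior (halfSpace d)).Nonempty :=
  ⟨stdVec 0, mem_interior_iff_mem_nhds.2 (halfSpace_mem_nhds (by simp))⟩

lemma uniqueDiffOn_halfSpace : UniqueDiffOn ℝ (halfSpace d) :=
  uniqueDiffOn_convex convex_halfSpace nonempty_interior_halfSpace

lemma mem_closure_interior_halfSpace (hx : x ∈ halfSpace d) :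
    x ∈ closure (interior (halfSpace d)) := by
  rw [convex_halfSpace.closure_interior_eq_closure_of_nonempty_interior
    nonempty_interior_halfSpace]
  exact subset_closure hx

lemma jetNorm_nonneg (n : ℕ) (f : Space d → ℝ) (x : Space d) : 0 ≤ jetNorm n f x := norm_nonneg _

lemma jetNorm_zero (f : Space d → ℝ) (x : Space d) : jetNorm 0 f x = |f x| := by simp [jetNorm]

lemma jetNorm_congr (h : EqOn f g (halfSpace d)) (hx : x ∈ halfSpace d) :
    jetNorm n f x = jetNorm n g x := by
  rw [jetNorm, jetNorm, iteratedFDerivWithin_congr h hx]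

lemma hderiv_congr {i : Fin (d + 1)} (h : EqOn f g (halfSpace d)) :
    EqOn (∂[i] f) (∂[i] g) (halfSpace d) := fun x hx => by
  rw [hderiv, hderiv, fderivWithin_congr h (h hx)]

lemma contDiffOn_hderiv (i : Fin (d + 1)) (hf : ContDiffOn ℝ (n + 1 : ℕ) f (halfSpace d)) :
    ContDiffOn ℝ n (∂[i] f) (halfSpace d) :=
  contDiffOn_fderivWithin_apply_const uniqueDiffOn_halfSpace hf _

lemma jetNorm_hderiv_le (i : Fin (d + 1)) (hf : ContDiffOn ℝ (n + 1 : ℕ) f (halfSpace d))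
    (hx : x ∈ halfSpace d) : jetNorm n (∂[i] f) x ≤ jetNorm (n + 1) f x := by
  have h := norm_iteratedFDerivWithin_fderivWithin_apply_le uniqueDiffOn_halfSpace hf hx
    (stdVec i)
  rwa [PiLp.norm_single, norm_one, one_mul] at h

lemma jetNorm_succ_le (hf : ContDiffOn ℝ (n + 1 : ℕ) f (halfSpace d)) (hx : x ∈ halfSpace d) :
    jetNorm (n + 1) f x ≤ ∑ i, jetNorm n (∂[i] f) x :=
  norm_iteratedFDerivWithin_succ_le_sum uniqueDiffOn_halfSpace hf hx

lemma hderiv_comm (hf : ContDiffOn ℝ 2 f (halfSpace d)) (i j : Fin (d + 1)) :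
    EqOn (∂[i] (∂[j] f)) (∂[j] (∂[i] f)) (halfSpace d) := fun _ hx =>
  fderivWithin_fderivWithin_apply_comm uniqueDiffOn_halfSpace hf hx
    (mem_closure_interior_halfSpace hx) _ _

lemma hderiv_add {i : Fin (d + 1)} (hf : ContDiffOn ℝ 1 f (halfSpace d))
    (hg : ContDiffOn ℝ 1 g (halfSpace d)) :
    EqOn (∂[i] fun y => f y + g y) (fun y => ∂[i] f y + ∂[i] g y) (halfSpace d) := fun x hx => by
  rw [hderiv, fderivWithin_fun_add (uniqueDiffOn_halfSpace x hx)
    (hf.differentiableOn one_ne_zero x hx) (hg.differentiableOn one_ne_zero x hx)]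
  rfl

lemma hderiv_sub {i : Fin (d + 1)} (hf : ContDiffOn ℝ 1 f (halfSpace d))
    (hg : ContDiffOn ℝ 1 g (halfSpace d)) :
    EqOn (∂[i] fun y => f y - g y) (fun y => ∂[i] f y - ∂[i] g y) (halfSpace d) := fun x hx => by
  rw [hderiv, fderivWithin_fun_sub (uniqueDiffOn_halfSpace x hx)
    (hf.differentiableOn one_ne_zero x hx) (hg.differentiableOn one_ne_zero x hx)]
  rfl

lemma hderiv_const_mul {i : Fin (d + 1)} (c : ℝ) (hf : ContDiffOn ℝ 1 f (halfSpace d)) :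
    EqOn (∂[i] fun y => c * f y) (fun y => c * ∂[i] f y) (halfSpace d) := fun x hx => by
  rw [hderiv, fderivWithin_const_mul (uniqueDiffOn_halfSpace x hx)
    (hf.differentiableOn one_ne_zero x hx)]
  rfl

lemma hderiv_mul {i : Fin (d + 1)} (hf : ContDiffOn ℝ 1 f (halfSpace d))
    (hg : ContDiffOn ℝ 1 g (halfSpace d)) :
    EqOn (∂[i] fun y => f y * g y) (fun y => f y * ∂[i] g y + g y * ∂[i] f y) (halfSpace d) :=
  fun x hx => by
    rw [hderiv, fderivWithin_fun_mul (uniqueDiffOn_halfSpace x hx)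
      (hf.differentiableOn one_ne_zero x hx) (hg.differentiableOn one_ne_zero x hx)]
    rfl

lemma hderiv_sum {ι : Type*} [Fintype ι] {f : ι → Space d → ℝ} {i : Fin (d + 1)}
    (hf : ∀ l, ContDiffOn ℝ 1 (f l) (halfSpace d)) :
    EqOn (∂[i] fun y => ∑ l, f l y) (fun y => ∑ l, ∂[i] (f l) y) (halfSpace d) := fun x hx => by
  rw [hderiv, fderivWithin_fun_sum (uniqueDiffOn_halfSpace x hx)
    fun l _ => (hf l).differentiableOn one_ne_zero x hx, sum_apply]
  rfl

lemma jetNorm_sum_le {ι : Type*} [Fintype ι] {f : ι → Space d → ℝ}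
    (hf : ∀ i, ContDiffOn ℝ n (f i) (halfSpace d)) (hx : x ∈ halfSpace d) :
    jetNorm n (fun y => ∑ i, f i y) x ≤ ∑ i, jetNorm n (f i) x := by
  rw [jetNorm, iteratedFDerivWithin_fun_sum_apply uniqueDiffOn_halfSpace hx fun i _ => hf i x hx]
  exact norm_sum_le _ _

lemma jetNorm_const_mul (c : ℝ) (hf : ContDiffOn ℝ n f (halfSpace d)) (hx : x ∈ halfSpace d) :
    jetNorm n (fun y => c * f y) x = |c| * jetNorm n f x := by
  rw [jetNorm, jetNorm, ← Real.norm_eq_abs, ← norm_smul,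
    ← iteratedFDerivWithin_const_smul_apply (hf x hx) uniqueDiffOn_halfSpace hx]
  rfl

lemma continuousOn_jetNorm {j : ℕ} (hf : ContDiffOn ℝ n f (halfSpace d)) (hj : j ≤ n) :
    ContinuousOn (jetNorm j f) (halfSpace d) :=
  (hf.continuousOn_iteratedFDerivWithin (by exact_mod_cast hj) uniqueDiffOn_halfSpace).norm

lemma integrableOn_jetNorm_sq_of_le {G : Space d → ℝ} {j : ℕ}
    (hf : ContDiffOn ℝ n f (halfSpace d)) (hj : j ≤ n) (hG : IntegrableOn G (halfSpace d))
    (h : ∀ x ∈ halfSpace d, jetNorm j f x ^ 2 ≤ G x) :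
    IntegrableOn (fun x => jetNorm j f x ^ 2) (halfSpace d) := by
  refine Integrable.mono' hG
    (((continuousOn_jetNorm hf hj).pow 2).aestronglyMeasurable measurableSet_halfSpace) ?_
  filter_upwards [ae_restrict_mem measurableSet_halfSpace] with x hx
  rw [Real.norm_of_nonneg (sq_nonneg _)]
  exact h x hx

lemma energy_nonneg (n : ℕ) (f : Space d → ℝ) : 0 ≤ energy n f :=
  integral_nonneg fun _ => sq_nonneg _

lemma energy_congr (h : EqOn f g (halfSpace d)) : energy n f = energy n g :=
  setIntegral_congr_fun measurableSet_halfSpace fun _ hx => by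
    simp only [jetNorm_congr h hx]

lemma energy_le_integral {G : Space d → ℝ} (hG : IntegrableOn G (halfSpace d))
    (h : ∀ x ∈ halfSpace d, jetNorm n f x ^ 2 ≤ G x) : energy n f ≤ ∫ x in halfSpace d, G x :=
  integral_mono_of_nonneg (Eventually.of_forall fun _ => sq_nonneg _) hG
    ((ae_restrict_mem measurableSet_halfSpace).mono h)

lemma SobolevReg.contDiffOn {j : ℕ} (hf : SobolevReg n f) (hj : j ≤ n) :
    ContDiffOn ℝ j f (halfSpace d) :=
  hf.1.of_le (by exact_mod_cast hj)

lemma SobolevReg.contDiffOn_one (hf : SobolevReg (n + 1) f) : ContDiffOn ℝ 1 f (halfSpace d) := by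
  exact_mod_cast hf.contDiffOn (j := 1) (by lia)

lemma SobolevReg.contDiffOn_two (hf : SobolevReg (n + 2) f) : ContDiffOn ℝ 2 f (halfSpace d) := by
  exact_mod_cast hf.contDiffOn (j := 2) (by lia)

lemma SobolevReg.mono {m : ℕ} (hf : SobolevReg n f) (hm : m ≤ n) : SobolevReg m f :=
  ⟨hf.contDiffOn hm, fun j hj => hf.2 j (hj.trans hm)⟩

lemma SobolevReg.hderiv (hf : SobolevReg (n + 1) f) (i : Fin (d + 1)) :
    SobolevReg n (∂[i] f) := by
  refine ⟨contDiffOn_hderiv i hf.1, fun j hj => ?_⟩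
  refine integrableOn_jetNorm_sq_of_le (contDiffOn_hderiv i hf.1) hj (hf.2 (j + 1) (by lia))
    fun x hx => ?_
  gcongr
  · exact jetNorm_nonneg _ _ _
  · exact jetNorm_hderiv_le i (hf.contDiffOn (by lia)) hx

lemma SobolevReg.const_mul (c : ℝ) (hf : SobolevReg n f) : SobolevReg n fun x => c * f x := by
  have hcont : ContDiffOn ℝ n (fun x => c * f x) (halfSpace d) := contDiffOn_const.mul hf.1
  refine ⟨hcont, fun j hj => integrableOn_jetNorm_sq_of_le hcont hj
    ((hf.2 j hj).const_mul (c ^ 2)) fun x hx => ?_⟩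
  rw [jetNorm_const_mul c (hf.contDiffOn hj) hx, mul_pow, sq_abs]

section Sums

variable {ι : Type*} [Fintype ι] {F : ι → Space d → ℝ}

lemma jetNorm_sum_sq_le (hF : ∀ i, ContDiffOn ℝ n (F i) (halfSpace d)) (hx : x ∈ halfSpace d) :
    jetNorm n (fun y => ∑ i, F i y) x ^ 2
      ≤ Fintype.card ι * ∑ i, jetNorm n (F i) x ^ 2 :=
  (pow_le_pow_left₀ (jetNorm_nonneg _ _ _) (jetNorm_sum_le hF hx) 2).trans
    (by simpa using sq_sum_le_card_mul_sum_sq (s := Finset.univ) (f := fun i => jetNorm n (F i) x))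

lemma integrableOn_card_mul_sum_jetNorm_sq
    (hF : ∀ i, IntegrableOn (fun x => jetNorm n (F i) x ^ 2) (halfSpace d)) :
    IntegrableOn (fun x => (Fintype.card ι : ℝ) * ∑ i, jetNorm n (F i) x ^ 2) (halfSpace d) :=
  (integrable_finsetSum _ fun i _ => hF i).const_mul _

lemma integral_card_mul_sum_jetNorm_sq
    (hF : ∀ i, IntegrableOn (fun x => jetNorm n (F i) x ^ 2) (halfSpace d)) :
    ∫ x in halfSpace d, (Fintype.card ι : ℝ) * ∑ i, jetNorm n (F i) x ^ 2
      = Fintype.card ι * ∑ i, energy n (F i) := by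
  rw [integral_const_mul, integral_finsetSum _ fun i _ => hF i]
  rfl

lemma SobolevReg.sum (hF : ∀ i, SobolevReg n (F i)) : SobolevReg n fun x => ∑ i, F i x := by
  have hcont : ContDiffOn ℝ n (fun x => ∑ i, F i x) (halfSpace d) :=
    ContDiffOn.sum fun i _ => (hF i).1
  exact ⟨hcont, fun j hj => integrableOn_jetNorm_sq_of_le hcont hj
    (integrableOn_card_mul_sum_jetNorm_sq fun i => (hF i).2 j hj)
    fun x hx => jetNorm_sum_sq_le (fun i => (hF i).contDiffOn hj) hx⟩

lemma energy_sum_le (hF : ∀ i, SobolevReg n (F i)) :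
    energy n (fun x => ∑ i, F i x) ≤ Fintype.card ι * ∑ i, energy n (F i) := by
  rw [← integral_card_mul_sum_jetNorm_sq fun i => (hF i).2 n le_rfl]
  exact energy_le_integral (integrableOn_card_mul_sum_jetNorm_sq fun i => (hF i).2 n le_rfl)
    fun x hx => jetNorm_sum_sq_le (fun i => (hF i).1) hx

lemma energy_succ_le (hf : SobolevReg (n + 1) f) :
    energy (n + 1) f ≤ (d + 1) * ∑ i, energy n (∂[i] f) := by
  have hInt (i : Fin (d + 1)) := (hf.hderiv i).2 n le_rfl
  refine (energy_le_integral (integrableOn_card_mul_sum_jetNorm_sq hInt) fun x hx => ?_).trans_eq ?_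
  · refine (pow_le_pow_left₀ (jetNorm_nonneg _ _ _) (jetNorm_succ_le hf.1 hx) 2).trans ?_
    simpa using sq_sum_le_card_mul_sum_sq (s := Finset.univ) (f := fun i => jetNorm n (∂[i] f) x)
  · rw [integral_card_mul_sum_jetNorm_sq hInt, Fintype.card_fin]
    push_cast
    rfl

end Sums

lemma SobolevReg.add (hf : SobolevReg n f) (hg : SobolevReg n g) :
    SobolevReg n fun x => f x + g x := by
  have hfg (i : Fin 2) : SobolevReg n (![f, g] i) := by fin_cases i <;> assumption
  simpa using SobolevReg.sum hfg

lemma SobolevReg.sub (hf : SobolevReg n f) (hg : SobolevReg n g) :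
    SobolevReg n fun x => f x - g x := by
  simpa [sub_eq_add_neg] using hf.add (hg.const_mul (-1))

lemma energy_add_le (hf : SobolevReg n f) (hg : SobolevReg n g) :
    energy n (fun x => f x + g x) ≤ 2 * (energy n f + energy n g) := by
  have hfg (i : Fin 2) : SobolevReg n (![f, g] i) := by fin_cases i <;> assumption
  simpa using energy_sum_le hfg

lemma energy_const_mul (c : ℝ) (hf : SobolevReg n f) :
    energy n (fun x => c * f x) = c ^ 2 * energy n f := by
  rw [energy, energy, ← integral_const_mul]
  refine setIntegral_congr_fun measurableSet_halfSpace fun x hx => ?_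
  simp only [jetNorm_const_mul c hf.1 hx, mul_pow, sq_abs]

lemma energy_sub_le (hf : SobolevReg n f) (hg : SobolevReg n g) :
    energy n (fun x => f x - g x) ≤ 2 * (energy n f + energy n g) := by
  have h := energy_add_le hf (hg.const_mul (-1))
  rw [energy_const_mul _ hg] at h
  simpa [sub_eq_add_neg] using h

lemma energy_hderiv_le (i : Fin (d + 1)) (hf : SobolevReg (n + 1) f) :
    energy n (∂[i] f) ≤ energy (n + 1) f :=
  energy_le_integral (hf.2 (n + 1) le_rfl) fun _ hx =>
    pow_le_pow_left₀ (jetNorm_nonneg _ _ _) (jetNorm_hderiv_le i hf.1 hx) 2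

/-! ## Exchanging derivatives on the half-space -/

/-- The nearest point of the half-space. -/
def normalClamp (x : Space d) : Space d := x + (max (x 0) 0 - x 0) • stdVec 0

lemma normalClamp_zero (x : Space d) : normalClamp x 0 = max (x 0) 0 := by simp [normalClamp]

lemma normalClamp_mem (x : Space d) : normalClamp x ∈ halfSpace d := by
  rw [mem_halfSpace, normalClamp_zero]
  exact le_max_right _ _

lemma normalClamp_of_mem (hx : x ∈ halfSpace d) : normalClamp x = x := by
  simp [normalClamp, max_eq_left (mem_halfSpace.1 hx)]

lemma lipschitzWith_normalClamp : LipschitzWith 3 (normalClamp (d := d)) := by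
  refine LipschitzWith.of_dist_le_mul fun x y => ?_
  have hcoord : |x 0 - y 0| ≤ ‖x - y‖ := by simpa using PiLp.norm_apply_le (x - y) 0
  have hmax : |max (x 0) 0 - max (y 0) 0| ≤ |x 0 - y 0| := abs_max_sub_max_le_abs _ _ _
  have hdiff : normalClamp x - normalClamp y
      = (x - y) + ((max (x 0) 0 - max (y 0) 0) - (x 0 - y 0)) • stdVec 0 := by
    simp only [normalClamp]
    module
  rw [dist_eq_norm, dist_eq_norm, hdiff]
  refine (norm_add_le _ _).trans ?_
  rw [norm_smul, PiLp.norm_single, norm_one, mul_one]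
  have := abs_sub (max (x 0) 0 - max (y 0) 0) (x 0 - y 0)
  simp only [Real.norm_eq_abs, NNReal.coe_ofNat]
  linarith

lemma hderiv_eq_fderiv {i : Fin (d + 1)} (hx : 0 < x 0) :
    ∂[i] f x = fderiv ℝ f x (stdVec i) := by
  rw [hderiv, fderivWithin_of_mem_nhds (halfSpace_mem_nhds hx)]

lemma lineDeriv_comp_normalClamp (hf : ContDiffOn ℝ 1 f (halfSpace d)) (hx : 0 < x 0)
    (i : Fin (d + 1)) : lineDeriv ℝ (f ∘ normalClamp) x (stdVec i) = ∂[i] f x := by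
  have hnear : f ∘ normalClamp =ᶠ[nhds x] f := by
    filter_upwards [halfSpace_mem_nhds hx] with y hy
    rw [Function.comp_apply, normalClamp_of_mem hy]
  have hdiff : DifferentiableAt ℝ f x :=
    (hf.differentiableOn one_ne_zero x (le_of_lt hx)).differentiableAt (halfSpace_mem_nhds hx)
  rw [hnear.lineDeriv_eq, hdiff.lineDeriv_eq_fderiv, hderiv_eq_fderiv hx]

lemma ae_normal_ne_zero : ∀ᵐ x : Space d, x 0 ≠ 0 := by
  let ker := LinearMap.ker (EuclideanSpace.proj 0 : Space d →L[ℝ] ℝ).toLinearMap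
  have hker : ker ≠ ⊤ := fun h => by
    have : stdVec 0 ∈ ker := h ▸ Submodule.mem_top
    simp [ker] at this
  refine measure_mono_null (fun x hx => ?_) (Measure.addHaar_submodule volume ker hker)
  simpa [ker] using hx

lemma integral_lineDeriv_comp_normalClamp {a ψ : Space d → ℝ}
    (ha : ContDiffOn ℝ 1 a (halfSpace d)) (hψ : ContDiffOn ℝ 1 ψ (halfSpace d))
    (h0 : ∀ x : Space d, x 0 = 0 → ψ x = 0) (i j : Fin (d + 1)) :
    ∫ x, lineDeriv ℝ (a ∘ normalClamp) x (stdVec i) * lineDeriv ℝ (ψ ∘ normalClamp) x (stdVec j)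
      = ∫ x in halfSpace d, ∂[i] a x * ∂[j] ψ x := by
  rw [← setIntegral_eq_integral_of_forall_compl_eq_zero (s := halfSpace d)]
  · refine setIntegral_congr_ae measurableSet_halfSpace ?_
    filter_upwards [ae_normal_ne_zero] with x hne hx
    have hpos : 0 < x 0 := lt_of_le_of_ne (mem_halfSpace.1 hx) hne.symm
    rw [lineDeriv_comp_normalClamp ha hpos, lineDeriv_comp_normalClamp hψ hpos]
  · intro x hx
    have hneg : x 0 < 0 := not_le.1 hx
    have hzero : ψ ∘ normalClamp =ᶠ[nhds x] fun _ => 0 := by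
      filter_upwards [(isOpen_lt (by fun_prop : Continuous fun y : Space d => y 0)
        continuous_const).mem_nhds hneg] with y hy
      exact h0 _ (by rw [normalClamp_zero, max_eq_right (le_of_lt (mem_ofPred.1 hy))])
    rw [hzero.lineDeriv_eq]
    simp [lineDeriv]

lemma integral_hderiv_mul_hderiv_comm_of_hasCompactSupport {a ψ : Space d → ℝ}
    (ha : ContDiffOn ℝ 1 a (halfSpace d)) (hac : HasCompactSupport a)
    (hψ : ContDiffOn ℝ 1 ψ (halfSpace d)) (hψc : HasCompactSupport ψ)
    (h0 : ∀ x : Space d, x 0 = 0 → ψ x = 0) (i j : Fin (d + 1)) :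
    ∫ x in halfSpace d, ∂[i] a x * ∂[j] ψ x = ∫ x in halfSpace d, ∂[j] a x * ∂[i] ψ x := by
  have hlip {f : Space d → ℝ} (hf : ContDiffOn ℝ 1 f (halfSpace d)) (hc : HasCompactSupport f) :
      ∃ C, LipschitzWith C (f ∘ normalClamp) := by
    obtain ⟨C, hC⟩ := exists_lipschitzOnWith_of_hasCompactSupport convex_halfSpace
      uniqueDiffOn_halfSpace isClosed_halfSpace hf hc
    exact ⟨C * 3, lipschitzOnWith_univ.1 (hC.comp lipschitzWith_normalClamp.lipschitzOnWith
      fun x _ => normalClamp_mem x)⟩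
  obtain ⟨A, hA⟩ := hlip ha hac
  obtain ⟨B, hB⟩ := hlip hψ hψc
  have hsupp : HasCompactSupport (ψ ∘ normalClamp) := by
    refine hψc.mono fun x hx => ?_
    have hpos : 0 ≤ x 0 := by
      by_contra! hneg
      exact hx (h0 _ (by rw [normalClamp_zero, max_eq_right hneg.le]))
    simpa [Function.mem_support, normalClamp_of_mem (mem_halfSpace.2 hpos)] using hx
  rw [← integral_lineDeriv_comp_normalClamp ha hψ h0,
    ← integral_lineDeriv_comp_normalClamp ha hψ h0]
  exact integral_lineDeriv_mul_lineDeriv_comm hA hB hsupp _ _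

lemma contDiffOn_cutoff (m : ℕ) : ContDiffOn ℝ 1 (cutoff m) (halfSpace d) :=
  (contDiff_cutoff m).contDiffOn

lemma abs_hderiv_cutoff_le {B : ℝ} {m : ℕ}
    (hB : ‖fderiv ℝ (cutoff m) x‖ ≤ ((m : ℝ) + 1)⁻¹ * B) (hx : x ∈ halfSpace d)
    (i : Fin (d + 1)) : |∂[i] (cutoff m) x| ≤ ((m : ℝ) + 1)⁻¹ * B := by
  rw [hderiv, fderivWithin_eq_fderiv (uniqueDiffOn_halfSpace x hx)
    ((contDiff_cutoff m).differentiable one_ne_zero x)]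
  refine ((fderiv ℝ (cutoff m) x).le_opNorm _).trans ?_
  rwa [PiLp.norm_single, norm_one, mul_one]

variable (d) in
lemma exists_abs_hderiv_cutoff_mul_le : ∃ B : ℝ, 0 ≤ B ∧
    ∀ f : Space d → ℝ, ContDiffOn ℝ 1 f (halfSpace d) → ∀ m i, ∀ x ∈ halfSpace d,
      |∂[i] (fun y => cutoff m y * f y) x| ≤ |∂[i] f x| + B * |f x| := by
  obtain ⟨B, hB0, hB⟩ := exists_norm_fderiv_cutoff_le (Space d)
  refine ⟨B, hB0, fun f hf m i x hx => ?_⟩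
  have hcut : |∂[i] (cutoff m) x| ≤ B :=
    (abs_hderiv_cutoff_le (hB m x) hx i).trans
      (mul_le_of_le_one_left hB0 (inv_le_one_of_one_le₀ (by linarith [m.cast_nonneg (α := ℝ)])))
  calc |∂[i] (fun y => cutoff m y * f y) x|
      ≤ |cutoff m x| * |∂[i] f x| + |f x| * |∂[i] (cutoff m) x| := by
        rw [hderiv_mul (contDiffOn_cutoff m) hf hx, ← abs_mul, ← abs_mul]
        exact abs_add_le _ _
    _ ≤ 1 * |∂[i] f x| + |f x| * B := by
        gcongr
        exact abs_cutoff_le_one m x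
    _ = |∂[i] f x| + B * |f x| := by ring

lemma tendsto_hderiv_cutoff_mul (hf : ContDiffOn ℝ 1 f (halfSpace d)) (hx : x ∈ halfSpace d)
    (i : Fin (d + 1)) :
    Tendsto (fun m => ∂[i] (fun y => cutoff m y * f y) x) atTop (nhds (∂[i] f x)) := by
  obtain ⟨B, -, hB⟩ := exists_norm_fderiv_cutoff_le (Space d)
  have hcut : Tendsto (fun m => ∂[i] (cutoff m) x) atTop (nhds 0) :=
    squeeze_zero_norm (fun m => abs_hderiv_cutoff_le (hB m x) hx i)
      (by simpa using tendsto_inv_nat_add_one.mul_const B)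
  have hlim := ((tendsto_cutoff x).mul_const (∂[i] f x)).add (hcut.const_mul (f x))
  simp only [one_mul, mul_zero, add_zero] at hlim
  exact hlim.congr fun m => (hderiv_mul (contDiffOn_cutoff m) hf hx).symm

lemma energy_zero (f : Space d → ℝ) : energy 0 f = ∫ x in halfSpace d, f x ^ 2 := by
  simp [energy, jetNorm_zero]

lemma SobolevReg.integrableOn_sq (hf : SobolevReg n f) :
    IntegrableOn (fun x => f x ^ 2) (halfSpace d) := by
  simpa [jetNorm_zero] using hf.2 0 n.zero_le

lemma SobolevReg.integrableOn_mul (hf : SobolevReg 0 f) (hg : SobolevReg 0 g) :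
    IntegrableOn (fun x => f x * g x) (halfSpace d) := by
  refine Integrable.mono' (hf.integrableOn_sq.fun_add hg.integrableOn_sq)
    ((hf.1.continuousOn.mul hg.1.continuousOn).aestronglyMeasurable measurableSet_halfSpace)
    (Eventually.of_forall fun x => ?_)
  rw [Real.norm_eq_abs, abs_le]
  constructor <;> nlinarith [sq_nonneg (f x + g x), sq_nonneg (f x - g x)]

lemma tendsto_integral_hderiv_cutoff_mul (hf : SobolevReg 1 f) (hg : SobolevReg 1 g)
    (i j : Fin (d + 1)) :
    Tendsto (fun m => ∫ x in halfSpace d,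
        ∂[i] (fun y => cutoff m y * f y) x * ∂[j] (fun y => cutoff m y * g y) x)
      atTop (nhds (∫ x in halfSpace d, ∂[i] f x * ∂[j] g x)) := by
  obtain ⟨B, -, hB⟩ := exists_abs_hderiv_cutoff_mul_le d
  refine tendsto_integral_of_dominated_convergence
    (fun x => (∂[i] f x ^ 2 + B ^ 2 * f x ^ 2) + (∂[j] g x ^ 2 + B ^ 2 * g x ^ 2))
    (fun m => ?_) ?_ (fun m => ?_) ?_
  · have hcont {h : Space d → ℝ} (hh : ContDiffOn ℝ 1 h (halfSpace d)) (l : Fin (d + 1)) :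
        ContinuousOn (∂[l] fun y => cutoff m y * h y) (halfSpace d) :=
      (contDiffOn_hderiv (n := 0) l (by simpa using (contDiffOn_cutoff m).mul hh)).continuousOn
    exact ((hcont hf.contDiffOn_one i).mul (hcont hg.contDiffOn_one j)).aestronglyMeasurable
      measurableSet_halfSpace
  · exact ((hf.hderiv i).integrableOn_sq.fun_add (hf.integrableOn_sq.const_mul _)).fun_add
      ((hg.hderiv j).integrableOn_sq.fun_add (hg.integrableOn_sq.const_mul _))
  · filter_upwards [ae_restrict_mem measurableSet_halfSpace] with x hx
    have hfx := hB f hf.contDiffOn_one m i x hx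
    have hgx := hB g hg.contDiffOn_one m j x hx
    rw [norm_mul, Real.norm_eq_abs, Real.norm_eq_abs]
    refine (mul_le_mul hfx hgx (abs_nonneg _) ((abs_nonneg _).trans hfx)).trans ?_
    nlinarith [sq_nonneg (|∂[i] f x| + B * |f x| - (|∂[j] g x| + B * |g x|)),
      sq_nonneg (|∂[i] f x| - B * |f x|), sq_nonneg (|∂[j] g x| - B * |g x|),
      sq_abs (∂[i] f x), sq_abs (f x), sq_abs (∂[j] g x), sq_abs (g x)]
  · filter_upwards [ae_restrict_mem measurableSet_halfSpace] with x hx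
    exact (tendsto_hderiv_cutoff_mul hf.contDiffOn_one hx i).mul
      (tendsto_hderiv_cutoff_mul hg.contDiffOn_one hx j)

/-- The `L²` pairing on the half-space. -/
def pairing (f g : Space d → ℝ) : ℝ := ∫ x in halfSpace d, f x * g x

theorem pairing_hderiv_comm {a ψ : Space d → ℝ} (ha : SobolevReg 1 a) (hψ : SobolevReg 1 ψ)
    (h0 : ∀ x : Space d, x 0 = 0 → ψ x = 0) (i j : Fin (d + 1)) :
    pairing (∂[i] a) (∂[j] ψ) = pairing (∂[j] a) (∂[i] ψ) := by
  refine tendsto_nhds_unique (tendsto_integral_hderiv_cutoff_mul ha hψ i j)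
    ((tendsto_integral_hderiv_cutoff_mul ha hψ j i).congr fun m => ?_)
  exact integral_hderiv_mul_hderiv_comm_of_hasCompactSupport
    ((contDiffOn_cutoff m).mul ha.contDiffOn_one) (hasCompactSupport_cutoff m).mul_right
    ((contDiffOn_cutoff m).mul hψ.contDiffOn_one) (hasCompactSupport_cutoff m).mul_right
    (fun x hx => by simp [h0 x hx]) j i

lemma pairing_congr {f' g' : Space d → ℝ} (hf : EqOn f f' (halfSpace d))
    (hg : EqOn g g' (halfSpace d)) : pairing f g = pairing f' g' :=
  setIntegral_congr_fun measurableSet_halfSpace fun x hx => by simp only [hf hx, hg hx]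

lemma pairing_comm (f g : Space d → ℝ) : pairing f g = pairing g f := by
  simp only [pairing, mul_comm]

lemma pairing_self (f : Space d → ℝ) : pairing f f = energy 0 f := by
  simp only [energy_zero, pairing, sq]

lemma pairing_add {h : Space d → ℝ} (hf : SobolevReg 0 f) (hg : SobolevReg 0 g)
    (hh : SobolevReg 0 h) : pairing (fun x => f x + g x) h = pairing f h + pairing g h := by
  simp only [pairing, ← integral_add (hf.integrableOn_mul hh) (hg.integrableOn_mul hh), add_mul]

lemma pairing_const_mul (c : ℝ) (f h : Space d → ℝ) :
    pairing (fun x => c * f x) h = c * pairing f h := by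
  simp only [pairing, ← integral_const_mul, mul_assoc]

lemma pairing_sub {h : Space d → ℝ} (hf : SobolevReg 0 f) (hg : SobolevReg 0 g)
    (hh : SobolevReg 0 h) : pairing (fun x => f x - g x) h = pairing f h - pairing g h := by
  simp only [pairing, ← integral_sub (hf.integrableOn_mul hh) (hg.integrableOn_mul hh), sub_mul]

lemma pairing_sum {ι : Type*} [Fintype ι] {F : ι → Space d → ℝ} (hF : ∀ i, SobolevReg 0 (F i))
    (hg : SobolevReg 0 g) : pairing (fun x => ∑ i, F i x) g = ∑ i, pairing (F i) g := by
  simp only [pairing, ← integral_finsetSum _ fun i _ => (hF i).integrableOn_mul hg,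
    Finset.sum_mul]

lemma abs_mul_le_young {δ : ℝ} (hδ : 0 < δ) (a b : ℝ) :
    |a * b| ≤ δ * a ^ 2 + (4 * δ)⁻¹ * b ^ 2 := by
  have hsub : δ * a ^ 2 + (4 * δ)⁻¹ * b ^ 2 - a * b = (4 * δ)⁻¹ * (2 * δ * a - b) ^ 2 := by
    field_simp
    ring
  have hadd : δ * a ^ 2 + (4 * δ)⁻¹ * b ^ 2 + a * b = (4 * δ)⁻¹ * (2 * δ * a + b) ^ 2 := by
    field_simp
    ring
  have : 0 ≤ (4 * δ)⁻¹ * (2 * δ * a - b) ^ 2 := by positivity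
  have : 0 ≤ (4 * δ)⁻¹ * (2 * δ * a + b) ^ 2 := by positivity
  rw [abs_le]
  constructor <;> linarith

lemma abs_pairing_le_young (hf : SobolevReg 0 f) (hg : SobolevReg 0 g) {δ : ℝ} (hδ : 0 < δ) :
    |pairing f g| ≤ δ * energy 0 f + (4 * δ)⁻¹ * energy 0 g := by
  rw [energy_zero, energy_zero, ← integral_const_mul, ← integral_const_mul,
    ← integral_add (hf.integrableOn_sq.const_mul _) (hg.integrableOn_sq.const_mul _)]
  exact abs_integral_le_integral_abs.trans (integral_mono (hf.integrableOn_mul hg).abs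
    ((hf.integrableOn_sq.const_mul _).add (hg.integrableOn_sq.const_mul _))
    fun x => abs_mul_le_young hδ _ _)

lemma hderiv_succ_eq_zero_of_boundary (hf : ContDiffOn ℝ 1 f (halfSpace d))
    (h0 : ∀ x : Space d, x 0 = 0 → f x = 0) (τ : Fin d) (x : Space d) (hx : x 0 = 0) :
    ∂[τ.succ] f x = 0 := by
  have hline (t : ℝ) : (x + t • stdVec τ.succ) 0 = 0 := by simp [hx]
  have hcurve : HasDerivWithinAt (fun t : ℝ => x + t • stdVec τ.succ) (stdVec τ.succ) univ 0 := by
    simpa using (((hasDerivAt_id (0 : ℝ)).smul_const (stdVec τ.succ)).const_add x).hasDerivWithinAt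
      (s := univ)
  have hf' : HasFDerivWithinAt f (fderivWithin ℝ f (halfSpace d) x) (halfSpace d)
      (x + (0 : ℝ) • stdVec τ.succ) := by
    simpa using (hf.differentiableOn one_ne_zero x hx.ge).hasFDerivWithinAt
  have hcomp := hf'.comp_hasDerivWithinAt (0 : ℝ) hcurve fun t _ => (hline t).ge
  have hconst : (f ∘ fun t : ℝ => x + t • stdVec τ.succ) = fun _ => 0 :=
    funext fun t => h0 _ (hline t)
  rw [hconst, hasDerivWithinAt_univ] at hcomp
  exact hcomp.unique (hasDerivAt_const _ _)

/-! ## The Stokes system on the half-space -/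

section Stokes

/-- The divergence of a vector field on the half-space given by its components. -/
def hdiv (v : Fin (d + 1) → Space d → ℝ) (x : Space d) : ℝ := ∑ i, ∂[i] (v i) x

/-- The Laplacian on the half-space. -/
def hlap (f : Space d → ℝ) (x : Space d) : ℝ := ∑ j, ∂[j] (∂[j] f) x

/-- The `i`-th component of the Stokes operator `-μ Δv + p ∇q`. -/
def stokesOp (μ p : ℝ) (v : Fin (d + 1) → Space d → ℝ) (q : Space d → ℝ) (i : Fin (d + 1))
    (x : Space d) : ℝ :=
  -μ * hlap (v i) x + p * ∂[i] q x

/-- Velocity-pressure pairs to which the estimate of order `n` applies: `v ∈ C^(n+2) ∩ H^(n+2)`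
with zero boundary values and `q ∈ C^(n+1) ∩ H^(n+1)`. -/
structure StokesAdmissible (n : ℕ) (v : Fin (d + 1) → Space d → ℝ) (q : Space d → ℝ) : Prop where
  velocity : ∀ i, SobolevReg (n + 2) (v i)
  pressure : SobolevReg (n + 1) q
  boundary : ∀ i x, x 0 = 0 → v i x = 0

/-- The energy of all first tangential derivatives. -/
def tangentialEnergy (n : ℕ) (f : Space d → ℝ) : ℝ := ∑ τ : Fin d, energy n (∂[τ.succ] f)

/-- The left-hand side of the Stokes estimate of order `n`. -/
def solutionEnergy (n : ℕ) (v : Fin (d + 1) → Space d → ℝ) (q : Space d → ℝ) : ℝ :=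
  ∑ i, energy (n + 2) (v i) + energy (n + 1) q

/-- The right-hand side of the Stokes estimate of order `n`. -/
def dataEnergy (μ p : ℝ) (n : ℕ) (v : Fin (d + 1) → Space d → ℝ) (q : Space d → ℝ) : ℝ :=
  energy (n + 1) (hdiv v) + ∑ i, energy n (stokesOp μ p v q i)

variable {μ p : ℝ} {v : Fin (d + 1) → Space d → ℝ} {q : Space d → ℝ}

lemma SobolevReg.hlap (hf : SobolevReg (n + 2) f) : SobolevReg n (hlap f) :=
  SobolevReg.sum fun j => (hf.hderiv j).hderiv j

lemma SobolevReg.hdiv (hv : ∀ i, SobolevReg (n + 1) (v i)) : SobolevReg n (hdiv v) :=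
  SobolevReg.sum fun i => (hv i).hderiv i

lemma StokesAdmissible.mono {m : ℕ} (h : StokesAdmissible n v q) (hm : m ≤ n) :
    StokesAdmissible m v q :=
  ⟨fun i => (h.velocity i).mono (by lia), h.pressure.mono (by lia), h.boundary⟩

lemma StokesAdmissible.hdiv (h : StokesAdmissible n v q) : SobolevReg (n + 1) (hdiv v) :=
  SobolevReg.hdiv h.velocity

lemma StokesAdmissible.stokesOp (h : StokesAdmissible n v q) (μ p : ℝ) (i : Fin (d + 1)) :
    SobolevReg n (stokesOp μ p v q i) :=
  ((h.velocity i).hlap.const_mul (-μ)).add ((h.pressure.hderiv i).const_mul p)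

lemma StokesAdmissible.tangential (h : StokesAdmissible (n + 1) v q) (τ : Fin d) :
    StokesAdmissible n (fun i => ∂[τ.succ] (v i)) (∂[τ.succ] q) :=
  ⟨fun i => (h.velocity i).hderiv _, h.pressure.hderiv _,
    fun i => hderiv_succ_eq_zero_of_boundary (h.velocity i).contDiffOn_one (h.boundary i) τ⟩

lemma hderiv_hdiv (hv : ∀ i, SobolevReg (n + 2) (v i)) (j : Fin (d + 1)) :
    EqOn (∂[j] (hdiv v)) (hdiv fun i => ∂[j] (v i)) (halfSpace d) := fun _ hx =>
  (hderiv_sum (fun i => ((hv i).hderiv i).contDiffOn_one) hx).trans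
    (Finset.sum_congr rfl fun i _ => hderiv_comm (hv i).contDiffOn_two j i hx)

lemma hderiv_hlap (hf : SobolevReg (n + 3) f) (j : Fin (d + 1)) :
    EqOn (∂[j] (hlap f)) (hlap (∂[j] f)) (halfSpace d) := fun _ hx =>
  (hderiv_sum (fun i => ((hf.hderiv i).hderiv i).contDiffOn_one) hx).trans
    (Finset.sum_congr rfl fun i _ => (hderiv_comm (hf.hderiv i).contDiffOn_two j i hx).trans
      (hderiv_congr (hderiv_comm hf.contDiffOn_two j i) hx))

lemma hderiv_stokesOp (h : StokesAdmissible (n + 1) v q) (j i : Fin (d + 1)) :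
    EqOn (∂[j] (stokesOp μ p v q i)) (stokesOp μ p (fun i => ∂[j] (v i)) (∂[j] q) i)
      (halfSpace d) := fun x hx => by
  have hlap := (h.velocity i).hlap
  have hgrad := h.pressure.hderiv i
  refine (hderiv_add (hlap.const_mul _).contDiffOn_one (hgrad.const_mul _).contDiffOn_one hx).trans
    ?_
  simp only [hderiv_const_mul _ hlap.contDiffOn_one hx, hderiv_const_mul _ hgrad.contDiffOn_one hx,
    hderiv_hlap (h.velocity i) j hx, hderiv_comm h.pressure.contDiffOn_two j i hx, stokesOp]

lemma tangentialEnergy_nonneg (n : ℕ) (f : Space d → ℝ) : 0 ≤ tangentialEnergy n f :=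
  Finset.sum_nonneg fun _ _ => energy_nonneg _ _

lemma dataEnergy_nonneg (μ p : ℝ) (n : ℕ) (v : Fin (d + 1) → Space d → ℝ) (q : Space d → ℝ) :
    0 ≤ dataEnergy μ p n v q :=
  add_nonneg (energy_nonneg _ _) (Finset.sum_nonneg fun _ _ => energy_nonneg _ _)

lemma energy_hderiv_succ_le_tangentialEnergy (n : ℕ) (f : Space d → ℝ) (τ : Fin d) :
    energy n (∂[τ.succ] f) ≤ tangentialEnergy n f :=
  Finset.single_le_sum (f := fun τ : Fin d => energy n (∂[τ.succ] f))
    (fun _ _ => energy_nonneg _ _) (Finset.mem_univ τ)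

lemma energy_stokesOp_le_dataEnergy (i : Fin (d + 1)) :
    energy n (stokesOp μ p v q i) ≤ dataEnergy μ p n v q := by
  have h := Finset.single_le_sum (f := fun i => energy n (stokesOp μ p v q i))
    (fun _ _ => energy_nonneg _ _) (Finset.mem_univ i)
  rw [dataEnergy]
  linarith [energy_nonneg (n + 1) (hdiv v)]

lemma energy_hdiv_le_dataEnergy : energy (n + 1) (hdiv v) ≤ dataEnergy μ p n v q :=
  le_add_of_nonneg_right (Finset.sum_nonneg fun _ _ => energy_nonneg _ _)

/-! ### Recovering the normal derivatives -/

lemma energy_sum_hderiv_hderiv_succ_le {i : Fin d → Fin (d + 1)} {F : Fin d → Space d → ℝ}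
    (hF : ∀ τ, SobolevReg (n + 2) (F τ)) :
    energy n (fun x => ∑ τ : Fin d, ∂[i τ] (∂[τ.succ] (F τ)) x)
      ≤ d * ∑ τ : Fin d, energy (n + 1) (∂[τ.succ] (F τ)) := by
  refine (energy_sum_le fun τ => ((hF τ).hderiv τ.succ).hderiv (i τ)).trans ?_
  rw [Fintype.card_fin]
  gcongr with τ
  exact energy_hderiv_le _ ((hF τ).hderiv _)

lemma energy_add_two_le (hf : SobolevReg (n + 2) f) :
    energy (n + 2) f
      ≤ (d + 1) ^ 2 * (energy n (∂[0] (∂[0] f)) + 2 * tangentialEnergy (n + 1) f) := by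
  have hnormal : energy (n + 1) (∂[0] f)
      ≤ (d + 1) * (energy n (∂[0] (∂[0] f)) + tangentialEnergy (n + 1) f) := by
    refine (energy_succ_le (hf.hderiv 0)).trans ?_
    rw [Fin.sum_univ_succ, tangentialEnergy]
    gcongr with τ
    rw [energy_congr (hderiv_comm hf.contDiffOn_two τ.succ 0)]
    exact energy_hderiv_le 0 (hf.hderiv τ.succ)
  have htotal : energy (n + 2) f
      ≤ (d + 1) * (energy (n + 1) (∂[0] f) + tangentialEnergy (n + 1) f) :=
    (energy_succ_le hf).trans_eq (by rw [Fin.sum_univ_succ, tangentialEnergy])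
  have hT := tangentialEnergy_nonneg (n + 1) f
  calc energy (n + 2) f
      ≤ (d + 1) * ((d + 1) * (energy n (∂[0] (∂[0] f)) + tangentialEnergy (n + 1) f)
          + (d + 1) * tangentialEnergy (n + 1) f) := by
        refine htotal.trans ?_
        gcongr
        exact le_mul_of_one_le_left hT (by linarith [d.cast_nonneg (α := ℝ)])
    _ = _ := by ring

lemma energy_hlap_le (hf : SobolevReg (n + 2) f) :
    energy n (hlap f) ≤ (d + 1) * (energy n (∂[0] (∂[0] f)) + tangentialEnergy (n + 1) f) := by
  refine (energy_sum_le fun j => (hf.hderiv j).hderiv j).trans ?_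
  rw [Fintype.card_fin, Fin.sum_univ_succ, tangentialEnergy]
  push_cast
  gcongr with τ
  exact energy_hderiv_le _ (hf.hderiv _)

-- Incompressibility turns `∂₀∂₀v₀` into tangential derivatives of `∂₀v` and the data.
lemma energy_normal_normal_zero_le (h : StokesAdmissible n v q) :
    energy n (∂[0] (∂[0] (v 0)))
      ≤ 2 * energy (n + 1) (hdiv v) + 2 * d * ∑ i, tangentialEnergy (n + 1) (v i) := by
  have heq : EqOn (∂[0] (∂[0] (v 0)))
      (fun x => ∂[0] (hdiv v) x - ∑ τ : Fin d, ∂[0] (∂[τ.succ] (v τ.succ)) x) (halfSpace d) := by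
    intro x hx
    have hsum := hderiv_sum (i := 0) (fun j => ((h.velocity j).hderiv j).contDiffOn_one) hx
    change ∂[0] (hdiv v) x = _ at hsum
    simp only [hsum, Fin.sum_univ_succ, add_sub_cancel_right]
  have htangential : energy n (fun x => ∑ τ : Fin d, ∂[0] (∂[τ.succ] (v τ.succ)) x)
      ≤ d * ∑ i, tangentialEnergy (n + 1) (v i) := by
    refine (energy_sum_hderiv_hderiv_succ_le (i := fun _ => 0) fun τ => h.velocity τ.succ).trans ?_
    rw [Fin.sum_univ_succ]
    gcongr
    refine (Finset.sum_le_sum fun τ _ =>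
      energy_hderiv_succ_le_tangentialEnergy (n + 1) (v τ.succ) τ).trans ?_
    exact le_add_of_nonneg_left (tangentialEnergy_nonneg _ _)
  rw [energy_congr heq]
  have hsub := energy_sub_le (h.hdiv.hderiv 0)
    (SobolevReg.sum fun τ : Fin d => ((h.velocity τ.succ).hderiv τ.succ).hderiv 0)
  linarith [energy_hderiv_le 0 h.hdiv]

lemma energy_normal_pressure_le (h : StokesAdmissible n v q) :
    p ^ 2 * energy n (∂[0] q) ≤ (2 + 4 * μ ^ 2 * (d + 1) ^ 2)
      * (dataEnergy μ p n v q + ∑ i, tangentialEnergy (n + 1) (v i)) := by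
  set T := ∑ i, tangentialEnergy (n + 1) (v i)
  have hT0 : 0 ≤ T := Finset.sum_nonneg fun i _ => tangentialEnergy_nonneg _ _
  have hTv : tangentialEnergy (n + 1) (v 0) ≤ T := Finset.single_le_sum
    (f := fun i => tangentialEnergy (n + 1) (v i)) (fun i _ => tangentialEnergy_nonneg _ _)
    (Finset.mem_univ 0)
  have hlaplacian : energy n (hlap (v 0)) ≤ 2 * (d + 1) ^ 2 * (dataEnergy μ p n v q + T) := by
    have hD := energy_hdiv_le_dataEnergy (μ := μ) (p := p) (n := n) (v := v) (q := q)
    calc energy n (hlap (v 0))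
        ≤ (d + 1) * ((2 * dataEnergy μ p n v q + 2 * d * T) + T) := by
          refine (energy_hlap_le (h.velocity 0)).trans ?_
          gcongr
          linarith [energy_normal_normal_zero_le h]
      _ ≤ (d + 1) * (2 * (d + 1) * (dataEnergy μ p n v q + T)) := by
          gcongr
          nlinarith [mul_nonneg d.cast_nonneg (dataEnergy_nonneg μ p n v q)]
      _ = _ := by ring
  have heq : EqOn (fun x => p * ∂[0] q x)
      (fun x => stokesOp μ p v q 0 x + μ * hlap (v 0) x) (halfSpace d) := fun x _ => by
    simp only [stokesOp]
    ring
  rw [← energy_const_mul p (h.pressure.hderiv 0), energy_congr heq]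
  have hadd := energy_add_le (h.stokesOp μ p 0) ((h.velocity 0).hlap.const_mul μ)
  rw [energy_const_mul _ (h.velocity 0).hlap] at hadd
  have hG := energy_stokesOp_le_dataEnergy (n := n) (μ := μ) (p := p) (v := v) (q := q) 0
  nlinarith [mul_le_mul_of_nonneg_left hlaplacian (sq_nonneg μ)]

-- The tangential momentum equations express `∂₀∂₀v_τ` by the data and tangential derivatives.
lemma energy_normal_normal_succ_le (h : StokesAdmissible n v q) (τ : Fin d) :
    μ ^ 2 * energy n (∂[0] (∂[0] (v τ.succ))) ≤ 4 * (p ^ 2 * energy n (∂[τ.succ] q)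
        + energy n (stokesOp μ p v q τ.succ))
      + 2 * d * μ ^ 2 * tangentialEnergy (n + 1) (v τ.succ) := by
  have hv := h.velocity τ.succ
  have hq := h.pressure.hderiv τ.succ
  have hG := h.stokesOp μ p τ.succ
  have hS := SobolevReg.sum fun σ : Fin d => (hv.hderiv σ.succ).hderiv σ.succ
  have heq : EqOn (fun x => μ * ∂[0] (∂[0] (v τ.succ)) x)
      (fun x => (p * ∂[τ.succ] q x - stokesOp μ p v q τ.succ x)
        - μ * ∑ σ : Fin d, ∂[σ.succ] (∂[σ.succ] (v τ.succ)) x) (halfSpace d) := fun x _ => by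
    simp only [stokesOp, hlap, Fin.sum_univ_succ]
    ring
  have hsub := energy_sub_le ((hq.const_mul p).sub hG) (hS.const_mul μ)
  have hsub' := energy_sub_le (hq.const_mul p) hG
  rw [energy_const_mul _ hS] at hsub
  rw [energy_const_mul _ hq] at hsub'
  rw [← energy_const_mul μ ((hv.hderiv 0).hderiv 0), energy_congr heq]
  have htangential :=
    energy_sum_hderiv_hderiv_succ_le (i := fun σ => σ.succ) (F := fun _ => v τ.succ) fun _ => hv
  change _ ≤ d * tangentialEnergy (n + 1) (v τ.succ) at htangential
  nlinarith [mul_le_mul_of_nonneg_left htangential (sq_nonneg μ)]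

lemma sum_energy_normal_normal_le (h : StokesAdmissible n v q) :
    μ ^ 2 * ∑ i, energy n (∂[0] (∂[0] (v i))) ≤ (4 + 4 * p ^ 2 + (4 * d + 2) * μ ^ 2) *
      (dataEnergy μ p n v q + ∑ i, tangentialEnergy (n + 1) (v i) + tangentialEnergy n q) := by
  set T := ∑ i, tangentialEnergy (n + 1) (v i) with hT
  set D := dataEnergy μ p n v q
  set Z := tangentialEnergy n q
  have hD0 : 0 ≤ D := dataEnergy_nonneg μ p n v q
  have hT0 : 0 ≤ T := Finset.sum_nonneg fun _ _ => tangentialEnergy_nonneg _ _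
  have hZ0 : 0 ≤ Z := tangentialEnergy_nonneg n q
  have hzero : energy n (∂[0] (∂[0] (v 0))) ≤ (2 * d + 2) * (D + T + Z) := by
    have := energy_hdiv_le_dataEnergy (μ := μ) (p := p) (n := n) (v := v) (q := q)
    have : 0 ≤ d * (D + Z) := by positivity
    linarith [energy_normal_normal_zero_le h]
  have hsucc : μ ^ 2 * ∑ τ : Fin d, energy n (∂[0] (∂[0] (v τ.succ)))
      ≤ (4 + 4 * p ^ 2 + 2 * d * μ ^ 2) * (D + T + Z) := by
    have hG : ∑ τ : Fin d, energy n (stokesOp μ p v q τ.succ) ≤ D := by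
      simp only [D, dataEnergy, Fin.sum_univ_succ]
      linarith [energy_nonneg (n + 1) (hdiv v), energy_nonneg n (stokesOp μ p v q 0)]
    have hTsucc : ∑ τ : Fin d, tangentialEnergy (n + 1) (v τ.succ) ≤ T := by
      rw [hT, Fin.sum_univ_succ]
      exact le_add_of_nonneg_left (tangentialEnergy_nonneg _ _)
    calc μ ^ 2 * ∑ τ : Fin d, energy n (∂[0] (∂[0] (v τ.succ)))
        ≤ 4 * (p ^ 2 * Z + ∑ τ : Fin d, energy n (stokesOp μ p v q τ.succ))
          + 2 * d * μ ^ 2 * ∑ τ : Fin d, tangentialEnergy (n + 1) (v τ.succ) := by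
          simp only [Z, tangentialEnergy, Finset.mul_sum, ← Finset.sum_add_distrib]
          exact Finset.sum_le_sum fun τ _ => by
            simpa only [tangentialEnergy, Finset.mul_sum] using energy_normal_normal_succ_le h τ
      _ ≤ 4 * (p ^ 2 * (D + T + Z) + (D + T + Z)) + 2 * d * μ ^ 2 * (D + T + Z) := by
          gcongr <;> linarith
      _ = _ := by ring
  rw [Fin.sum_univ_succ]
  linarith [mul_le_mul_of_nonneg_left hzero (sq_nonneg μ)]

lemma exists_solutionEnergy_le (hμ : 0 < μ) (hp : 0 < p) : ∃ C : ℝ, 0 < C ∧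
    ∀ n (v : Fin (d + 1) → Space d → ℝ) q, StokesAdmissible n v q →
      solutionEnergy n v q ≤ C * (dataEnergy μ p n v q + ∑ i, tangentialEnergy (n + 1) (v i)
        + tangentialEnergy n q) := by
  set Cv : ℝ := (4 + 4 * p ^ 2 + (4 * d + 2) * μ ^ 2) / μ ^ 2
  set Cq : ℝ := (2 + 4 * μ ^ 2 * (d + 1) ^ 2) / p ^ 2
  refine ⟨(d + 1) ^ 2 * (Cv + 2) + (d + 1) * (Cq + 1), by positivity, fun n v q h => ?_⟩
  set T := ∑ i, tangentialEnergy (n + 1) (v i)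
  set D := dataEnergy μ p n v q
  set Z := tangentialEnergy n q
  have hD0 : 0 ≤ D := dataEnergy_nonneg μ p n v q
  have hT0 : 0 ≤ T := Finset.sum_nonneg fun _ _ => tangentialEnergy_nonneg _ _
  have hZ0 : 0 ≤ Z := tangentialEnergy_nonneg n q
  have hnormal : ∑ i, energy n (∂[0] (∂[0] (v i))) ≤ Cv * (D + T + Z) := by
    rw [div_mul_eq_mul_div, le_div_iff₀' (by positivity)]
    exact sum_energy_normal_normal_le h
  have hpressure : energy n (∂[0] q) ≤ Cq * (D + T + Z) := by
    refine le_trans ?_ (mul_le_mul_of_nonneg_left (le_add_of_nonneg_right hZ0) (by positivity))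
    rw [div_mul_eq_mul_div, le_div_iff₀' (by positivity)]
    exact energy_normal_pressure_le h
  have hvelocity : ∑ i, energy (n + 2) (v i) ≤ (d + 1) ^ 2 * ((Cv + 2) * (D + T + Z)) := by
    refine (Finset.sum_le_sum fun i _ => energy_add_two_le (h.velocity i)).trans ?_
    rw [← Finset.mul_sum, Finset.sum_add_distrib, ← Finset.mul_sum]
    gcongr
    linarith
  have hgradient : energy (n + 1) q ≤ (d + 1) * ((Cq + 1) * (D + T + Z)) := by
    refine (energy_succ_le h.pressure).trans ?_
    rw [Fin.sum_univ_succ]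
    change _ * (_ + Z) ≤ _
    gcongr
    linarith
  rw [solutionEnergy]
  linarith

/-! ### The tangential estimate -/

lemma pairing_stokesOp (h : StokesAdmissible 0 v q) (μ p : ℝ) (i : Fin (d + 1))
    (hg : SobolevReg 0 g) : pairing (stokesOp μ p v q i) g
      = -μ * ∑ j, pairing (∂[j] (∂[j] (v i))) g + p * pairing (∂[i] q) g := by
  rw [← pairing_sum (fun j => ((h.velocity i).hderiv j).hderiv j) hg, ← pairing_const_mul,
    ← pairing_const_mul]
  exact pairing_add ((h.velocity i).hlap.const_mul _) ((h.pressure.hderiv i).const_mul p) hg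

lemma sum_pairing_stokesOp_hderiv_hderiv (h : StokesAdmissible 0 v q) (μ p : ℝ) (τ : Fin d) :
    ∑ i, pairing (stokesOp μ p v q i) (∂[τ.succ] (∂[τ.succ] (v i)))
      = -μ * ∑ i, ∑ j, energy 0 (∂[j] (∂[τ.succ] (v i)))
        + p * pairing (∂[τ.succ] q) (∂[τ.succ] (hdiv v)) := by
  have hw (i : Fin (d + 1)) : SobolevReg 1 (∂[τ.succ] (v i)) := (h.velocity i).hderiv _
  have hw0 (i : Fin (d + 1)) : ∀ x, x 0 = 0 → ∂[τ.succ] (v i) x = 0 :=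
    hderiv_succ_eq_zero_of_boundary (h.velocity i).contDiffOn_one (h.boundary i) τ
  have hvelocity (i j : Fin (d + 1)) :
      pairing (∂[j] (∂[j] (v i))) (∂[τ.succ] (∂[τ.succ] (v i)))
        = energy 0 (∂[j] (∂[τ.succ] (v i))) := by
    rw [pairing_hderiv_comm ((h.velocity i).hderiv j) (hw i) (hw0 i), ← pairing_self]
    exact pairing_congr (hderiv_comm (h.velocity i).contDiffOn_two _ j) fun _ _ => rfl
  have hpressure : ∑ i, pairing (∂[i] q) (∂[τ.succ] (∂[τ.succ] (v i)))
      = pairing (∂[τ.succ] q) (∂[τ.succ] (hdiv v)) := by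
    simp only [pairing_hderiv_comm h.pressure (hw _) (hw0 _) _ τ.succ]
    simp only [pairing_comm (∂[τ.succ] q)]
    rw [← pairing_sum (fun i => (hw i).hderiv i) (h.pressure.hderiv _)]
    exact (pairing_congr (hderiv_hdiv h.velocity τ.succ) fun _ _ => rfl).symm
  simp only [pairing_stokesOp h μ p _ ((hw _).hderiv τ.succ), hvelocity, Finset.sum_add_distrib,
    ← Finset.mul_sum, hpressure]

lemma sum_energy_hderiv_tangential_le (hμ : 0 < μ) (hp : 0 < p) {ε : ℝ} (hε : 0 < ε)
    (h : StokesAdmissible 0 v q) (τ : Fin d) :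
    μ / 2 * ∑ i, ∑ j, energy 0 (∂[j] (∂[τ.succ] (v i)))
      ≤ p * (ε * energy 0 (∂[τ.succ] q) + (4 * ε)⁻¹ * energy 1 (hdiv v))
        + (2 * μ)⁻¹ * ∑ i, energy 0 (stokesOp μ p v q i) := by
  have hdivergence : pairing (∂[τ.succ] q) (∂[τ.succ] (hdiv v))
      ≤ ε * energy 0 (∂[τ.succ] q) + (4 * ε)⁻¹ * energy 1 (hdiv v) := by
    refine (le_abs_self _).trans ((abs_pairing_le_young (h.pressure.hderiv _) (h.hdiv.hderiv _)
      hε).trans ?_)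
    gcongr
    exact energy_hderiv_le _ h.hdiv
  have hforce (i : Fin (d + 1)) :
      -pairing (stokesOp μ p v q i) (∂[τ.succ] (∂[τ.succ] (v i)))
        ≤ μ / 2 * ∑ j, energy 0 (∂[j] (∂[τ.succ] (v i)))
          + (2 * μ)⁻¹ * energy 0 (stokesOp μ p v q i) := by
    have hyoung := abs_pairing_le_young (((h.velocity i).hderiv τ.succ).hderiv τ.succ)
      (h.stokesOp μ p i) (half_pos hμ)
    rw [pairing_comm, show 4 * (μ / 2) = 2 * μ by ring] at hyoung
    refine ((neg_le_abs _).trans hyoung).trans ?_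
    gcongr
    exact Finset.single_le_sum (f := fun j => energy 0 (∂[j] (∂[τ.succ] (v i))))
      (fun j _ => energy_nonneg _ _) (Finset.mem_univ _)
  have hsum := Finset.sum_le_sum fun i (_ : i ∈ Finset.univ) => hforce i
  rw [Finset.sum_neg_distrib, Finset.sum_add_distrib, ← Finset.mul_sum, ← Finset.mul_sum,
    sum_pairing_stokesOp_hderiv_hderiv h] at hsum
  linarith [mul_le_mul_of_nonneg_left hdivergence hp.le]

lemma sum_tangentialEnergy_one_le (h : StokesAdmissible 0 v q) :
    ∑ i, tangentialEnergy 1 (v i)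
      ≤ (d + 1) * ∑ τ : Fin d, ∑ i, ∑ j, energy 0 (∂[j] (∂[τ.succ] (v i))) := by
  simp only [tangentialEnergy]
  rw [Finset.sum_comm, Finset.mul_sum]
  refine Finset.sum_le_sum fun τ _ => ?_
  rw [Finset.mul_sum]
  exact Finset.sum_le_sum fun i _ => energy_succ_le ((h.velocity i).hderiv _)

lemma exists_sum_tangentialEnergy_le (hμ : 0 < μ) (hp : 0 < p) {δ : ℝ} (hδ : 0 < δ) :
    ∃ C : ℝ, 0 < C ∧ ∀ (v : Fin (d + 1) → Space d → ℝ) q, StokesAdmissible 0 v q →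
      ∑ i, tangentialEnergy 1 (v i) ≤ δ * tangentialEnergy 0 q + C * dataEnergy μ p 0 v q := by
  set ε := μ * δ / (2 * p * (d + 1)) with hε
  have hε0 : 0 < ε := by positivity
  refine ⟨(d + 1) * (2 / μ * ((d + 1) * (p * (4 * ε)⁻¹ + (2 * μ)⁻¹))), by positivity,
    fun v q h => ?_⟩
  set F := energy 1 (hdiv v)
  set G := ∑ i, energy 0 (stokesOp μ p v q i)
  have hF : 0 ≤ F := energy_nonneg _ _
  have hG : 0 ≤ G := Finset.sum_nonneg fun _ _ => energy_nonneg _ _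
  have hsum : μ / 2 * ∑ τ : Fin d, ∑ i, ∑ j, energy 0 (∂[j] (∂[τ.succ] (v i)))
      ≤ p * ε * tangentialEnergy 0 q + (d + 1) * (p * (4 * ε)⁻¹ + (2 * μ)⁻¹) * (F + G) := by
    have hterms := Finset.sum_le_sum fun (τ : Fin d) (_ : τ ∈ Finset.univ) =>
      sum_energy_hderiv_tangential_le hμ hp hε0 h τ
    simp only [← Finset.mul_sum, Finset.sum_add_distrib, Finset.sum_const, Finset.card_univ,
      Fintype.card_fin, nsmul_eq_mul] at hterms
    have hslack : 0 ≤ p * (4 * ε)⁻¹ * (F + (d + 1) * G)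
        + (2 * μ)⁻¹ * ((d + 1) * F + G) := by positivity
    change _ ≤ p * (ε * tangentialEnergy 0 q + (4 * ε)⁻¹ * (d * F)) + (2 * μ)⁻¹ * (d * G) at hterms
    linarith
  calc ∑ i, tangentialEnergy 1 (v i)
      ≤ (d + 1) * (2 / μ * (μ / 2 *
          ∑ τ : Fin d, ∑ i, ∑ j, energy 0 (∂[j] (∂[τ.succ] (v i))))) := by
        refine (sum_tangentialEnergy_one_le h).trans_eq ?_
        field_simp
    _ ≤ (d + 1) * (2 / μ * (p * ε * tangentialEnergy 0 q
          + (d + 1) * (p * (4 * ε)⁻¹ + (2 * μ)⁻¹) * (F + G))) := by gcongr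
    _ = (d + 1) * (2 / μ) * (p * ε) * tangentialEnergy 0 q
          + (d + 1) * (2 / μ * ((d + 1) * (p * (4 * ε)⁻¹ + (2 * μ)⁻¹))) * (F + G) := by ring
    _ = _ := by
        congr 2
        rw [hε]
        field_simp

/-! ### The pressure estimate -/

lemma det_id_add_smulRight {E : Type*} [NormedAddCommGroup E] [NormedSpace ℝ E]
    [FiniteDimensional ℝ E] (l : E →L[ℝ] ℝ) (e : E) :
    (ContinuousLinearMap.id ℝ E + l.smulRight e).det = 1 + l e :=
  LinearMap.transvection.det (l : E →ₗ[ℝ] ℝ) e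

/-- The dilation by the factor `4` in the normal direction. It fixes the boundary, and
composition with it halves the `L²` norm. -/
def normalDilation (d : ℕ) : Space d →L[ℝ] Space d :=
  ContinuousLinearMap.id ℝ (Space d) + ((3 : ℝ) • EuclideanSpace.proj 0).smulRight (stdVec 0)

lemma normalDilation_apply (x : Space d) : normalDilation d x = x + (3 * x 0) • stdVec 0 := by
  simp [normalDilation]

lemma normalDilation_apply_zero (x : Space d) : normalDilation d x 0 = 4 * x 0 := by
  rw [normalDilation_apply, PiLp.add_apply, PiLp.smul_apply, PiLp.single_apply, if_pos rfl,
    smul_eq_mul]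
  ring

lemma normalDilation_stdVec_zero : normalDilation d (stdVec 0) = (4 : ℝ) • stdVec 0 := by
  rw [normalDilation_apply, PiLp.single_apply, if_pos rfl, mul_one,
    ← one_smul ℝ (stdVec (0 : Fin (d + 1))), smul_smul, ← add_smul]
  norm_num

lemma normalDilation_stdVec_succ (τ : Fin d) :
    normalDilation d (stdVec τ.succ) = stdVec τ.succ := by
  simp [normalDilation_apply]

lemma det_normalDilation : (normalDilation d).det = 4 := by
  rw [normalDilation, det_id_add_smulRight]
  change (1 : ℝ) + 3 * (stdVec 0 : Space d) 0 = 4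
  rw [PiLp.single_apply, if_pos rfl]
  norm_num

lemma preimage_normalDilation_halfSpace : normalDilation d ⁻¹' halfSpace d = halfSpace d := by
  ext x
  rw [mem_preimage, mem_halfSpace, mem_halfSpace, normalDilation_apply_zero,
    mul_nonneg_iff_of_pos_left four_pos]

lemma normalDilation_mem_halfSpace (hx : x ∈ halfSpace d) : normalDilation d x ∈ halfSpace d :=
  preimage_normalDilation_halfSpace.ge hx

lemma measurableEmbedding_normalDilation : MeasurableEmbedding (normalDilation d) := by
  refine (normalDilation d).continuous.measurableEmbedding fun x y hxy => ?_
  have h0 : x 0 = y 0 := by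
    have := congrArg (fun z : Space d => z 0) hxy
    simp only [normalDilation_apply_zero] at this
    linarith
  rw [normalDilation_apply, normalDilation_apply, h0] at hxy
  exact add_right_cancel hxy

lemma map_normalDilation_volume :
    Measure.map (normalDilation d) volume = ENNReal.ofReal 4⁻¹ • volume := by
  have hdet : LinearMap.det (normalDilation d : Space d →ₗ[ℝ] Space d) = 4 := det_normalDilation
  have hmap := Measure.map_linearMap_addHaar_eq_smul_addHaar volume
    (f := (normalDilation d : Space d →ₗ[ℝ] Space d)) (by rw [hdet]; norm_num)
  rwa [hdet, abs_of_pos (by norm_num)] at hmap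

lemma integrableOn_comp_normalDilation (hf : IntegrableOn f (halfSpace d)) :
    IntegrableOn (fun x => f (normalDilation d x)) (halfSpace d) := by
  have h := measurableEmbedding_normalDilation.integrableOn_map_iff (μ := volume) (f := f)
    (s := halfSpace d)
  rw [map_normalDilation_volume, preimage_normalDilation_halfSpace] at h
  refine h.1 ?_
  rw [IntegrableOn, Measure.restrict_smul]
  exact hf.smul_measure ENNReal.ofReal_ne_top

lemma integral_comp_normalDilation (f : Space d → ℝ) :
    ∫ x in halfSpace d, f (normalDilation d x) = 4⁻¹ * ∫ x in halfSpace d, f x := by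
  have h := measurableEmbedding_normalDilation.setIntegral_map (μ := volume) f (halfSpace d)
  rw [map_normalDilation_volume, preimage_normalDilation_halfSpace, Measure.restrict_smul,
    integral_smul_measure, ENNReal.toReal_ofReal (by norm_num)] at h
  exact h.symm

lemma SobolevReg.comp_normalDilation (hf : SobolevReg n f) :
    SobolevReg n fun x => f (normalDilation d x) := by
  have hcont : ContDiffOn ℝ n (fun x => f (normalDilation d x)) (halfSpace d) :=
    hf.1.comp (normalDilation d).contDiff.contDiffOn fun _ => normalDilation_mem_halfSpace
  refine ⟨hcont, fun j hj => integrableOn_jetNorm_sq_of_le hcont hj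
    ((integrableOn_comp_normalDilation (hf.2 j hj)).const_mul ((‖normalDilation d‖ ^ j) ^ 2))
    fun x hx => ?_⟩
  have hjet := (normalDilation d).iteratedFDerivWithin_comp_right hf.1 uniqueDiffOn_halfSpace
    (by rw [preimage_normalDilation_halfSpace]; exact uniqueDiffOn_halfSpace)
    (normalDilation_mem_halfSpace hx) (by exact_mod_cast hj)
  rw [preimage_normalDilation_halfSpace] at hjet
  change ‖iteratedFDerivWithin ℝ j (f ∘ normalDilation d) (halfSpace d) x‖ ^ 2 ≤ _
  rw [hjet, ← mul_pow, mul_comm]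
  gcongr
  exact (ContinuousMultilinearMap.norm_compContinuousLinearMap_le _ _).trans_eq
    (by rw [Finset.prod_const, Finset.card_univ, Fintype.card_fin, jetNorm])

lemma energy_zero_comp_normalDilation (f : Space d → ℝ) :
    energy 0 (fun x => f (normalDilation d x)) = 4⁻¹ * energy 0 f := by
  rw [energy_zero, energy_zero, ← integral_comp_normalDilation fun x => f x ^ 2]

lemma hderiv_comp_normalDilation {i : Fin (d + 1)} {c : ℝ}
    (hi : normalDilation d (stdVec i) = c • stdVec i) (hf : ContDiffOn ℝ 1 f (halfSpace d)) :
    EqOn (∂[i] fun y => f (normalDilation d y)) (fun y => c * ∂[i] f (normalDilation d y))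
      (halfSpace d) := fun x hx => by
  have hf' := (hf.differentiableOn one_ne_zero _
    (normalDilation_mem_halfSpace hx)).hasFDerivWithinAt
  have hcomp := (hf'.comp x ((normalDilation d).hasFDerivWithinAt)
    fun _ => normalDilation_mem_halfSpace).fderivWithin (uniqueDiffOn_halfSpace x hx)
  rw [Function.comp_def] at hcomp
  simp only [hderiv, hcomp, ContinuousLinearMap.comp_apply, hi, map_smul, smul_eq_mul]

/-- The difference of `q` and its normal dilation: a test function with zero boundary values whose
tangential gradient is comparable to that of `q`. -/
def dilationTest (q : Space d → ℝ) (x : Space d) : ℝ := q x - q (normalDilation d x)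

lemma SobolevReg.dilationTest (hq : SobolevReg n q) : SobolevReg n (dilationTest q) :=
  hq.sub hq.comp_normalDilation

lemma dilationTest_eq_zero (hx : x 0 = 0) : dilationTest q x = 0 := by
  simp [dilationTest, normalDilation_apply, hx]

lemma hderiv_dilationTest {i : Fin (d + 1)} {c : ℝ}
    (hi : normalDilation d (stdVec i) = c • stdVec i) (hq : SobolevReg 1 q) :
    EqOn (∂[i] (dilationTest q)) (fun x => ∂[i] q x - c * ∂[i] q (normalDilation d x))
      (halfSpace d) := fun x hx => by
  refine (hderiv_sub hq.contDiffOn_one hq.comp_normalDilation.contDiffOn_one hx).trans ?_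
  simp only [hderiv_comp_normalDilation hi hq.contDiffOn_one hx]

lemma energy_hderiv_dilationTest_le {i : Fin (d + 1)} {c : ℝ}
    (hi : normalDilation d (stdVec i) = c • stdVec i) (hq : SobolevReg 1 q) :
    energy 0 (∂[i] (dilationTest q)) ≤ (2 + c ^ 2 / 2) * energy 0 (∂[i] q) := by
  have hdil := (hq.hderiv i).comp_normalDilation
  have hsub := energy_sub_le (hq.hderiv i) (hdil.const_mul c)
  rw [energy_const_mul _ hdil, energy_zero_comp_normalDilation] at hsub
  rw [energy_congr (hderiv_dilationTest hi hq)]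
  linarith

lemma half_energy_le_pairing_dilationTest (hq : SobolevReg 1 q) (τ : Fin d) :
    energy 0 (∂[τ.succ] q) / 2 ≤ pairing (∂[τ.succ] q) (∂[τ.succ] (dilationTest q)) := by
  have hτ := hq.hderiv τ.succ
  have heq := hderiv_dilationTest (c := 1) (by rw [normalDilation_stdVec_succ τ, one_smul]) hq
  have hyoung := abs_pairing_le_young hτ hτ.comp_normalDilation (δ := 1 / 4) (by norm_num)
  rw [energy_zero_comp_normalDilation] at hyoung
  rw [pairing_comm, pairing_congr heq fun _ _ => rfl,
    pairing_sub hτ (hτ.comp_normalDilation.const_mul 1) hτ, pairing_self, pairing_const_mul,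
    pairing_comm]
  linarith [le_of_abs_le hyoung]

-- Testing with a gradient, `Δv` may be replaced by `∇ div v`.
lemma sum_pairing_hderiv_pressure {ψ : Space d → ℝ} (h : StokesAdmissible 0 v q)
    (hψ : SobolevReg 1 ψ) (h0 : ∀ x : Space d, x 0 = 0 → ψ x = 0) :
    p * ∑ i, pairing (∂[i] q) (∂[i] ψ)
      = ∑ i, pairing (fun x => stokesOp μ p v q i x + μ * ∂[i] (hdiv v) x) (∂[i] ψ) := by
  have hlap : ∑ i, ∑ j, pairing (∂[j] (∂[j] (v i))) (∂[i] ψ)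
      = ∑ j, pairing (∂[j] (hdiv v)) (∂[j] ψ) := by
    rw [Finset.sum_comm]
    refine Finset.sum_congr rfl fun j _ => ?_
    rw [pairing_congr (hderiv_hdiv h.velocity j) fun _ _ => rfl]
    refine Eq.trans ?_ (pairing_sum (fun i => ((h.velocity i).hderiv j).hderiv i)
      (hψ.hderiv j)).symm
    exact Finset.sum_congr rfl fun i _ =>
      pairing_hderiv_comm ((h.velocity i).hderiv j) hψ h0 j i
  simp only [pairing_add (h.stokesOp μ p _) ((h.hdiv.hderiv _).const_mul μ) (hψ.hderiv _),
    pairing_const_mul, pairing_stokesOp h μ p _ (hψ.hderiv _), Finset.sum_add_distrib,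
    ← Finset.mul_sum, hlap]
  ring

lemma energy_stokesOp_add_grad_hdiv_le (h : StokesAdmissible 0 v q) (i : Fin (d + 1)) :
    energy 0 (fun x => stokesOp μ p v q i x + μ * ∂[i] (hdiv v) x)
      ≤ 2 * (1 + μ ^ 2) * dataEnergy μ p 0 v q := by
  have hgrad := h.hdiv.hderiv i
  have hadd := energy_add_le (h.stokesOp μ p i) (hgrad.const_mul μ)
  rw [energy_const_mul _ hgrad] at hadd
  refine hadd.trans ?_
  rw [mul_assoc, one_add_mul]
  gcongr
  · exact energy_stokesOp_le_dataEnergy i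
  · exact (energy_hderiv_le i h.hdiv).trans energy_hdiv_le_dataEnergy

lemma quarter_energy_tangential_pressure_le (hp : 0 < p) (h : StokesAdmissible 0 v q) (τ : Fin d) :
    p / 4 * energy 0 (∂[τ.succ] q)
      ≤ p * pairing (∂[τ.succ] q) (∂[τ.succ] (dilationTest q))
        - pairing (fun x => stokesOp μ p v q τ.succ x + μ * ∂[τ.succ] (hdiv v) x)
            (∂[τ.succ] (dilationTest q))
        + 5 / p * (1 + μ ^ 2) * dataEnergy μ p 0 v q := by
  have hmain := mul_le_mul_of_nonneg_left (half_energy_le_pairing_dilationTest h.pressure τ) hp.le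
  have htest := energy_hderiv_dilationTest_le (c := 1)
    (by rw [normalDilation_stdVec_succ τ, one_smul]) h.pressure
  have hyoung := le_of_abs_le (abs_pairing_le_young (h.pressure.dilationTest.hderiv τ.succ)
    ((h.stokesOp μ p τ.succ).add ((h.hdiv.hderiv τ.succ).const_mul μ)) (δ := p / 10)
    (by positivity))
  have hdata := mul_le_mul_of_nonneg_left
    (energy_stokesOp_add_grad_hdiv_le (μ := μ) (p := p) h τ.succ)
    (by positivity : 0 ≤ (4 * (p / 10))⁻¹)
  have hconst : (4 * (p / 10))⁻¹ * (2 * (1 + μ ^ 2) * dataEnergy μ p 0 v q)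
      = 5 / p * (1 + μ ^ 2) * dataEnergy μ p 0 v q := by
    field_simp
    ring
  rw [pairing_comm] at hyoung
  linarith [mul_le_mul_of_nonneg_left htest (by positivity : 0 ≤ p / 10)]

lemma pairing_normal_dilationTest_le (hp : 0 < p) (h : StokesAdmissible 0 v q) :
    pairing (fun x => stokesOp μ p v q 0 x + μ * ∂[0] (hdiv v) x) (∂[0] (dilationTest q))
        - p * pairing (∂[0] q) (∂[0] (dilationTest q))
      ≤ p * (27 / 2 * energy 0 (∂[0] q)) + 5 / p * (1 + μ ^ 2) * dataEnergy μ p 0 v q := by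
  have hdil := h.pressure.dilationTest.hderiv 0
  have htest := energy_hderiv_dilationTest_le normalDilation_stdVec_zero h.pressure
  have hgrad := neg_le_of_abs_le (abs_pairing_le_young (h.pressure.hderiv 0) hdil one_pos)
  have hyoung := le_of_abs_le (abs_pairing_le_young hdil
    ((h.stokesOp μ p 0).add ((h.hdiv.hderiv 0).const_mul μ)) hp)
  have hdata := mul_le_mul_of_nonneg_left
    (energy_stokesOp_add_grad_hdiv_le (μ := μ) (p := p) h 0) (by positivity : 0 ≤ (4 * p)⁻¹)
  have hconst : (4 * p)⁻¹ * (2 * (1 + μ ^ 2) * dataEnergy μ p 0 v q)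
      ≤ 5 / p * (1 + μ ^ 2) * dataEnergy μ p 0 v q := by
    have hslack : 0 ≤ (1 + μ ^ 2) * dataEnergy μ p 0 v q / p :=
      div_nonneg (mul_nonneg (by positivity) (dataEnergy_nonneg _ _ _ _ _)) hp.le
    calc _ = (1 + μ ^ 2) * dataEnergy μ p 0 v q / p / 2 := by field_simp; norm_num
      _ ≤ 5 * ((1 + μ ^ 2) * dataEnergy μ p 0 v q / p) := by linarith
      _ = _ := by ring
  rw [pairing_comm] at hyoung
  linarith [mul_le_mul_of_nonneg_left hgrad hp.le, mul_le_mul_of_nonneg_left htest hp.le]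

lemma tangentialEnergy_pressure_le (hp : 0 < p) (h : StokesAdmissible 0 v q) :
    p / 4 * tangentialEnergy 0 q ≤ p * (27 / 2 * energy 0 (∂[0] q))
      + (d + 1) * (5 / p * (1 + μ ^ 2) * dataEnergy μ p 0 v q) := by
  have hweak := sum_pairing_hderiv_pressure (μ := μ) (p := p) h h.pressure.dilationTest
    fun _ => dilationTest_eq_zero
  rw [Fin.sum_univ_succ, Fin.sum_univ_succ] at hweak
  have htangential := Finset.sum_le_sum fun (τ : Fin d) (_ : τ ∈ Finset.univ) =>
    quarter_energy_tangential_pressure_le (μ := μ) hp h τ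
  rw [← Finset.mul_sum, Finset.sum_add_distrib, Finset.sum_sub_distrib, ← Finset.mul_sum,
    Finset.sum_const, Finset.card_univ, Fintype.card_fin, nsmul_eq_mul] at htangential
  rw [tangentialEnergy]
  linarith [pairing_normal_dilationTest_le (μ := μ) hp h]

/-! ### The estimate on the half-space -/

lemma exists_solutionEnergy_zero_le_dataEnergy (hμ : 0 < μ) (hp : 0 < p) : ∃ C : ℝ, 0 < C ∧
    ∀ (v : Fin (d + 1) → Space d → ℝ) q, StokesAdmissible 0 v q →
      solutionEnergy 0 v q ≤ C * dataEnergy μ p 0 v q := by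
  set Cy : ℝ := (2 + 4 * μ ^ 2 * (d + 1) ^ 2) / p ^ 2
  set K : ℝ := 20 * (d + 1) / p ^ 2 * (1 + μ ^ 2)
  have hCy : 0 < Cy := by positivity
  have : 0 < K := by positivity
  obtain ⟨Ct, hCt, htangential⟩ := exists_sum_tangentialEnergy_le (d := d) hμ hp
    (δ := 1 / (108 * Cy)) (by positivity)
  obtain ⟨Cs, hCs, hsolution⟩ := exists_solutionEnergy_le (d := d) hμ hp
  set Cz : ℝ := 2 * (54 * Cy * (1 + Ct) + K)
  refine ⟨Cs * (1 + (1 / (108 * Cy) * Cz + Ct) + Cz), by positivity, fun v q h => ?_⟩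
  set D := dataEnergy μ p 0 v q
  have hnormal : energy 0 (∂[0] q) ≤ Cy * (D + ∑ i, tangentialEnergy 1 (v i)) := by
    rw [div_mul_eq_mul_div, le_div_iff₀' (by positivity)]
    exact energy_normal_pressure_le h
  have hpressure : tangentialEnergy 0 q ≤ 54 * energy 0 (∂[0] q) + K * D := by
    have hscaled := mul_le_mul_of_nonneg_left (tangentialEnergy_pressure_le (μ := μ) hp h)
      (by positivity : 0 ≤ 4 / p)
    calc tangentialEnergy 0 q = 4 / p * (p / 4 * tangentialEnergy 0 q) := by field_simp
      _ ≤ _ := hscaled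
      _ = _ := by simp only [K, D]; field_simp; ring
  have hvelocity := htangential v q h
  have habsorbed : tangentialEnergy 0 q ≤ Cz * D := by
    have habsorb : 54 * Cy * (1 / (108 * Cy) * tangentialEnergy 0 q)
        = tangentialEnergy 0 q / 2 := by
      field_simp
      ring
    linarith [mul_le_mul_of_nonneg_left hvelocity hCy.le]
  refine (hsolution 0 v q h).trans ?_
  rw [mul_assoc]
  gcongr
  linarith [mul_le_mul_of_nonneg_left habsorbed (by positivity : 0 ≤ 1 / (108 * Cy))]

lemma dataEnergy_tangential_le (h : StokesAdmissible (n + 1) v q) (τ : Fin d) :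
    dataEnergy μ p n (fun i => ∂[τ.succ] (v i)) (∂[τ.succ] q) ≤ dataEnergy μ p (n + 1) v q := by
  refine add_le_add ?_ (Finset.sum_le_sum fun i _ => ?_)
  · rw [← energy_congr (hderiv_hdiv h.velocity τ.succ)]
    exact energy_hderiv_le _ h.hdiv
  · rw [← energy_congr (hderiv_stokesOp h τ.succ i)]
    exact energy_hderiv_le _ (h.stokesOp μ p i)

lemma sum_solutionEnergy_tangential (n : ℕ) (v : Fin (d + 1) → Space d → ℝ) (q : Space d → ℝ) :
    ∑ τ : Fin d, solutionEnergy n (fun i => ∂[τ.succ] (v i)) (∂[τ.succ] q)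
      = ∑ i, tangentialEnergy (n + 2) (v i) + tangentialEnergy (n + 1) q := by
  simp only [solutionEnergy, tangentialEnergy, Finset.sum_add_distrib]
  rw [Finset.sum_comm]

theorem exists_solutionEnergy_le_dataEnergy (hμ : 0 < μ) (hp : 0 < p) (n : ℕ) : ∃ C : ℝ, 0 < C ∧
    ∀ (v : Fin (d + 1) → Space d → ℝ) q, StokesAdmissible n v q →
      solutionEnergy n v q ≤ C * dataEnergy μ p n v q := by
  induction n with
  | zero => exact exists_solutionEnergy_zero_le_dataEnergy hμ hp
  | succ n ih =>
    obtain ⟨C, hC, hestimate⟩ := ih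
    obtain ⟨Cs, hCs, hsolution⟩ := exists_solutionEnergy_le (d := d) hμ hp
    -- The tangential derivatives of the pair solve the Stokes problem with differentiated data.
    refine ⟨Cs * (1 + d * C), by positivity, fun v q h => (hsolution (n + 1) v q h).trans ?_⟩
    have htangential : ∑ τ : Fin d, solutionEnergy n (fun i => ∂[τ.succ] (v i)) (∂[τ.succ] q)
        ≤ d * (C * dataEnergy μ p (n + 1) v q) := by
      have hterm (τ : Fin d) : solutionEnergy n (fun i => ∂[τ.succ] (v i)) (∂[τ.succ] q)
          ≤ C * dataEnergy μ p (n + 1) v q :=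
        (hestimate _ _ (h.tangential τ)).trans
          (mul_le_mul_of_nonneg_left (dataEnergy_tangential_le h τ) hC.le)
      simpa using Finset.sum_le_card_nsmul Finset.univ _ _ fun τ _ => hterm τ
    rw [sum_solutionEnergy_tangential] at htangential
    rw [mul_assoc]
    gcongr
    linarith

end Stokes

/-! ## Flat perturbations of the Stokes system -/

/-- The squared `H^n` norm on the half-space. -/
def sobolevEnergy (n : ℕ) (f : Space d → ℝ) : ℝ := ∑ j ∈ Finset.range (n + 1), energy j f

/-- The sum of the energies of orders `1, …, n + 1`. -/
def gradientEnergy (n : ℕ) (f : Space d → ℝ) : ℝ := ∑ j ∈ Finset.range (n + 1), energy (j + 1) f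

/-- Multipliers whose derivatives up to order `K` are bounded by `ε`. -/
def SmallMultiplier (K : ℕ) (ε : ℝ) (m : Space d → ℝ) : Prop :=
  ContDiffOn ℝ K m (halfSpace d) ∧ ∀ j ≤ K, ∀ x ∈ halfSpace d, jetNorm j m x ≤ ε

/-- A constant for the product estimate in `H^n`. -/
def productConst (n : ℕ) : ℝ := 4 ^ n * (n + 1) ^ 2

lemma sobolevEnergy_nonneg (n : ℕ) (f : Space d → ℝ) : 0 ≤ sobolevEnergy n f :=
  Finset.sum_nonneg fun _ _ => energy_nonneg _ _

lemma gradientEnergy_nonneg (n : ℕ) (f : Space d → ℝ) : 0 ≤ gradientEnergy n f :=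
  Finset.sum_nonneg fun _ _ => energy_nonneg _ _

lemma sobolevEnergy_congr (h : EqOn f g (halfSpace d)) : sobolevEnergy n f = sobolevEnergy n g :=
  Finset.sum_congr rfl fun _ _ => energy_congr h

lemma sobolevEnergy_mono {m : ℕ} (hm : m ≤ n) (f : Space d → ℝ) :
    sobolevEnergy m f ≤ sobolevEnergy n f :=
  Finset.sum_le_sum_of_subset_of_nonneg (Finset.range_mono (by lia)) fun _ _ _ => energy_nonneg _ _

lemma sobolevEnergy_add_le (hf : SobolevReg n f) (hg : SobolevReg n g) :
    sobolevEnergy n (fun x => f x + g x) ≤ 2 * (sobolevEnergy n f + sobolevEnergy n g) := by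
  simp only [sobolevEnergy, ← Finset.sum_add_distrib, Finset.mul_sum]
  refine Finset.sum_le_sum fun j hj => ?_
  have hjn := Finset.mem_range_succ_iff.1 hj
  exact energy_add_le (hf.mono hjn) (hg.mono hjn)

lemma sobolevEnergy_sub_le (hf : SobolevReg n f) (hg : SobolevReg n g) :
    sobolevEnergy n (fun x => f x - g x) ≤ 2 * (sobolevEnergy n f + sobolevEnergy n g) := by
  simp only [sobolevEnergy, ← Finset.sum_add_distrib, Finset.mul_sum]
  refine Finset.sum_le_sum fun j hj => ?_
  have hjn := Finset.mem_range_succ_iff.1 hj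
  exact energy_sub_le (hf.mono hjn) (hg.mono hjn)

lemma sobolevEnergy_const_mul (c : ℝ) (hf : SobolevReg n f) :
    sobolevEnergy n (fun x => c * f x) = c ^ 2 * sobolevEnergy n f := by
  rw [sobolevEnergy, sobolevEnergy, Finset.mul_sum]
  exact Finset.sum_congr rfl fun j hj =>
    energy_const_mul c (hf.mono (Finset.mem_range_succ_iff.1 hj))

lemma sobolevEnergy_sum_le {ι : Type*} [Fintype ι] {F : ι → Space d → ℝ}
    (hF : ∀ i, SobolevReg n (F i)) :
    sobolevEnergy n (fun x => ∑ i, F i x) ≤ Fintype.card ι * ∑ i, sobolevEnergy n (F i) := by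
  simp only [sobolevEnergy]
  rw [Finset.sum_comm, Finset.mul_sum]
  exact Finset.sum_le_sum fun j hj =>
    energy_sum_le fun i => (hF i).mono (Finset.mem_range_succ_iff.1 hj)

lemma sobolevEnergy_hderiv_le_gradientEnergy (i : Fin (d + 1)) (hf : SobolevReg (n + 1) f) :
    sobolevEnergy n (∂[i] f) ≤ gradientEnergy n f :=
  Finset.sum_le_sum fun _ hj =>
    energy_hderiv_le i (hf.mono (Nat.succ_le_succ (Finset.mem_range_succ_iff.1 hj)))

lemma gradientEnergy_le_sobolevEnergy (n : ℕ) (f : Space d → ℝ) :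
    gradientEnergy n f ≤ sobolevEnergy (n + 1) f := by
  rw [sobolevEnergy, Finset.sum_range_succ' _ (n + 1)]
  exact le_add_of_nonneg_right (energy_nonneg _ _)

lemma productConst_mono {m : ℕ} (h : m ≤ n) : productConst m ≤ productConst n := by
  rw [productConst, productConst]
  gcongr
  norm_num

lemma one_le_productConst (n : ℕ) : 1 ≤ productConst n := by
  simpa [productConst] using productConst_mono n.zero_le

namespace SmallMultiplier

variable {K : ℕ} {ε : ℝ} {m : Space d → ℝ}

lemma mono {j : ℕ} (hm : SmallMultiplier K ε m) (hj : j ≤ K) : SmallMultiplier j ε m :=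
  ⟨hm.1.of_le (by exact_mod_cast hj), fun i hi => hm.2 i (hi.trans hj)⟩

lemma jetNorm_mul_le (hm : SmallMultiplier n ε m) (hf : ContDiffOn ℝ n f (halfSpace d))
    (hx : x ∈ halfSpace d) : jetNorm n (fun y => m y * f y) x
      ≤ 2 ^ n * ε * ∑ j ∈ Finset.range (n + 1), jetNorm j f x := by
  refine (norm_iteratedFDerivWithin_mul_le (A := ℝ) hm.1 hf uniqueDiffOn_halfSpace hx
    (n := n) le_rfl).trans ?_
  rw [← Finset.sum_range_reflect fun j => jetNorm j f x, Finset.mul_sum]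
  refine Finset.sum_le_sum fun i hi => ?_
  rw [Nat.add_sub_cancel]
  have hchoose : (n.choose i : ℝ) ≤ 2 ^ n := by exact_mod_cast Nat.choose_le_two_pow n i
  have hmi := hm.2 i (Finset.mem_range_succ_iff.1 hi) x hx
  exact mul_le_mul_of_nonneg_right
    (mul_le_mul hchoose hmi (jetNorm_nonneg _ _ _) (by positivity)) (jetNorm_nonneg _ _ _)

lemma jetNorm_mul_sq_le (hm : SmallMultiplier n ε m) (hf : ContDiffOn ℝ n f (halfSpace d))
    (hx : x ∈ halfSpace d) : jetNorm n (fun y => m y * f y) x ^ 2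
      ≤ 4 ^ n * (n + 1) * ε ^ 2 * ∑ j ∈ Finset.range (n + 1), jetNorm j f x ^ 2 := by
  have hcauchy := sq_sum_le_card_mul_sum_sq (s := Finset.range (n + 1))
    (f := fun j => jetNorm j f x)
  rw [Finset.card_range, Nat.cast_add_one] at hcauchy
  calc jetNorm n (fun y => m y * f y) x ^ 2
      ≤ (2 ^ n * ε * ∑ j ∈ Finset.range (n + 1), jetNorm j f x) ^ 2 :=
        pow_le_pow_left₀ (jetNorm_nonneg _ _ _) (hm.jetNorm_mul_le hf hx) 2
    _ = 4 ^ n * ε ^ 2 * (∑ j ∈ Finset.range (n + 1), jetNorm j f x) ^ 2 := by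
        rw [mul_pow, mul_pow, ← pow_mul, mul_comm n 2, pow_mul]
        norm_num
    _ ≤ 4 ^ n * ε ^ 2 * ((n + 1) * ∑ j ∈ Finset.range (n + 1), jetNorm j f x ^ 2) := by gcongr
    _ = _ := by ring

lemma sobolevReg_mul (hm : SmallMultiplier n ε m) (hf : SobolevReg n f) :
    SobolevReg n fun y => m y * f y := by
  have hcont : ContDiffOn ℝ n (fun y => m y * f y) (halfSpace d) := hm.1.mul hf.1
  refine ⟨hcont, fun j hj => integrableOn_jetNorm_sq_of_le hcont hj ?_
    fun x hx => (hm.mono hj).jetNorm_mul_sq_le (hf.mono hj).1 hx⟩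
  exact (integrable_finsetSum _ fun i hi =>
    hf.2 i ((Finset.mem_range_succ_iff.1 hi).trans hj)).const_mul _

lemma energy_mul_le (hm : SmallMultiplier n ε m) (hf : SobolevReg n f) :
    energy n (fun y => m y * f y) ≤ 4 ^ n * (n + 1) * ε ^ 2 * sobolevEnergy n f := by
  have hInt : ∀ i ∈ Finset.range (n + 1), IntegrableOn (fun x => jetNorm i f x ^ 2) (halfSpace d) :=
    fun i hi => hf.2 i (Finset.mem_range_succ_iff.1 hi)
  refine (energy_le_integral ((integrable_finsetSum _ hInt).const_mul _)
    fun x hx => hm.jetNorm_mul_sq_le hf.1 hx).trans_eq ?_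
  rw [integral_const_mul, integral_finsetSum _ hInt]
  rfl

lemma sobolevEnergy_mul_le (hm : SmallMultiplier n ε m) (hf : SobolevReg n f) :
    sobolevEnergy n (fun y => m y * f y) ≤ productConst n * ε ^ 2 * sobolevEnergy n f := by
  have hterm : ∀ j ∈ Finset.range (n + 1), energy j (fun y => m y * f y)
      ≤ 4 ^ n * (n + 1) * ε ^ 2 * sobolevEnergy n f := fun j hj => by
    have hjn := Finset.mem_range_succ_iff.1 hj
    refine ((hm.mono hjn).energy_mul_le (hf.mono hjn)).trans ?_
    have := sobolevEnergy_mono hjn f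
    have := sobolevEnergy_nonneg j f
    gcongr
    norm_num
  refine (Finset.sum_le_card_nsmul _ _ _ hterm).trans_eq ?_
  rw [Finset.card_range, nsmul_eq_mul, productConst, Nat.cast_add_one]
  ring

end SmallMultiplier

/-- The derivative `∂ᵢ - mᵢ ∂₀`. When `m` is the gradient of a function of the tangential variables
this is `∂ᵢ` in the coordinates that flatten its graph. -/
def shearDeriv (m : Fin (d + 1) → Space d → ℝ) (i : Fin (d + 1)) (f : Space d → ℝ)
    (x : Space d) : ℝ :=
  ∂[i] f x - m i x * ∂[0] f x

/-- The divergence with respect to `shearDeriv m`. -/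
def shearDiv (m v : Fin (d + 1) → Space d → ℝ) (x : Space d) : ℝ := ∑ i, shearDeriv m i (v i) x

/-- The Stokes operator with respect to `shearDeriv m`. -/
def shearStokesOp (m : Fin (d + 1) → Space d → ℝ) (μ p : ℝ) (v : Fin (d + 1) → Space d → ℝ)
    (q : Space d → ℝ) (i : Fin (d + 1)) (x : Space d) : ℝ :=
  -μ * ∑ j, shearDeriv m j (shearDeriv m j (v i)) x + p * shearDeriv m i q x

/-- The energies of all orders from `1` to `k + 2` of the velocity and from `1` to `k + 1` of the
pressure. -/
def totalEnergy (k : ℕ) (v : Fin (d + 1) → Space d → ℝ) (q : Space d → ℝ) : ℝ :=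
  ∑ i, gradientEnergy (k + 1) (v i) + gradientEnergy k q

/-- The squared norms of the data of the perturbed Stokes system. -/
def shearDataEnergy (m : Fin (d + 1) → Space d → ℝ) (μ p : ℝ) (k : ℕ)
    (v : Fin (d + 1) → Space d → ℝ) (q : Space d → ℝ) : ℝ :=
  sobolevEnergy (k + 1) (shearDiv m v) + ∑ i, sobolevEnergy k (shearStokesOp m μ p v q i)

section Perturbation

variable {k : ℕ} {ε μ p : ℝ} {m v : Fin (d + 1) → Space d → ℝ} {q : Space d → ℝ}

lemma SobolevReg.shearDeriv (hf : SobolevReg (n + 1) f) (hm : ∀ i, SmallMultiplier n ε (m i))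
    (i : Fin (d + 1)) : SobolevReg n (shearDeriv m i f) :=
  (hf.hderiv i).sub ((hm i).sobolevReg_mul (hf.hderiv 0))

lemma SobolevReg.shearDeriv_shearDeriv (hf : SobolevReg (n + 2) f)
    (hm : ∀ i, SmallMultiplier (n + 1) ε (m i)) (i j : Fin (d + 1)) :
    SobolevReg n (_root_.shearDeriv m i (_root_.shearDeriv m j f)) :=
  (hf.shearDeriv hm j).shearDeriv (fun i => (hm i).mono n.le_succ) i

lemma StokesAdmissible.shearStokesOp (h : StokesAdmissible k v q)
    (hm : ∀ i, SmallMultiplier (k + 1) ε (m i)) (μ p : ℝ) (i : Fin (d + 1)) :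
    SobolevReg k (shearStokesOp m μ p v q i) :=
  ((SobolevReg.sum fun j => (h.velocity i).shearDeriv_shearDeriv hm j j).const_mul (-μ)).add
    ((h.pressure.shearDeriv (fun i => (hm i).mono k.le_succ) i).const_mul p)

lemma sobolevEnergy_mul_hderiv_le {m : Space d → ℝ} (hm : SmallMultiplier n ε m)
    (hf : SobolevReg (n + 1) f) : sobolevEnergy n (fun x => m x * ∂[0] f x)
      ≤ productConst n * ε ^ 2 * gradientEnergy n f := by
  refine (hm.sobolevEnergy_mul_le (hf.hderiv 0)).trans ?_
  have := one_le_productConst n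
  gcongr
  exact sobolevEnergy_hderiv_le_gradientEnergy 0 hf

lemma sobolevEnergy_shearDeriv_le (hm : ∀ i, SmallMultiplier n ε (m i)) (hε : ε ^ 2 ≤ 1)
    (hf : SobolevReg (n + 1) f) (i : Fin (d + 1)) :
    sobolevEnergy n (shearDeriv m i f) ≤ 4 * productConst n * gradientEnergy n f := by
  have hG := gradientEnergy_nonneg n f
  have hc := one_le_productConst n
  have hmul : sobolevEnergy n (fun x => m i x * ∂[0] f x)
      ≤ productConst n * gradientEnergy n f := by
    refine (sobolevEnergy_mul_hderiv_le (hm i) hf).trans ?_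
    gcongr
    exact mul_le_of_le_one_right (by positivity) hε
  calc sobolevEnergy n (shearDeriv m i f)
      ≤ 2 * (sobolevEnergy n (∂[i] f) + sobolevEnergy n (fun x => m i x * ∂[0] f x)) :=
        sobolevEnergy_sub_le (hf.hderiv i) ((hm i).sobolevReg_mul (hf.hderiv 0))
    _ ≤ 2 * (productConst n * gradientEnergy n f + productConst n * gradientEnergy n f) := by
        gcongr
        exact (sobolevEnergy_hderiv_le_gradientEnergy i hf).trans (le_mul_of_one_le_left hG hc)
    _ = _ := by ring

lemma sub_shearDeriv_shearDeriv_eqOn (hm : SmallMultiplier (n + 1) ε (m j))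
    (hf : SobolevReg (n + 2) f) :
    EqOn (fun x => ∂[j] (∂[j] f) x - shearDeriv m j (shearDeriv m j f) x)
      (fun x => ∂[j] (fun y => m j y * ∂[0] f y) x + m j x * ∂[0] (shearDeriv m j f) x)
      (halfSpace d) := fun x hx => by
  have hsub : ∂[j] (shearDeriv m j f) x = ∂[j] (∂[j] f) x - ∂[j] (fun y => m j y * ∂[0] f y) x :=
    hderiv_sub (hf.hderiv j).contDiffOn_one (hm.sobolevReg_mul (hf.hderiv 0)).contDiffOn_one hx
  change ∂[j] (∂[j] f) x - (∂[j] (shearDeriv m j f) x - m j x * ∂[0] (shearDeriv m j f) x) = _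
  rw [hsub]
  ring

lemma sobolevEnergy_sub_shearDeriv_shearDeriv_le (hm : ∀ i, SmallMultiplier (n + 1) ε (m i))
    (hε : ε ^ 2 ≤ 1) (hf : SobolevReg (n + 2) f) (j : Fin (d + 1)) :
    sobolevEnergy n (fun x => ∂[j] (∂[j] f) x - shearDeriv m j (shearDeriv m j f) x)
      ≤ 10 * productConst (n + 1) ^ 2 * ε ^ 2 * gradientEnergy (n + 1) f := by
  have hc := one_le_productConst (n + 1)
  have hG := gradientEnergy_nonneg (n + 1) f
  have hprod := (hm j).sobolevReg_mul (hf.hderiv 0)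
  have hshear := hf.shearDeriv hm j
  have hfirst : sobolevEnergy n (∂[j] fun y => m j y * ∂[0] f y)
      ≤ productConst (n + 1) ^ 2 * ε ^ 2 * gradientEnergy (n + 1) f := by
    refine (sobolevEnergy_hderiv_le_gradientEnergy j hprod).trans
      ((gradientEnergy_le_sobolevEnergy _ _).trans
        ((sobolevEnergy_mul_hderiv_le (hm j) hf).trans ?_))
    gcongr
    exact le_self_pow₀ hc two_ne_zero
  have hsecond : sobolevEnergy n (fun x => m j x * ∂[0] (shearDeriv m j f) x)
      ≤ 4 * productConst (n + 1) ^ 2 * ε ^ 2 * gradientEnergy (n + 1) f := by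
    calc sobolevEnergy n (fun x => m j x * ∂[0] (shearDeriv m j f) x)
        ≤ productConst n * ε ^ 2 * gradientEnergy n (shearDeriv m j f) :=
          sobolevEnergy_mul_hderiv_le ((hm j).mono n.le_succ) hshear
      _ ≤ productConst (n + 1) * ε ^ 2 * (4 * productConst (n + 1) * gradientEnergy (n + 1) f) := by
          have := gradientEnergy_nonneg n (shearDeriv m j f)
          gcongr
          · exact productConst_mono n.le_succ
          · exact (gradientEnergy_le_sobolevEnergy _ _).trans
              (sobolevEnergy_shearDeriv_le hm hε hf j)
      _ = _ := by ring
  rw [sobolevEnergy_congr (sub_shearDeriv_shearDeriv_eqOn (hm j) hf)]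
  refine (sobolevEnergy_add_le (hprod.hderiv j)
    (((hm j).mono n.le_succ).sobolevReg_mul (hshear.hderiv 0))).trans ?_
  linarith

lemma sobolevEnergy_hdiv_le (h : StokesAdmissible k v q)
    (hm : ∀ i, SmallMultiplier (k + 1) ε (m i)) :
    sobolevEnergy (k + 1) (hdiv v) ≤ 2 * sobolevEnergy (k + 1) (shearDiv m v)
      + 2 * (d + 1) * productConst (k + 1) * ε ^ 2 * ∑ i, gradientEnergy (k + 1) (v i) := by
  have heq : EqOn (hdiv v) (fun x => shearDiv m v x + ∑ i, m i x * ∂[0] (v i) x) (halfSpace d) :=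
    fun x _ => by
      simp only [hdiv, shearDiv, shearDeriv, Finset.sum_sub_distrib, sub_add_cancel]
  have hprod (i) := (hm i).sobolevReg_mul ((h.velocity i).hderiv 0)
  rw [sobolevEnergy_congr heq]
  refine (sobolevEnergy_add_le (SobolevReg.sum fun i => (h.velocity i).shearDeriv hm i)
    (SobolevReg.sum hprod)).trans ?_
  have hdefect : sobolevEnergy (k + 1) (fun x => ∑ i, m i x * ∂[0] (v i) x)
      ≤ (d + 1) * (productConst (k + 1) * ε ^ 2 * ∑ i, gradientEnergy (k + 1) (v i)) := by
    refine (sobolevEnergy_sum_le hprod).trans ?_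
    rw [Fintype.card_fin, Nat.cast_add_one, Finset.mul_sum _ _ (_ * _)]
    gcongr with i
    exact sobolevEnergy_mul_hderiv_le (hm i) (h.velocity i)
  change 2 * (sobolevEnergy (k + 1) (shearDiv m v) + _) ≤ _
  linarith

lemma sobolevEnergy_hlap_sub_le (hm : ∀ i, SmallMultiplier (n + 1) ε (m i))
    (hε : ε ^ 2 ≤ 1) (hf : SobolevReg (n + 2) f) :
    sobolevEnergy n (fun x => ∑ j, (∂[j] (∂[j] f) x - shearDeriv m j (shearDeriv m j f) x))
      ≤ 10 * (d + 1) ^ 2 * productConst (n + 1) ^ 2 * ε ^ 2 * gradientEnergy (n + 1) f := by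
  refine (sobolevEnergy_sum_le fun j =>
    ((hf.hderiv j).hderiv j).sub (hf.shearDeriv_shearDeriv hm j j)).trans ?_
  have hsum := Finset.sum_le_sum fun (j : Fin (d + 1)) (_ : j ∈ Finset.univ) =>
    sobolevEnergy_sub_shearDeriv_shearDeriv_le hm hε hf j
  rw [Finset.sum_const, Finset.card_univ, Fintype.card_fin, nsmul_eq_mul] at hsum
  rw [Fintype.card_fin]
  refine (mul_le_mul_of_nonneg_left hsum (by positivity)).trans_eq ?_
  push_cast
  ring

lemma totalEnergy_nonneg (k : ℕ) (v : Fin (d + 1) → Space d → ℝ) (q : Space d → ℝ) :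
    0 ≤ totalEnergy k v q :=
  add_nonneg (Finset.sum_nonneg fun _ _ => gradientEnergy_nonneg _ _) (gradientEnergy_nonneg _ _)

lemma shearDataEnergy_nonneg (m : Fin (d + 1) → Space d → ℝ) (μ p : ℝ) (k : ℕ)
    (v : Fin (d + 1) → Space d → ℝ) (q : Space d → ℝ) : 0 ≤ shearDataEnergy m μ p k v q :=
  add_nonneg (sobolevEnergy_nonneg _ _) (Finset.sum_nonneg fun _ _ => sobolevEnergy_nonneg _ _)

lemma sum_gradientEnergy_velocity_le :
    ∑ i, gradientEnergy (k + 1) (v i) ≤ totalEnergy k v q :=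
  le_add_of_nonneg_right (gradientEnergy_nonneg _ _)

lemma gradientEnergy_pressure_le : gradientEnergy k q ≤ totalEnergy k v q :=
  le_add_of_nonneg_left (Finset.sum_nonneg fun _ _ => gradientEnergy_nonneg _ _)

lemma totalEnergy_eq (k : ℕ) (v : Fin (d + 1) → Space d → ℝ) (q : Space d → ℝ) :
    totalEnergy k v q
      = ∑ n ∈ Finset.range (k + 1), solutionEnergy n v q + ∑ i, energy 1 (v i) := by
  simp only [totalEnergy, gradientEnergy, solutionEnergy, Finset.sum_add_distrib]
  rw [Finset.sum_comm (s := Finset.range (k + 1))]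
  simp only [Finset.sum_range_succ' _ (k + 1), Finset.sum_add_distrib]
  ring

lemma sum_dataEnergy_le (μ p : ℝ) (k : ℕ) (v : Fin (d + 1) → Space d → ℝ) (q : Space d → ℝ) :
    ∑ n ∈ Finset.range (k + 1), dataEnergy μ p n v q
      ≤ sobolevEnergy (k + 1) (hdiv v) + ∑ i, sobolevEnergy k (stokesOp μ p v q i) := by
  simp only [dataEnergy, Finset.sum_add_distrib]
  rw [Finset.sum_comm (s := Finset.range (k + 1))]
  exact add_le_add_left (gradientEnergy_le_sobolevEnergy k (hdiv v)) _

lemma stokesOp_eq_shearStokesOp_add (m v : Fin (d + 1) → Space d → ℝ) (q : Space d → ℝ)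
    (i : Fin (d + 1)) (x : Space d) : stokesOp μ p v q i x = shearStokesOp m μ p v q i x
      + (-μ * (∑ j, (∂[j] (∂[j] (v i)) x - shearDeriv m j (shearDeriv m j (v i)) x))
        + p * (m i x * ∂[0] q x)) := by
  simp only [stokesOp, shearStokesOp, hlap, Finset.sum_sub_distrib]
  rw [show shearDeriv m i q x = ∂[i] q x - m i x * ∂[0] q x from rfl]
  ring

lemma sobolevEnergy_stokesOp_le (h : StokesAdmissible k v q)
    (hm : ∀ i, SmallMultiplier (k + 1) ε (m i)) (hε : ε ^ 2 ≤ 1) (i : Fin (d + 1)) :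
    sobolevEnergy k (stokesOp μ p v q i) ≤ 2 * sobolevEnergy k (shearStokesOp m μ p v q i)
      + 40 * (d + 1) ^ 2 * productConst (k + 1) ^ 2 * (μ ^ 2 + p ^ 2) * ε ^ 2
        * totalEnergy k v q := by
  have hc := one_le_productConst (k + 1)
  have hlapDefect : SobolevReg k fun x =>
      ∑ j, (∂[j] (∂[j] (v i)) x - shearDeriv m j (shearDeriv m j (v i)) x) :=
    SobolevReg.sum fun j =>
      (((h.velocity i).hderiv j).hderiv j).sub ((h.velocity i).shearDeriv_shearDeriv hm j j)
  have hgradDefect := ((hm i).mono k.le_succ).sobolevReg_mul (h.pressure.hderiv 0)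
  set X := 10 * (d + 1) ^ 2 * productConst (k + 1) ^ 2 * ε ^ 2 * totalEnergy k v q with hX
  have hlap : sobolevEnergy k (fun x =>
      ∑ j, (∂[j] (∂[j] (v i)) x - shearDeriv m j (shearDeriv m j (v i)) x)) ≤ X := by
    refine (sobolevEnergy_hlap_sub_le hm hε (h.velocity i)).trans
      (mul_le_mul_of_nonneg_left ?_ (by positivity))
    exact (Finset.single_le_sum (f := fun i => gradientEnergy (k + 1) (v i))
      (fun _ _ => gradientEnergy_nonneg _ _) (Finset.mem_univ i)).trans
        sum_gradientEnergy_velocity_le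
  have hgrad : sobolevEnergy k (fun x => m i x * ∂[0] q x) ≤ X := by
    refine (sobolevEnergy_mul_hderiv_le ((hm i).mono k.le_succ) h.pressure).trans ?_
    rw [hX]
    gcongr
    · exact gradientEnergy_nonneg _ _
    · refine (productConst_mono k.le_succ).trans
        ((le_self_pow₀ hc two_ne_zero).trans (le_mul_of_one_le_left (by positivity) ?_))
      nlinarith [d.cast_nonneg (α := ℝ)]
    · exact gradientEnergy_pressure_le
  have hdefect := sobolevEnergy_add_le (hlapDefect.const_mul (-μ)) (hgradDefect.const_mul p)
  rw [sobolevEnergy_const_mul _ hlapDefect, sobolevEnergy_const_mul _ hgradDefect,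
    neg_sq] at hdefect
  rw [sobolevEnergy_congr fun x _ => stokesOp_eq_shearStokesOp_add m v q i x]
  refine (sobolevEnergy_add_le (h.shearStokesOp hm μ p i)
    ((hlapDefect.const_mul (-μ)).add (hgradDefect.const_mul p))).trans ?_
  linarith [mul_le_mul_of_nonneg_left hlap (sq_nonneg μ),
    mul_le_mul_of_nonneg_left hgrad (sq_nonneg p)]

lemma exists_sum_dataEnergy_le_shearDataEnergy (d k : ℕ) (μ p : ℝ) : ∃ R : ℝ, 0 < R ∧
    ∀ ε : ℝ, ε ^ 2 ≤ 1 → ∀ m : Fin (d + 1) → Space d → ℝ,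
      (∀ i, SmallMultiplier (k + 1) ε (m i)) → ∀ v q, StokesAdmissible k v q →
        ∑ n ∈ Finset.range (k + 1), dataEnergy μ p n v q
          ≤ 2 * shearDataEnergy m μ p k v q + R * ε ^ 2 * totalEnergy k v q := by
  set c := productConst (k + 1)
  have hc : 1 ≤ c := one_le_productConst _
  refine ⟨2 * (d + 1) * c + (d + 1) * (40 * (d + 1) ^ 2 * c ^ 2 * (μ ^ 2 + p ^ 2)), by positivity,
    fun ε hε m hm v q h => (sum_dataEnergy_le μ p k v q).trans ?_⟩
  have hstokes := Finset.sum_le_sum fun (i : Fin (d + 1)) (_ : i ∈ Finset.univ) =>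
    sobolevEnergy_stokesOp_le (μ := μ) (p := p) h hm hε i
  rw [Finset.sum_add_distrib, ← Finset.mul_sum, Finset.sum_const, Finset.card_univ,
    Fintype.card_fin, nsmul_eq_mul, Nat.cast_add_one] at hstokes
  have hdiv : 2 * (d + 1) * c * ε ^ 2 * ∑ i, gradientEnergy (k + 1) (v i)
      ≤ 2 * (d + 1) * c * ε ^ 2 * totalEnergy k v q := by
    gcongr
    exact sum_gradientEnergy_velocity_le
  rw [shearDataEnergy]
  linarith [sobolevEnergy_hdiv_le h hm]

-- For small `ε` the perturbation is absorbed by the left-hand side.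
theorem exists_totalEnergy_le_shearDataEnergy (d : ℕ) (hμ : 0 < μ) (hp : 0 < p) (k : ℕ) :
    ∃ ε C : ℝ, 0 < ε ∧ 0 < C ∧ ∀ m : Fin (d + 1) → Space d → ℝ,
      (∀ i, SmallMultiplier (k + 1) ε (m i)) → ∀ v q, StokesAdmissible k v q →
        totalEnergy k v q ≤ C * (shearDataEnergy m μ p k v q + ∑ i, energy 1 (v i)) := by
  choose C hC hflat using fun n => exists_solutionEnergy_le_dataEnergy (d := d) hμ hp n
  obtain ⟨R, hR, hdata⟩ := exists_sum_dataEnergy_le_shearDataEnergy d k μ p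
  set C₀ := ∑ n ∈ Finset.range (k + 1), C n
  have hC₀ : 0 < C₀ := Finset.sum_pos (fun n _ => hC n) (by simp)
  set ε : ℝ := min 1 (1 / (2 * (C₀ * R)))
  have hε : 0 < ε := lt_min one_pos (by positivity)
  have hε1 : ε ^ 2 ≤ ε := pow_le_of_le_one hε.le (min_le_left _ _) two_ne_zero
  have hsmall : C₀ * R * ε ^ 2 ≤ 1 / 2 := by
    calc C₀ * R * ε ^ 2 ≤ C₀ * R * (1 / (2 * (C₀ * R))) := by
          gcongr
          exact hε1.trans (min_le_right _ _)
      _ = 1 / 2 := by field_simp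
  refine ⟨ε, 4 * C₀ + 2, hε, by positivity, fun m hm v q h => ?_⟩
  have hsolution : ∑ n ∈ Finset.range (k + 1), solutionEnergy n v q
      ≤ C₀ * ∑ n ∈ Finset.range (k + 1), dataEnergy μ p n v q := by
    rw [Finset.mul_sum]
    refine Finset.sum_le_sum fun n hn => ((hflat n v q (h.mono ?_)).trans ?_)
    · exact Finset.mem_range_succ_iff.1 hn
    · exact mul_le_mul_of_nonneg_right (Finset.single_le_sum (fun n _ => (hC n).le) hn)
        (dataEnergy_nonneg _ _ _ _ _)
  have htotal := totalEnergy_eq k v q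
  have htotal_nonneg := totalEnergy_nonneg k v q
  have hE : 0 ≤ ∑ i, energy 1 (v i) := Finset.sum_nonneg fun _ _ => energy_nonneg _ _
  have hdata' := mul_le_mul_of_nonneg_left
    (hdata ε (hε1.trans (min_le_left _ _)) m hm v q h) hC₀.le
  linarith [mul_le_mul_of_nonneg_right hsmall htotal_nonneg, mul_nonneg hC₀.le hE,
    shearDataEnergy_nonneg m μ p k v q]

end Perturbation

end HalfSpace

/-! ## A Sobolev embedding in the plane -/

section SobolevEmbedding

section Segment

variable {E F : Type*} [NormedAddCommGroup E] [NormedSpace ℝ E] [NormedAddCommGroup F]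
  [NormedSpace ℝ F] {e : E}

-- The fundamental theorem of calculus for `t ↦ (1 - t) • g (x + t • e)`.
lemma norm_le_integral_segment [CompleteSpace F] {g : E → F} (hg : ContDiff ℝ 1 g) (he : ‖e‖ ≤ 1)
    (x : E) : ‖g x‖ ≤ ∫ t in Icc (0 : ℝ) 1, (‖g (x + t • e)‖ + ‖fderiv ℝ g (x + t • e)‖) := by
  have hcont : Continuous g := hg.continuous
  have : Continuous (fderiv ℝ g) := hg.continuous_fderiv one_ne_zero
  let φ' : ℝ → F := fun t => (1 - t) • fderiv ℝ g (x + t • e) e - g (x + t • e)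
  have hφ (t : ℝ) : HasDerivAt (fun t : ℝ => (1 - t) • g (x + t • e)) (φ' t) t := by
    have hline : HasDerivAt (fun t : ℝ => x + t • e) e t := by
      simpa using ((hasDerivAt_id t).smul_const e).const_add x
    have hgline := ((hg.differentiable one_ne_zero _).hasFDerivAt (x := x + t • e)).comp_hasDerivAt
      t hline
    exact (((hasDerivAt_id' t).const_sub 1).fun_smul hgline).congr_deriv
      (by simp [φ', sub_eq_add_neg])
  have hFTC : ∫ t in (0 : ℝ)..1, φ' t = -g x := by
    rw [intervalIntegral.integral_eq_sub_of_hasDerivAt (fun t _ => hφ t)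
      (Continuous.intervalIntegrable (by fun_prop) 0 1)]
    simp
  rw [← norm_neg, ← hFTC, integral_Icc_eq_integral_Ioc,
    ← intervalIntegral.integral_of_le zero_le_one]
  refine intervalIntegral.norm_integral_le_of_norm_le zero_le_one (ae_of_all _ fun t ht => ?_)
    (Continuous.intervalIntegrable (by fun_prop) 0 1)
  have hone : ‖(1 - t : ℝ)‖ ≤ 1 := by
    rw [Real.norm_eq_abs, abs_le]
    constructor <;> linarith [ht.1, ht.2]
  have hdir : ‖fderiv ℝ g (x + t • e) e‖ ≤ ‖fderiv ℝ g (x + t • e)‖ :=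
    (ContinuousLinearMap.le_opNorm _ _).trans (mul_le_of_le_one_right (norm_nonneg _) he)
  calc ‖φ' t‖ ≤ ‖(1 - t : ℝ)‖ * ‖fderiv ℝ g (x + t • e) e‖ + ‖g (x + t • e)‖ := by
        rw [← norm_smul]; exact norm_sub_le _ _
    _ ≤ ‖fderiv ℝ g (x + t • e)‖ + ‖g (x + t • e)‖ := by
        gcongr; exact (mul_le_of_le_one_left (norm_nonneg _) hone).trans hdir
    _ = _ := add_comm _ _

lemma norm_iteratedFDeriv_le_integral_segment [CompleteSpace F] {f : E → F} {n : ℕ}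
    (hf : ContDiff ℝ (n + 1 : ℕ) f) (he : ‖e‖ ≤ 1) (x : E) :
    ‖iteratedFDeriv ℝ n f x‖ ≤ ∫ t in Icc (0 : ℝ) 1,
      (‖iteratedFDeriv ℝ n f (x + t • e)‖ + ‖iteratedFDeriv ℝ (n + 1) f (x + t • e)‖) := by
  have hD : ContDiff ℝ 1 (iteratedFDeriv ℝ n f) := hf.iteratedFDeriv_right (by norm_cast; omega)
  simpa only [norm_fderiv_iteratedFDeriv] using norm_le_integral_segment hD he x

end Segment

lemma integrableOn_unitSquare {W : ℝ × ℝ → ℝ} (hW : Continuous W) :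
    IntegrableOn W (Icc 0 1 ×ˢ Icc 0 1) :=
  hW.continuousOn.integrableOn_compact (isCompact_Icc.prod isCompact_Icc)

variable {f : E2 → ℝ} {n : ℕ}

lemma norm_iteratedFDeriv_le_integral_unitSquare (hf : ContDiff ℝ (n + 2 : ℕ) f) (x : E2) :
    ‖iteratedFDeriv ℝ n f x‖ ≤ ∫ z in (Icc (0 : ℝ) 1 ×ˢ Icc (0 : ℝ) 1),
      (‖iteratedFDeriv ℝ n f (x + !₂[z.1, z.2])‖
        + 2 * ‖iteratedFDeriv ℝ (n + 1) f (x + !₂[z.1, z.2])‖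
        + ‖iteratedFDeriv ℝ (n + 2) f (x + !₂[z.1, z.2])‖) := by
  let a (j : ℕ) (y : E2) : ℝ := ‖iteratedFDeriv ℝ j f y‖
  have ha {j : ℕ} (hj : j ≤ n + 2) : Continuous (a j) :=
    (hf.continuous_iteratedFDeriv (by exact_mod_cast hj)).norm
  have ha0 := ha (j := n) (by omega)
  have ha1 := ha (j := n + 1) (by omega)
  have ha2 := ha (j := n + 2) le_rfl
  have hseg {j : ℕ} (hj : j ≤ n + 1) (i : Fin 2) (y : E2) :
      a j y ≤ ∫ t in Icc (0 : ℝ) 1, (a j (y + t • stdVec i) + a (j + 1) (y + t • stdVec i)) :=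
    norm_iteratedFDeriv_le_integral_segment (hf.of_le (by exact_mod_cast (by omega))) (by simp) y
  have hInt {G : ℝ → ℝ} (hG : Continuous G) : IntegrableOn G (Icc 0 1) :=
    hG.continuousOn.integrableOn_compact isCompact_Icc
  let W (y : E2) : ℝ := a n y + 2 * a (n + 1) y + a (n + 2) y
  have hW : Continuous fun z : ℝ × ℝ => W (x + !₂[z.1, z.2]) := by fun_prop
  have hvec (s t : ℝ) : x + s • stdVec 0 + t • stdVec 1 = x + !₂[s, t] := by
    ext i; fin_cases i <;> simp
  have hinner (s : ℝ) : a n (x + s • stdVec 0) + a (n + 1) (x + s • stdVec 0)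
      ≤ ∫ t in Icc (0 : ℝ) 1, W (x + !₂[s, t]) := by
    refine (add_le_add (hseg (by omega) 1 _) (hseg le_rfl 1 _)).trans_eq ?_
    rw [← integral_add (hInt (by fun_prop)) (hInt (by fun_prop))]
    refine integral_congr_ae (ae_of_all _ fun t => ?_)
    simp only [hvec, W]
    ring
  change a n x ≤ ∫ z in (Icc (0 : ℝ) 1 ×ˢ Icc (0 : ℝ) 1), W (x + !₂[z.1, z.2])
  have hWint := integrableOn_unitSquare hW
  refine (hseg (by omega) 0 x).trans ?_
  rw [Measure.volume_eq_prod] at hWint ⊢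
  rw [setIntegral_prod _ hWint]
  rw [IntegrableOn, ← Measure.prod_restrict] at hWint
  exact integral_mono (hInt (by fun_prop)) hWint.integral_prod_left hinner

lemma setIntegral_unitSquare_le_integral {G : E2 → ℝ} (hG : Integrable G) (hG0 : ∀ y, 0 ≤ G y)
    (x : E2) : ∫ z in (Icc (0 : ℝ) 1 ×ˢ Icc (0 : ℝ) 1), G (x + !₂[z.1, z.2]) ≤ ∫ y, G y := by
  have hmp : MeasurePreserving fun z : ℝ × ℝ => x + !₂[z.1, z.2] :=
    (measurePreserving_add_left volume x).comp ((PiLp.volume_preserving_toLp (Fin 2)).comp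
      (volume_preserving_finTwoArrow ℝ).symm)
  have hemb : MeasurableEmbedding fun z : ℝ × ℝ => x + !₂[z.1, z.2] :=
    (measurableEmbedding_addLeft x).comp ((MeasurableEquiv.toLp 2 _).measurableEmbedding.comp
      MeasurableEquiv.finTwoArrow.symm.measurableEmbedding)
  rw [← hmp.integral_comp hemb]
  exact setIntegral_le_integral ((hmp.integrable_comp_emb hemb).2 hG) (ae_of_all _ fun _ => hG0 _)

lemma sq_integral_unitSquare_le {W : ℝ × ℝ → ℝ} (hW : Continuous W) :
    (∫ z in (Icc (0 : ℝ) 1 ×ˢ Icc (0 : ℝ) 1), W z) ^ 2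
      ≤ ∫ z in (Icc (0 : ℝ) 1 ×ˢ Icc (0 : ℝ) 1), W z ^ 2 := by
  have : IsProbabilityMeasure
      ((volume : Measure (ℝ × ℝ)).restrict (Icc (0 : ℝ) 1 ×ˢ Icc (0 : ℝ) 1)) :=
    ⟨by rw [Measure.restrict_apply_univ, Measure.volume_eq_prod, Measure.prod_prod]; simp⟩
  exact even_two.convexOn_pow.map_integral_le (continuous_pow 2).continuousOn isClosed_univ
    (ae_of_all _ fun _ => mem_univ _) (integrableOn_unitSquare hW)
    (integrableOn_unitSquare (hW.pow 2))

lemma sq_norm_iteratedFDeriv_le_sum_integral (hf : ContDiff ℝ (n + 2 : ℕ) f)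
    (hInt : ∀ j ≤ n + 2, Integrable fun y => ‖iteratedFDeriv ℝ j f y‖ ^ 2) (x : E2) :
    ‖iteratedFDeriv ℝ n f x‖ ^ 2
      ≤ 6 * ∑ j ∈ Finset.range (n + 3), ∫ y, ‖iteratedFDeriv ℝ j f y‖ ^ 2 := by
  let a (j : ℕ) (y : E2) : ℝ := ‖iteratedFDeriv ℝ j f y‖
  have ha {j : ℕ} (hj : j ≤ n + 2) : Continuous (a j) :=
    (hf.continuous_iteratedFDeriv (by exact_mod_cast hj)).norm
  have ha0 := ha (j := n) (by omega)
  have ha1 := ha (j := n + 1) (by omega)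
  have ha2 := ha (j := n + 2) le_rfl
  let W (y : E2) : ℝ := a n y + 2 * a (n + 1) y + a (n + 2) y
  have hW : Continuous fun z : ℝ × ℝ => W (x + !₂[z.1, z.2]) := by fun_prop
  let G (y : E2) : ℝ := 6 * ∑ j ∈ Finset.range (n + 3), a j y ^ 2
  have hWG (y : E2) : W y ^ 2 ≤ G y := by
    have hcauchy : W y ^ 2 ≤ 6 * (a n y ^ 2 + a (n + 1) y ^ 2 + a (n + 2) y ^ 2) := by
      simp only [W]
      nlinarith [sq_nonneg (2 * a n y - a (n + 1) y), sq_nonneg (a n y - a (n + 2) y),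
        sq_nonneg (a (n + 1) y - 2 * a (n + 2) y)]
    have hlow : 0 ≤ ∑ j ∈ Finset.range n, a j y ^ 2 := Finset.sum_nonneg fun _ _ => sq_nonneg _
    simp only [G, Finset.sum_range_succ]
    linarith
  have hGint : Integrable G := (integrable_finsetSum _ fun j hj =>
    hInt j (by have := Finset.mem_range.1 hj; omega)).const_mul 6
  have hG : Continuous G := by
    refine continuous_const.mul (continuous_finsetSum _ fun j hj => ?_)
    exact (ha (by have := Finset.mem_range.1 hj; omega)).pow 2
  calc a n x ^ 2 ≤ (∫ z in (Icc (0 : ℝ) 1 ×ˢ Icc (0 : ℝ) 1), W (x + !₂[z.1, z.2])) ^ 2 :=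
        pow_le_pow_left₀ (norm_nonneg _) (norm_iteratedFDeriv_le_integral_unitSquare hf x) 2
    _ ≤ ∫ z in (Icc (0 : ℝ) 1 ×ˢ Icc (0 : ℝ) 1), W (x + !₂[z.1, z.2]) ^ 2 :=
        sq_integral_unitSquare_le hW
    _ ≤ ∫ z in (Icc (0 : ℝ) 1 ×ˢ Icc (0 : ℝ) 1), G (x + !₂[z.1, z.2]) :=
        integral_mono (integrableOn_unitSquare (hW.pow 2))
          (integrableOn_unitSquare (by fun_prop)) fun _ => hWG _
    _ ≤ ∫ y, G y :=
        setIntegral_unitSquare_le_integral hGint (fun y => (sq_nonneg _).trans (hWG y)) x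
    _ = _ := by
        rw [integral_const_mul, integral_finsetSum _ fun j hj =>
          hInt j (by have := Finset.mem_range.1 hj; omega)]

end SobolevEmbedding

/-! ## Pointwise bounds for coordinates and composites -/

section Pointwise

variable {E F : Type*} [NormedAddCommGroup E] [NormedSpace ℝ E] [NormedAddCommGroup F]
  [NormedSpace ℝ F] {x : E} {n : ℕ}

lemma eqOn_iteratedFDeriv {S : Set E} (hS : IsOpen S) {f g : E → F} (h : EqOn f g S) :
    EqOn (iteratedFDeriv ℝ n f) (iteratedFDeriv ℝ n g) S := fun _ hx =>
  ((h.eventuallyEq_of_mem (hS.mem_nhds hx)).iteratedFDeriv ℝ n).eq_of_nhds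

lemma iteratedFDeriv_sub_const {g : E → F} {c : F} (hg : ContDiffAt ℝ n g x)
    (hn : n ≠ 0) : iteratedFDeriv ℝ n (fun y => g y - c) x = iteratedFDeriv ℝ n g x := by
  rw [fun_iteratedFDeriv_sub_apply hg contDiffAt_const, iteratedFDeriv_const_of_ne hn,
    Pi.zero_apply, sub_zero]

section Coordinates

variable {ι : Type*} [Fintype ι] {u : E → EuclideanSpace ℝ ι}

lemma norm_iteratedFDeriv_coord_le (hu : ContDiffAt ℝ n u x) (i : ι) :
    ‖iteratedFDeriv ℝ n (fun y => u y i) x‖ ≤ ‖iteratedFDeriv ℝ n u x‖ :=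
  ((EuclideanSpace.proj i : EuclideanSpace ℝ ι →L[ℝ] ℝ).norm_iteratedFDeriv_comp_left hu
    (le_refl (n : WithTop ℕ∞))).trans (mul_le_of_le_one_left (norm_nonneg _) (norm_proj_le i))

lemma norm_le_sum_norm_coord (w : EuclideanSpace ℝ ι) : ‖w‖ ≤ ∑ i, ‖w i‖ := by
  rw [EuclideanSpace.norm_eq]
  exact Real.sqrt_le_iff.2 ⟨Finset.sum_nonneg fun _ _ => norm_nonneg _,
    Finset.sum_sq_le_sq_sum_of_nonneg fun _ _ => norm_nonneg _⟩

lemma norm_iteratedFDeriv_le_sum_coord (hu : ContDiffAt ℝ n u x) :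
    ‖iteratedFDeriv ℝ n u x‖ ≤ ∑ i, ‖iteratedFDeriv ℝ n (fun y => u y i) x‖ := by
  refine ContinuousMultilinearMap.opNorm_le_bound
    (Finset.sum_nonneg fun _ _ => norm_nonneg _) fun z => ?_
  refine (norm_le_sum_norm_coord _).trans ?_
  rw [Finset.sum_mul]
  refine Finset.sum_le_sum fun i _ => ?_
  have hcoord : iteratedFDeriv ℝ n u x z i = iteratedFDeriv ℝ n (fun y => u y i) x z :=
    (congrArg (· z) ((EuclideanSpace.proj i).iteratedFDeriv_comp_left hu le_rfl)).symm
  rw [hcoord]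
  exact ContinuousMultilinearMap.le_opNorm _ z

lemma sq_norm_iteratedFDeriv_le_sum_coord (hu : ContDiffAt ℝ n u x) :
    ‖iteratedFDeriv ℝ n u x‖ ^ 2
      ≤ Fintype.card ι * ∑ i, ‖iteratedFDeriv ℝ n (fun y => u y i) x‖ ^ 2 :=
  (pow_le_pow_left₀ (norm_nonneg _) (norm_iteratedFDeriv_le_sum_coord hu) 2).trans
    sq_sum_le_card_mul_sum_sq

end Coordinates

section Composition

variable {E' : Type*} [NormedAddCommGroup E'] [NormedSpace ℝ E'] {T : Set E'} {φ : E → E'}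
  {g : E' → F} {D : ℝ}

/-- The orders of the derivatives of `g` entering the `n`-th derivative of a composite `g ∘ φ`. -/
def chainOrders (n : ℕ) : Finset ℕ := Finset.Icc (min 1 n) n

/-- A constant for the change of variables in the seminorm of order `n`. -/
@[irreducible] def chainConst (n : ℕ) : ℝ := (n.factorial * 2 ^ n) ^ 2 * (n + 1)

lemma chainConst_pos (n : ℕ) : 0 < chainConst n := by
  rw [chainConst]
  positivity

lemma sum_chainConst_nonneg (n : ℕ) : 0 ≤ ∑ j ∈ Finset.range n, chainConst j :=
  Finset.sum_nonneg fun j _ => (chainConst_pos j).le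

lemma le_of_mem_chainOrders {j : ℕ} (hj : j ∈ chainOrders n) : j ≤ n := (Finset.mem_Icc.1 hj).2

lemma chainOrders_subset_range (n : ℕ) : chainOrders n ⊆ Finset.range (n + 1) := fun _ hj =>
  Finset.mem_range_succ_iff.2 (le_of_mem_chainOrders hj)

-- Replacing `g` by `g - g (φ x)` removes the order zero term from the chain rule.
lemma norm_iteratedFDeriv_comp_le_sum_chainOrders (hφ : ContDiff ℝ n φ)
    (hD : ∀ i, 1 ≤ i → i ≤ n → ‖iteratedFDeriv ℝ i φ x‖ ≤ D ^ i) (hT : IsOpen T)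
    (hg : ContDiffOn ℝ n g T) (hx : φ x ∈ T) :
    ‖iteratedFDeriv ℝ n (g ∘ φ) x‖
      ≤ n.factorial * D ^ n * ∑ j ∈ chainOrders n, ‖iteratedFDeriv ℝ j g (φ x)‖ := by
  rcases eq_or_ne n 0 with rfl | hn
  · simp [chainOrders]
  have hS : IsOpen (φ ⁻¹' T) := hT.preimage hφ.continuous
  have hgx : ContDiffAt ℝ n g (φ x) := hg.contDiffAt (hT.mem_nhds hx)
  have houter (i : ℕ) (hi : i ≤ n) : ‖iteratedFDerivWithin ℝ i (fun y => g y - g (φ x)) T (φ x)‖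
      ≤ ∑ j ∈ chainOrders n, ‖iteratedFDeriv ℝ j g (φ x)‖ := by
    rw [iteratedFDerivWithin_of_isOpen i hT hx]
    rcases eq_or_ne i 0 with rfl | hi0
    · rw [norm_iteratedFDeriv_zero, sub_self, norm_zero]
      exact Finset.sum_nonneg fun _ _ => norm_nonneg _
    · rw [iteratedFDeriv_sub_const (hgx.of_le (by exact_mod_cast hi)) hi0]
      exact Finset.single_le_sum (f := fun j => ‖iteratedFDeriv ℝ j g (φ x)‖)
        (fun _ _ => norm_nonneg _) (Finset.mem_Icc.2 ⟨by omega, hi⟩)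
  have hinner (i : ℕ) (h1 : 1 ≤ i) (hi : i ≤ n) :
      ‖iteratedFDerivWithin ℝ i φ (φ ⁻¹' T) x‖ ≤ D ^ i := by
    rw [iteratedFDerivWithin_of_isOpen i hS hx]
    exact hD i h1 hi
  have hcomp := norm_iteratedFDerivWithin_comp_le (hg.sub (contDiffOn_const (c := g (φ x))))
    hφ.contDiffOn le_rfl hT.uniqueDiffOn hS.uniqueDiffOn (mapsTo_preimage φ T) hx
    houter hinner
  have hgφ : ContDiffAt ℝ n (g ∘ φ) x := hgx.comp x hφ.contDiffAt
  rw [iteratedFDerivWithin_of_isOpen n hS hx] at hcomp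
  rw [← iteratedFDeriv_sub_const (c := g (φ x)) hgφ hn]
  exact hcomp.trans_eq (by ring)

lemma sq_norm_iteratedFDeriv_comp_le (hφ : ContDiff ℝ n φ)
    (hb : ∀ i, 1 ≤ i → i ≤ n → ‖iteratedFDeriv ℝ i φ x‖ ≤ 2 ^ i) (hT : IsOpen T)
    (hg : ContDiffOn ℝ n g T) (hx : φ x ∈ T) :
    ‖iteratedFDeriv ℝ n (g ∘ φ) x‖ ^ 2
      ≤ chainConst n * ∑ j ∈ chainOrders n, ‖iteratedFDeriv ℝ j g (φ x)‖ ^ 2 := by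
  have hcard : ((chainOrders n).card : ℝ) ≤ n + 1 := by
    exact_mod_cast (Finset.card_le_card (chainOrders_subset_range n)).trans_eq (by simp)
  refine (pow_le_pow_left₀ (norm_nonneg _)
    (norm_iteratedFDeriv_comp_le_sum_chainOrders hφ hb hT hg hx) 2).trans ?_
  rw [mul_pow, chainConst, mul_assoc]
  gcongr
  exact sq_sum_le_card_mul_sum_sq.trans (by gcongr)

end Composition

end Pointwise

/-! ## Sobolev functions on open sets and changes of variables -/

section OpenSets

variable {E F : Type*} [NormedAddCommGroup E] [NormedSpace ℝ E] [MeasureSpace E]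
  [NormedAddCommGroup F] [NormedSpace ℝ F] {S T : Set E} {n : ℕ}

/-- The squared homogeneous Sobolev seminorm of order `n` on `S`. The unrestricted derivative is the
right one as long as `S` is open. -/
def energyOn (S : Set E) (n : ℕ) (g : E → F) : ℝ := ∫ x in S, ‖iteratedFDeriv ℝ n g x‖ ^ 2

/-- `g` is `C^n` on `S` and belongs to the Sobolev space `H^n`. -/
def SobolevRegOn (S : Set E) (n : ℕ) (g : E → F) : Prop :=
  ContDiffOn ℝ n g S ∧ ∀ j ≤ n, IntegrableOn (fun x => ‖iteratedFDeriv ℝ j g x‖ ^ 2) S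

lemma energyOn_nonneg (S : Set E) (n : ℕ) (g : E → F) : 0 ≤ energyOn S n g :=
  integral_nonneg fun _ => sq_nonneg _

lemma SobolevRegOn.mono_order {m : ℕ} {g : E → F} (hg : SobolevRegOn S n g) (hm : m ≤ n) :
    SobolevRegOn S m g :=
  ⟨hg.1.of_le (by exact_mod_cast hm), fun j hj => hg.2 j (hj.trans hm)⟩

section Measurable

variable [OpensMeasurableSpace E]

lemma energyOn_congr (hS : IsOpen S) {f g : E → F} (h : EqOn f g S) :
    energyOn S n f = energyOn S n g :=
  setIntegral_congr_fun hS.measurableSet fun x hx => by simp only [eqOn_iteratedFDeriv hS h hx]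

lemma SobolevRegOn.congr (hS : IsOpen S) {f g : E → F} (hf : SobolevRegOn S n f)
    (h : EqOn g f S) : SobolevRegOn S n g :=
  ⟨hf.1.congr h, fun j hj => (hf.2 j hj).congr_fun
    (fun x hx => by simp only [eqOn_iteratedFDeriv hS h hx]) hS.measurableSet⟩

lemma integrableOn_iteratedFDeriv_sq_of_le (hS : IsOpen S) {g : E → F}
    (hg : ContDiffOn ℝ n g S) {G : E → ℝ} (hG : IntegrableOn G S)
    (h : ∀ x ∈ S, ‖iteratedFDeriv ℝ n g x‖ ^ 2 ≤ G x) :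
    IntegrableOn (fun x => ‖iteratedFDeriv ℝ n g x‖ ^ 2) S := by
  have hcont : ContinuousOn (fun x => ‖iteratedFDeriv ℝ n g x‖ ^ 2) S :=
    ((hg.continuousOn_iteratedFDerivWithin le_rfl hS.uniqueDiffOn).norm.pow 2).congr fun x hx => by
      simp only [Pi.pow_apply, iteratedFDerivWithin_of_isOpen n hS hx]
  refine Integrable.mono' hG (hcont.aestronglyMeasurable hS.measurableSet) ?_
  filter_upwards [ae_restrict_mem hS.measurableSet] with x hx
  rw [Real.norm_of_nonneg (sq_nonneg _)]
  exact h x hx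

section Coordinates

variable {ι : Type*} [Fintype ι] {u : E → EuclideanSpace ℝ ι}

lemma SobolevRegOn.coord (hS : IsOpen S) (hu : SobolevRegOn S n u) (i : ι) :
    SobolevRegOn S n fun y => u y i := by
  have hui : ContDiffOn ℝ n (fun y => u y i) S :=
    (EuclideanSpace.proj (𝕜 := ℝ) i).contDiff.comp_contDiffOn hu.1
  refine ⟨hui, fun j hj => integrableOn_iteratedFDeriv_sq_of_le hS
    (hui.of_le (by exact_mod_cast hj)) (hu.2 j hj) fun x hx => ?_⟩
  have hux := (hu.mono_order hj).1.contDiffAt (hS.mem_nhds hx)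
  exact pow_le_pow_left₀ (norm_nonneg _) (norm_iteratedFDeriv_coord_le hux i) 2

lemma SobolevRegOn.of_coord (hS : IsOpen S) (hu : ∀ i, SobolevRegOn S n fun y => u y i) :
    SobolevRegOn S n u := by
  have hcont : ContDiffOn ℝ n u S := contDiffOn_euclidean.2 fun i => (hu i).1
  refine ⟨hcont, fun j hj => integrableOn_iteratedFDeriv_sq_of_le hS
    (hcont.of_le (by exact_mod_cast hj))
    ((integrable_finsetSum Finset.univ fun i _ => (hu i).2 j hj).const_mul (Fintype.card ι : ℝ))
    fun x hx => ?_⟩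
  exact sq_norm_iteratedFDeriv_le_sum_coord
    ((hcont.of_le (by exact_mod_cast hj)).contDiffAt (hS.mem_nhds hx))

lemma energyOn_coord_le (hS : IsOpen S) (hu : SobolevRegOn S n u) (i : ι) :
    energyOn S n (fun y => u y i) ≤ energyOn S n u := by
  refine setIntegral_mono_on ((hu.coord hS i).2 n le_rfl) (hu.2 n le_rfl) hS.measurableSet
    fun x hx => ?_
  exact pow_le_pow_left₀ (norm_nonneg _)
    (norm_iteratedFDeriv_coord_le (hu.1.contDiffAt (hS.mem_nhds hx)) i) 2

lemma energyOn_le_sum_coord (hS : IsOpen S) (hu : SobolevRegOn S n u) :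
    energyOn S n u ≤ Fintype.card ι * ∑ i, energyOn S n fun y => u y i := by
  have hInt (i : ι) := (hu.coord hS i).2 n le_rfl
  simp only [energyOn]
  rw [← integral_finsetSum _ fun i _ => hInt i, ← integral_const_mul]
  exact setIntegral_mono_on (hu.2 n le_rfl)
    ((integrable_finsetSum _ fun i _ => hInt i).const_mul _) hS.measurableSet fun x hx =>
      sq_norm_iteratedFDeriv_le_sum_coord (hu.1.contDiffAt (hS.mem_nhds hx))

end Coordinates

end Measurable

section Composition

/-- Volume-preserving changes of variables with derivatives bounded by fixed constants. -/
structure SobolevTransport (n : ℕ) (φ : E → E) : Prop where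
  contDiff : ContDiff ℝ n φ
  norm_le : ∀ i, 1 ≤ i → i ≤ n → ∀ x, ‖iteratedFDeriv ℝ i φ x‖ ≤ 2 ^ i
  measurePreserving : MeasurePreserving φ
  measurableEmbedding : MeasurableEmbedding φ

variable {φ : E → E} {g : E → F}

namespace SobolevTransport

lemma mono {m : ℕ} (hφ : SobolevTransport n φ) (hm : m ≤ n) : SobolevTransport m φ where
  contDiff := hφ.contDiff.of_le (by exact_mod_cast hm)
  norm_le i h1 hi := hφ.norm_le i h1 (hi.trans hm)
  measurePreserving := hφ.measurePreserving
  measurableEmbedding := hφ.measurableEmbedding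

lemma integrableOn_comp (hφ : SobolevTransport n φ) (hg : SobolevRegOn T n g) {j : ℕ}
    (hj : j ≤ n) : IntegrableOn (fun x => ‖iteratedFDeriv ℝ j g (φ x)‖ ^ 2) (φ ⁻¹' T) :=
  (hφ.measurePreserving.integrableOn_comp_preimage hφ.measurableEmbedding).2 (hg.2 j hj)

lemma integrableOn_chain (hφ : SobolevTransport n φ) (hg : SobolevRegOn T n g) :
    IntegrableOn (fun x => chainConst n * ∑ j ∈ chainOrders n, ‖iteratedFDeriv ℝ j g (φ x)‖ ^ 2)
      (φ ⁻¹' T) :=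
  (integrable_finsetSum _ fun _ hj =>
    hφ.integrableOn_comp hg (le_of_mem_chainOrders hj)).const_mul _

variable [OpensMeasurableSpace E]

lemma sobolevRegOn_comp (hφ : SobolevTransport n φ) (hT : IsOpen T) (hg : SobolevRegOn T n g) :
    SobolevRegOn (φ ⁻¹' T) n (g ∘ φ) := by
  have hgφ : ContDiffOn ℝ n (g ∘ φ) (φ ⁻¹' T) :=
    hg.1.comp hφ.contDiff.contDiffOn (mapsTo_preimage φ T)
  refine ⟨hgφ, fun j hj => integrableOn_iteratedFDeriv_sq_of_le
    (hT.preimage hφ.contDiff.continuous) (hgφ.of_le (by exact_mod_cast hj))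
    ((hφ.mono hj).integrableOn_chain (hg.mono_order hj)) fun x hx => ?_⟩
  exact sq_norm_iteratedFDeriv_comp_le (hφ.mono hj).contDiff
    (fun i h1 hi => (hφ.mono hj).norm_le i h1 hi x) hT (hg.mono_order hj).1 hx

lemma energyOn_comp_le (hφ : SobolevTransport n φ) (hT : IsOpen T) (hg : SobolevRegOn T n g) :
    energyOn (φ ⁻¹' T) n (g ∘ φ) ≤ chainConst n * ∑ j ∈ chainOrders n, energyOn T j g := by
  have hS : MeasurableSet (φ ⁻¹' T) := (hT.preimage hφ.contDiff.continuous).measurableSet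
  calc energyOn (φ ⁻¹' T) n (g ∘ φ)
      ≤ ∫ x in φ ⁻¹' T, chainConst n * ∑ j ∈ chainOrders n, ‖iteratedFDeriv ℝ j g (φ x)‖ ^ 2 :=
        setIntegral_mono_on ((hφ.sobolevRegOn_comp hT hg).2 n le_rfl) (hφ.integrableOn_chain hg) hS
          fun x hx => sq_norm_iteratedFDeriv_comp_le hφ.contDiff
            (fun i h1 hi => hφ.norm_le i h1 hi x) hT hg.1 hx
    _ = chainConst n * ∑ j ∈ chainOrders n,
          ∫ x in φ ⁻¹' T, ‖iteratedFDeriv ℝ j g (φ x)‖ ^ 2 := by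
        rw [integral_const_mul, integral_finsetSum _ fun j hj =>
          hφ.integrableOn_comp hg (le_of_mem_chainOrders hj)]
    _ = chainConst n * ∑ j ∈ chainOrders n, energyOn T j g := by
        congr 1
        exact Finset.sum_congr rfl fun j _ => hφ.measurePreserving.setIntegral_preimage_emb
          hφ.measurableEmbedding (fun y => ‖iteratedFDeriv ℝ j g y‖ ^ 2) T

end SobolevTransport

end Composition

end OpenSets

/-! ## Flattening an epigraph -/

section Shear

variable {d n : ℕ} {f g : Space d → ℝ} {x : Space d} {ε : ℝ}

/-- The shear along the normal axis that maps the half-space onto the epigraph of `f` when `f` is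
constant along that axis. -/
def shear (f : Space d → ℝ) (x : Space d) : Space d := x + f x • stdVec 0

/-- Functions of the tangential variables only. -/
def NormalInvariant (f : Space d → ℝ) : Prop := ∀ (x : Space d) (t : ℝ), f (x + t • stdVec 0) = f x

/-- The region above the graph of a function of the tangential variables, such a function being
represented as a normally invariant function on the whole space. -/
def epigraph (f : Space d → ℝ) : Set (Space d) := {x | f x < x 0}

/-- Heights whose derivatives up to order `n` are bounded by `ε`. One more derivative is required
so that the shear is continuously differentiable also for `n = 0`. -/
structure SmallHeight (n : ℕ) (ε : ℝ) (f : Space d → ℝ) : Prop where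
  contDiff : ContDiff ℝ (n + 1 : ℕ) f
  normalInvariant : NormalInvariant f
  norm_le : ∀ i ≤ n, ∀ x, ‖iteratedFDeriv ℝ i f x‖ ≤ ε

lemma interior_halfSpace_eq : interior (halfSpace d) = {x : Space d | 0 < x 0} := by
  have hsurj : Function.Surjective (EuclideanSpace.proj 0 : Space d →L[ℝ] ℝ) := fun t =>
    ⟨EuclideanSpace.single 0 t, by simp⟩
  have h := (EuclideanSpace.proj 0 : Space d →L[ℝ] ℝ).interior_preimage hsurj (Ici 0)
  rwa [interior_Ici] at h

lemma halfSpace_ae_eq_normal_pos : halfSpace d =ᵐ[volume] {x : Space d | 0 < x 0} := by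
  filter_upwards [ae_normal_ne_zero] with x hx
  exact propext ⟨fun h => lt_of_le_of_ne h hx.symm, fun h => le_of_lt h⟩

lemma jetNorm_of_normal_pos (hx : 0 < x 0) : jetNorm n f x = ‖iteratedFDeriv ℝ n f x‖ := by
  rw [jetNorm, iteratedFDerivWithin_congr_set (eventuallyEq_univ.2 (halfSpace_mem_nhds hx)),
    iteratedFDerivWithin_univ]

lemma jetNorm_of_contDiff (hf : ContDiff ℝ n f) (hx : x ∈ halfSpace d) :
    jetNorm n f x = ‖iteratedFDeriv ℝ n f x‖ := by
  rw [jetNorm, iteratedFDerivWithin_eq_iteratedFDeriv uniqueDiffOn_halfSpace hf.contDiffAt hx]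

lemma energy_eq_energyOn (n : ℕ) (f : Space d → ℝ) :
    energy n f = energyOn {x | 0 < x 0} n f := by
  rw [energy, setIntegral_congr_set halfSpace_ae_eq_normal_pos]
  exact setIntegral_congr_fun isOpen_normal_pos.measurableSet fun x hx => by
    simp only [jetNorm_of_normal_pos hx]

lemma integrableOn_jetNorm_sq_iff : IntegrableOn (fun x => jetNorm n f x ^ 2) (halfSpace d) ↔
    IntegrableOn (fun x => ‖iteratedFDeriv ℝ n f x‖ ^ 2) {x | 0 < x 0} := by
  rw [integrableOn_congr_set_ae halfSpace_ae_eq_normal_pos]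
  exact integrableOn_congr_fun (fun x hx => by simp only [jetNorm_of_normal_pos hx])
    isOpen_normal_pos.measurableSet

lemma SobolevReg.sobolevRegOn (hf : SobolevReg n f) : SobolevRegOn {x | 0 < x 0} n f :=
  ⟨hf.1.mono fun _ hx => mem_halfSpace.2 (le_of_lt (mem_ofPred.1 hx)),
    fun j hj => integrableOn_jetNorm_sq_iff.1 (hf.2 j hj)⟩

lemma shear_normal (f : Space d → ℝ) (x : Space d) : shear f x 0 = x 0 + f x := by simp [shear]

lemma contDiff_shear {r : WithTop ℕ∞} (hf : ContDiff ℝ r f) : ContDiff ℝ r (shear f) := by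
  unfold shear
  fun_prop

lemma hasFDerivAt_shear (hf : DifferentiableAt ℝ f x) :
    HasFDerivAt (shear f)
      (ContinuousLinearMap.id ℝ (Space d) + (fderiv ℝ f x).smulRight (stdVec 0)) x :=
  (hasFDerivAt_id x).add (hf.hasFDerivAt.smul_const (stdVec 0))

lemma norm_iteratedFDeriv_id_le {E : Type*} [NormedAddCommGroup E] [NormedSpace ℝ E] (hn : 1 ≤ n)
    (x : E) : ‖iteratedFDeriv ℝ n (fun y : E => y) x‖ ≤ 1 := by
  obtain ⟨m, rfl⟩ := Nat.exists_eq_add_of_le' hn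
  have hid : fderiv ℝ (fun y : E => y) = fun _ => ContinuousLinearMap.id ℝ E :=
    funext fun _ => fderiv_fun_id
  rw [← norm_iteratedFDeriv_fderiv, hid]
  rcases eq_or_ne m 0 with rfl | hm
  · rw [norm_iteratedFDeriv_zero]
    exact ContinuousLinearMap.norm_id_le
  · simp [iteratedFDeriv_const_of_ne hm]

lemma norm_iteratedFDeriv_shear_le (hf : ContDiff ℝ n f) (hn : 1 ≤ n)
    (hb : ‖iteratedFDeriv ℝ n f x‖ ≤ 1) : ‖iteratedFDeriv ℝ n (shear f) x‖ ≤ 2 ^ n := by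
  let along : ℝ →L[ℝ] Space d := ContinuousLinearMap.toSpanSingleton ℝ (stdVec 0)
  have hshear : shear f = fun y => y + (along ∘ f) y := rfl
  have halong : ‖iteratedFDeriv ℝ n (along ∘ f) x‖ ≤ 1 := by
    refine (along.norm_iteratedFDeriv_comp_left hf.contDiffAt le_rfl).trans ?_
    rwa [ContinuousLinearMap.norm_toSpanSingleton, PiLp.norm_single, norm_one, one_mul]
  rw [hshear, fun_iteratedFDeriv_add_apply (f := fun y : Space d => y) contDiffAt_id
    (along.contDiff.comp hf).contDiffAt]
  calc _ ≤ (1 : ℝ) + 1 := (norm_add_le _ _).trans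
        (add_le_add (norm_iteratedFDeriv_id_le hn x) halong)
    _ = 2 ^ 1 := by norm_num
    _ ≤ 2 ^ n := pow_le_pow_right₀ one_le_two hn

namespace NormalInvariant

lemma neg (hf : NormalInvariant f) : NormalInvariant (-f) := fun x t => congrArg Neg.neg (hf x t)

lemma shear_neg_shear (hf : NormalInvariant f) (x : Space d) : shear (-f) (shear f x) = x := by
  simp [shear, hf x]

lemma shear_shear_neg (hf : NormalInvariant f) (x : Space d) : shear f (shear (-f) x) = x := by
  simpa using hf.neg.shear_neg_shear x

lemma injective_shear (hf : NormalInvariant f) : Function.Injective (shear f) :=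
  Function.LeftInverse.injective hf.shear_neg_shear

lemma surjective_shear (hf : NormalInvariant f) : Function.Surjective (shear f) :=
  Function.RightInverse.surjective hf.shear_shear_neg

lemma fderiv_normal (hf : NormalInvariant f) (hfx : DifferentiableAt ℝ f x) :
    fderiv ℝ f x (stdVec 0) = 0 := by
  rw [← hfx.lineDeriv_eq_fderiv, lineDeriv, funext (hf x), deriv_const]

lemma measurePreserving_shear (hf : NormalInvariant f) (hf1 : ContDiff ℝ 1 f) :
    MeasurePreserving (shear f) := by
  have hdiff : Differentiable ℝ f := hf1.differentiable one_ne_zero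
  have hmeas : Measurable (shear f) := (contDiff_shear hf1).continuous.measurable
  refine ⟨hmeas, Measure.ext fun T hT => ?_⟩
  have hcov := lintegral_abs_det_fderiv_eq_addHaar_image volume (hmeas hT)
    (fun x _ => (hasFDerivAt_shear (hdiff x)).hasFDerivWithinAt) hf.injective_shear.injOn
  rw [image_preimage_eq T hf.surjective_shear] at hcov
  rw [Measure.map_apply hmeas hT, ← hcov]
  simp [det_id_add_smulRight, hf.fderiv_normal (hdiff _)]

lemma mem_epigraph_shear_iff (hf : NormalInvariant f) :
    shear f x ∈ epigraph f ↔ x ∈ {x : Space d | 0 < x 0} := by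
  rw [epigraph, mem_ofPred, mem_ofPred, shear_normal, shear, hf]
  exact lt_add_iff_pos_left (f x)

lemma preimage_shear_epigraph (hf : NormalInvariant f) :
    shear f ⁻¹' epigraph f = {x : Space d | 0 < x 0} :=
  Set.ext fun _ => hf.mem_epigraph_shear_iff

lemma preimage_shear_neg_pos (hf : NormalInvariant f) :
    shear (-f) ⁻¹' {x : Space d | 0 < x 0} = epigraph f := by
  rw [← hf.preimage_shear_epigraph, preimage_preimage]
  simp only [hf.shear_shear_neg, preimage_id']

lemma mapsTo_shear_closure_epigraph (hf : NormalInvariant f) (hfc : Continuous f) :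
    MapsTo (shear f) (halfSpace d) (closure (epigraph f)) := fun x hx => by
  have hInt : MapsTo (shear f) (interior (halfSpace d)) (epigraph f) := fun y hy =>
    hf.mem_epigraph_shear_iff.2 (interior_halfSpace_eq.subset hy)
  exact hInt.closure (contDiff_shear (contDiff_zero.2 hfc)).continuous
    (mem_closure_interior_halfSpace hx)

end NormalInvariant

namespace SmallHeight

lemma mono {m : ℕ} {δ : ℝ} (hf : SmallHeight n ε f) (hm : m ≤ n) (hδ : ε ≤ δ) :
    SmallHeight m δ f where
  contDiff := hf.contDiff.of_le (by exact_mod_cast Nat.succ_le_succ hm)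
  normalInvariant := hf.normalInvariant
  norm_le i hi x := (hf.norm_le i (hi.trans hm) x).trans hδ

lemma neg (hf : SmallHeight n ε f) : SmallHeight n ε (-f) where
  contDiff := hf.contDiff.neg
  normalInvariant := hf.normalInvariant.neg
  norm_le i hi x := by
    rw [iteratedFDeriv_neg_apply, norm_neg]
    exact hf.norm_le i hi x

lemma contDiff_one (hf : SmallHeight n ε f) : ContDiff ℝ 1 f :=
  hf.contDiff.of_le (by exact_mod_cast n.succ_pos)

lemma sobolevTransport (hf : SmallHeight n 1 f) : SobolevTransport n (shear f) where
  contDiff := contDiff_shear (hf.contDiff.of_le (by exact_mod_cast n.le_succ))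
  norm_le i h1 hi x := norm_iteratedFDeriv_shear_le
    (hf.contDiff.of_le (by exact_mod_cast hi.trans n.le_succ)) h1 (hf.norm_le i hi x)
  measurePreserving := hf.normalInvariant.measurePreserving_shear hf.contDiff_one
  measurableEmbedding := (contDiff_shear hf.contDiff_one).continuous.measurableEmbedding
    hf.normalInvariant.injective_shear

lemma isOpen_epigraph (hf : SmallHeight n ε f) : IsOpen (epigraph f) :=
  isOpen_lt hf.contDiff.continuous (by fun_prop)

lemma smallMultiplier_hderiv (hf : SmallHeight (n + 1) ε f) (i : Fin (d + 1)) :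
    SmallMultiplier n ε (hderiv i f) := by
  have hfn (j : ℕ) (hj : j ≤ n) : ContDiff ℝ (j + 1 : ℕ) f :=
    hf.contDiff.of_le (by exact_mod_cast Nat.succ_le_succ (hj.trans n.le_succ))
  refine ⟨contDiffOn_hderiv i (hfn n le_rfl).contDiffOn, fun j hj x hx => ?_⟩
  refine (jetNorm_hderiv_le i (hfn j hj).contDiffOn hx).trans ?_
  rw [jetNorm_of_contDiff (hfn j hj) hx]
  exact hf.norm_le _ (Nat.succ_le_succ hj) x

section Transport

variable {F : Space d → ℝ}

lemma sobolevReg_comp_shear (hf : SmallHeight n 1 f)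
    (hcl : ContDiffOn ℝ n g (closure (epigraph f))) (hg : SobolevRegOn (epigraph f) n g) :
    SobolevReg n (g ∘ shear f) := by
  have hφ := hf.sobolevTransport
  have hgf := hφ.sobolevRegOn_comp hf.isOpen_epigraph hg
  rw [hf.normalInvariant.preimage_shear_epigraph] at hgf
  exact ⟨hcl.comp hφ.contDiff.contDiffOn
    (hf.normalInvariant.mapsTo_shear_closure_epigraph hf.contDiff.continuous),
    fun j hj => integrableOn_jetNorm_sq_iff.2 (hgf.2 j hj)⟩

lemma energy_le_of_eqOn_comp_shear (hf : SmallHeight n 1 f) (hg : SobolevRegOn (epigraph f) n g)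
    (hF : EqOn F (g ∘ shear f) {x | 0 < x 0}) :
    energy n F ≤ chainConst n * ∑ j ∈ chainOrders n, energyOn (epigraph f) j g := by
  have h := hf.sobolevTransport.energyOn_comp_le hf.isOpen_epigraph hg
  rwa [hf.normalInvariant.preimage_shear_epigraph, ← energyOn_congr isOpen_normal_pos hF,
    ← energy_eq_energyOn] at h

lemma eqOn_comp_shear_neg (hf : SmallHeight n 1 f) (hF : EqOn F (g ∘ shear f) {x | 0 < x 0}) :
    EqOn g (F ∘ shear (-f)) (epigraph f) := fun x hx => by
  rw [← hf.normalInvariant.preimage_shear_neg_pos] at hx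
  rw [Function.comp_apply, hF hx, Function.comp_apply, hf.normalInvariant.shear_shear_neg]

lemma sobolevRegOn_epigraph (hf : SmallHeight n 1 f) (hFn : SobolevReg n F)
    (hF : EqOn F (g ∘ shear f) {x | 0 < x 0}) : SobolevRegOn (epigraph f) n g := by
  have h := hf.neg.sobolevTransport.sobolevRegOn_comp isOpen_normal_pos hFn.sobolevRegOn
  rw [hf.normalInvariant.preimage_shear_neg_pos] at h
  exact h.congr hf.isOpen_epigraph (hf.eqOn_comp_shear_neg hF)

lemma energyOn_epigraph_le_gradientEnergy (hf : SmallHeight (n + 1) 1 f)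
    (hg : SobolevReg (n + 1) (g ∘ shear f)) :
    energyOn (epigraph f) (n + 1) g ≤ chainConst (n + 1) * gradientEnergy n (g ∘ shear f) := by
  have h := hf.neg.sobolevTransport.energyOn_comp_le isOpen_normal_pos hg.sobolevRegOn
  rw [hf.normalInvariant.preimage_shear_neg_pos,
    ← energyOn_congr hf.isOpen_epigraph (hf.eqOn_comp_shear_neg fun _ _ => rfl)] at h
  have horders : chainOrders (n + 1) = Finset.Ico (0 + 1) (n + 1 + 1) := by
    ext j
    simp only [chainOrders, Finset.mem_Icc, Finset.mem_Ico]
    lia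
  simp only [← energy_eq_energyOn] at h
  rwa [horders, ← Finset.sum_Ico_add', ← Finset.range_eq_Ico] at h

lemma sobolevEnergy_le_of_eqOn_comp_shear (hf : SmallHeight n 1 f)
    (hg : SobolevRegOn (epigraph f) n g) (hF : EqOn F (g ∘ shear f) {x | 0 < x 0}) :
    sobolevEnergy n F ≤ (∑ j ∈ Finset.range (n + 1), chainConst j)
      * ∑ j ∈ Finset.range (n + 1), energyOn (epigraph f) j g := by
  rw [sobolevEnergy, Finset.sum_mul]
  refine Finset.sum_le_sum fun j hj => ?_
  have hjn : j ≤ n := Finset.mem_range_succ_iff.1 hj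
  refine ((hf.mono hjn le_rfl).energy_le_of_eqOn_comp_shear (hg.mono_order hjn) hF).trans ?_
  refine mul_le_mul_of_nonneg_left ?_ (chainConst_pos j).le
  exact Finset.sum_le_sum_of_subset_of_nonneg
    ((chainOrders_subset_range j).trans (Finset.range_mono (Nat.succ_le_succ hjn)))
    fun _ _ _ => energyOn_nonneg _ _ _

end Transport

end SmallHeight

end Shear

/-! ## The Stokes system above a graph -/

section EpigraphStokes

variable {d k n : ℕ} {f g q : Space d → ℝ} {u : Space d → Space d} {x : Space d} {ρ μ p : ℝ}

/-- The partial derivative on the whole space. -/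
def coordDeriv (i : Fin (d + 1)) (g : Space d → ℝ) (x : Space d) : ℝ := fderiv ℝ g x (stdVec i)

/-- The divergence of a vector field. -/
def divergence (u : Space d → Space d) (x : Space d) : ℝ := ∑ i, coordDeriv i (fun y => u y i) x

/-- The Stokes operator `-μ Δu + p ∇q`. -/
def vectorStokesOp (μ p : ℝ) (u : Space d → Space d) (q : Space d → ℝ) (x : Space d) : Space d :=
  WithLp.toLp 2 fun i =>
    -μ * ∑ j, coordDeriv j (coordDeriv j fun y => u y i) x + p * coordDeriv i q x

/-- A velocity and a pressure above the graph of `f`, regular up to the boundary, with square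
integrable derivatives, the velocity vanishing on the boundary. -/
structure EpigraphStokesAdmissible (k : ℕ) (f : Space d → ℝ) (u : Space d → Space d)
    (q : Space d → ℝ) : Prop where
  contDiffOn_velocity : ContDiffOn ℝ (k + 2 : ℕ) u (closure (epigraph f))
  contDiffOn_pressure : ContDiffOn ℝ (k + 1 : ℕ) q (closure (epigraph f))
  velocity : SobolevRegOn (epigraph f) (k + 2) u
  pressure : SobolevRegOn (epigraph f) (k + 1) q
  boundary : ∀ x : Space d, x 0 = f x → u x = 0

/-- The coordinates of `u` in the flattened domain. -/
def flatten (f : Space d → ℝ) (u : Space d → Space d) (i : Fin (d + 1)) : Space d → ℝ :=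
  (fun y => u y i) ∘ shear f

/-- The gradient of the height, the coefficient of the flattened derivatives. -/
def heightSlope (f : Space d → ℝ) (i : Fin (d + 1)) : Space d → ℝ := hderiv i f

lemma shearDeriv_comp_shear (hf : NormalInvariant f) (hfx : DifferentiableAt ℝ f x)
    (hg : DifferentiableAt ℝ g (shear f x)) (hx : 0 < x 0) (i : Fin (d + 1)) :
    shearDeriv (heightSlope f) i (g ∘ shear f) x = coordDeriv i g (shear f x) := by
  have hcomp := hg.hasFDerivAt.comp x (hasFDerivAt_shear hfx)
  have hchain (j : Fin (d + 1)) : hderiv j (g ∘ shear f) x = coordDeriv j g (shear f x)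
      + hderiv j f x * coordDeriv 0 g (shear f x) := by
    simp [hderiv_eq_fderiv hx, hcomp.fderiv, coordDeriv]
  have hnormal : hderiv 0 f x = 0 := by rw [hderiv_eq_fderiv hx, hf.fderiv_normal hfx]
  rw [shearDeriv, heightSlope, hchain, hchain, hnormal]
  ring

lemma shearDeriv_eqOn_normal_pos {m : Fin (d + 1) → Space d → ℝ} {F G : Space d → ℝ}
    (h : EqOn F G {x | 0 < x 0}) (i : Fin (d + 1)) :
    EqOn (shearDeriv m i F) (shearDeriv m i G) {x | 0 < x 0} := fun x hx => by
  have hnear := (h.eventuallyEq_of_mem (isOpen_normal_pos.mem_nhds hx)).fderiv_eq (𝕜 := ℝ)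
  rw [shearDeriv, shearDeriv]
  simp only [hderiv_eq_fderiv (mem_ofPred.1 hx), hnear]

lemma contDiffOn_coordDeriv {T : Set (Space d)} (hT : IsOpen T)
    (hg : ContDiffOn ℝ (n + 1 : ℕ) g T) (i : Fin (d + 1)) : ContDiffOn ℝ n (coordDeriv i g) T :=
  (hg.fderiv_of_isOpen hT (by norm_cast)).clm_apply contDiffOn_const

namespace SmallHeight

variable {ε : ℝ}

lemma eqOn_shearDeriv (hf : SmallHeight n ε f) {F : Space d → ℝ}
    (hF : EqOn F (g ∘ shear f) {x | 0 < x 0}) (hg : ContDiffOn ℝ 1 g (epigraph f))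
    (i : Fin (d + 1)) :
    EqOn (shearDeriv (heightSlope f) i F) (coordDeriv i g ∘ shear f) {x | 0 < x 0} := fun x hx => by
  have hmem : shear f x ∈ epigraph f := hf.normalInvariant.mem_epigraph_shear_iff.2 hx
  rw [shearDeriv_eqOn_normal_pos hF i hx, Function.comp_apply]
  exact shearDeriv_comp_shear hf.normalInvariant (hf.contDiff_one.differentiable one_ne_zero x)
    ((hg.contDiffAt (hf.isOpen_epigraph.mem_nhds hmem)).differentiableAt one_ne_zero) hx i

lemma eqOn_shearDeriv_shearDeriv (hf : SmallHeight n ε f) (hg : ContDiffOn ℝ 2 g (epigraph f))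
    (i j : Fin (d + 1)) :
    EqOn (shearDeriv (heightSlope f) j (shearDeriv (heightSlope f) i (g ∘ shear f)))
      (coordDeriv j (coordDeriv i g) ∘ shear f) {x | 0 < x 0} :=
  hf.eqOn_shearDeriv (hf.eqOn_shearDeriv (fun _ _ => rfl) (hg.of_le one_le_two) i)
    (contDiffOn_coordDeriv (n := 1) hf.isOpen_epigraph hg i) j

end SmallHeight

namespace EpigraphStokesAdmissible

lemma contDiffOn_coord (h : EpigraphStokesAdmissible k f u q) (i : Fin (d + 1)) :
    ContDiffOn ℝ 2 (fun y => u y i) (epigraph f) :=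
  ((EuclideanSpace.proj (𝕜 := ℝ) i).contDiff.comp_contDiffOn h.velocity.1).of_le
    (by exact_mod_cast Nat.le_add_left 2 k)

lemma flatten_admissible (h : EpigraphStokesAdmissible k f u q) (hf : SmallHeight (k + 2) 1 f) :
    StokesAdmissible k (flatten f u) (q ∘ shear f) where
  velocity i := hf.sobolevReg_comp_shear
    ((EuclideanSpace.proj (𝕜 := ℝ) i).contDiff.comp_contDiffOn h.contDiffOn_velocity)
    (h.velocity.coord hf.isOpen_epigraph i)
  pressure := (hf.mono (k + 1).le_succ le_rfl).sobolevReg_comp_shear h.contDiffOn_pressure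
    h.pressure
  boundary i x hx := by
    have hzero : u (shear f x) = 0 := h.boundary _ <| by
      rw [shear_normal, hx, zero_add, shear, hf.normalInvariant]
    simp [flatten, hzero]

lemma eqOn_shearDiv {ε : ℝ} (h : EpigraphStokesAdmissible k f u q) (hf : SmallHeight n ε f) :
    EqOn (shearDiv (heightSlope f) (flatten f u)) (divergence u ∘ shear f) {x | 0 < x 0} :=
  fun _ hx => Finset.sum_congr rfl fun i _ => hf.eqOn_shearDeriv (fun _ _ => rfl)
    ((h.contDiffOn_coord i).of_le one_le_two) i hx

lemma eqOn_shearStokesOp {ε : ℝ} (h : EpigraphStokesAdmissible k f u q) (hf : SmallHeight n ε f)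
    (μ p : ℝ) (i : Fin (d + 1)) :
    EqOn (shearStokesOp (heightSlope f) μ p (flatten f u) (q ∘ shear f) i)
      ((fun y => vectorStokesOp μ p u q y i) ∘ shear f) {x | 0 < x 0} := fun x hx => by
  have hlap (j : Fin (d + 1)) := hf.eqOn_shearDeriv_shearDeriv (h.contDiffOn_coord i) j j hx
  have hgrad := hf.eqOn_shearDeriv (fun _ _ => rfl)
    (h.pressure.1.of_le (by exact_mod_cast Nat.le_add_left 1 k)) i hx
  simp only [Function.comp_apply] at hlap hgrad
  simp only [shearStokesOp, vectorStokesOp, Function.comp_apply, flatten, hgrad]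
  congr 2
  exact Finset.sum_congr rfl fun j _ => hlap j

lemma sobolevEnergy_shearDiv_le (h : EpigraphStokesAdmissible k f u q)
    (hf : SmallHeight (k + 2) 1 f) (hρ : ρ ≠ 0) :
    sobolevEnergy (k + 1) (shearDiv (heightSlope f) (flatten f u))
      ≤ (ρ ^ 2)⁻¹ * (∑ j ∈ Finset.range (k + 2), chainConst j)
        * ∑ j ∈ Finset.range (k + 2), energyOn (epigraph f) j fun y => ρ * divergence u y := by
  have hreg : SobolevReg (k + 1) (shearDiv (heightSlope f) (flatten f u)) := SobolevReg.sum fun i =>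
    ((h.flatten_admissible hf).velocity i).shearDeriv hf.smallMultiplier_hderiv i
  have heq : EqOn (fun x => ρ * shearDiv (heightSlope f) (flatten f u) x)
      ((fun y => ρ * divergence u y) ∘ shear f) {x | 0 < x 0} := fun x hx =>
    congrArg (ρ * ·) (h.eqOn_shearDiv hf hx)
  have hf' : SmallHeight (k + 1) 1 f := hf.mono (k + 1).le_succ le_rfl
  have hle := hf'.sobolevEnergy_le_of_eqOn_comp_shear
    (hf'.sobolevRegOn_epigraph (hreg.const_mul ρ) heq) heq
  rw [sobolevEnergy_const_mul ρ hreg] at hle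
  rwa [mul_assoc, ← div_eq_inv_mul, le_div_iff₀' (by positivity)]

lemma sum_sobolevEnergy_shearStokesOp_le (h : EpigraphStokesAdmissible k f u q)
    (hf : SmallHeight (k + 2) 1 f) (μ p : ℝ) :
    ∑ i, sobolevEnergy k (shearStokesOp (heightSlope f) μ p (flatten f u) (q ∘ shear f) i)
      ≤ (d + 1) * (∑ j ∈ Finset.range (k + 1), chainConst j)
        * ∑ j ∈ Finset.range (k + 1), energyOn (epigraph f) j (vectorStokesOp μ p u q) := by
  have hf' : SmallHeight k 1 f := hf.mono (Nat.le_add_right k 2) le_rfl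
  have hcoord (i : Fin (d + 1)) :
      SobolevRegOn (epigraph f) k fun y => vectorStokesOp μ p u q y i :=
    hf'.sobolevRegOn_epigraph
      ((h.flatten_admissible hf).shearStokesOp hf.smallMultiplier_hderiv μ p i)
      (h.eqOn_shearStokesOp hf μ p i)
  have hvec := SobolevRegOn.of_coord hf.isOpen_epigraph hcoord
  have hconst := sum_chainConst_nonneg (k + 1)
  have hterm (i : Fin (d + 1)) :
      sobolevEnergy k (shearStokesOp (heightSlope f) μ p (flatten f u) (q ∘ shear f) i)
        ≤ (∑ j ∈ Finset.range (k + 1), chainConst j)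
          * ∑ j ∈ Finset.range (k + 1), energyOn (epigraph f) j (vectorStokesOp μ p u q) :=
    (hf'.sobolevEnergy_le_of_eqOn_comp_shear (hcoord i) (h.eqOn_shearStokesOp hf μ p i)).trans
      (mul_le_mul_of_nonneg_left (Finset.sum_le_sum fun j hj => energyOn_coord_le
        hf.isOpen_epigraph (hvec.mono_order (Finset.mem_range_succ_iff.1 hj)) i) hconst)
  refine (Finset.sum_le_card_nsmul _ _ _ fun i _ => hterm i).trans_eq ?_
  simp [mul_assoc]

lemma sum_energy_flatten_le (h : EpigraphStokesAdmissible k f u q)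
    (hf : SmallHeight (k + 2) 1 f) :
    ∑ i, energy 1 (flatten f u i) ≤ (d + 1) * chainConst 1 * energyOn (epigraph f) 1 u := by
  have hu : SobolevRegOn (epigraph f) 1 u := h.velocity.mono_order (by lia)
  have hterm (i : Fin (d + 1)) :
      energy 1 (flatten f u i) ≤ chainConst 1 * energyOn (epigraph f) 1 u := by
    have hle := (hf.mono (by lia : 1 ≤ k + 2) le_rfl).energy_le_of_eqOn_comp_shear
      (hu.coord hf.isOpen_epigraph i) (F := flatten f u i) fun _ _ => rfl
    rw [chainOrders, min_self, Finset.Icc_self, Finset.sum_singleton] at hle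
    exact hle.trans (mul_le_mul_of_nonneg_left (energyOn_coord_le hf.isOpen_epigraph hu i)
      (chainConst_pos 1).le)
  refine (Finset.sum_le_card_nsmul _ _ _ fun i _ => hterm i).trans_eq ?_
  simp [mul_assoc]

lemma energyOn_velocity_le (h : EpigraphStokesAdmissible k f u q)
    (hf : SmallHeight (k + 2) 1 f) : energyOn (epigraph f) (k + 2) u
      ≤ (d + 1) * chainConst (k + 2) * totalEnergy k (flatten f u) (q ∘ shear f) := by
  have hc := chainConst_pos (k + 2)
  calc energyOn (epigraph f) (k + 2) u
      ≤ Fintype.card (Fin (d + 1)) * ∑ i, energyOn (epigraph f) (k + 2) fun y => u y i :=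
        energyOn_le_sum_coord hf.isOpen_epigraph h.velocity
    _ ≤ Fintype.card (Fin (d + 1))
          * ∑ i, chainConst (k + 2) * gradientEnergy (k + 1) (flatten f u i) := by
        gcongr with i
        exact hf.energyOn_epigraph_le_gradientEnergy ((h.flatten_admissible hf).velocity i)
    _ = (d + 1) * chainConst (k + 2) * ∑ i, gradientEnergy (k + 1) (flatten f u i) := by
        rw [← Finset.mul_sum, Fintype.card_fin, Nat.cast_succ, mul_assoc]
    _ ≤ _ := by
        gcongr
        exact sum_gradientEnergy_velocity_le

lemma energyOn_pressure_le (h : EpigraphStokesAdmissible k f u q)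
    (hf : SmallHeight (k + 2) 1 f) : energyOn (epigraph f) (k + 1) q
      ≤ chainConst (k + 1) * totalEnergy k (flatten f u) (q ∘ shear f) :=
  ((hf.mono (k + 1).le_succ le_rfl).energyOn_epigraph_le_gradientEnergy
    (h.flatten_admissible hf).pressure).trans
      (mul_le_mul_of_nonneg_left gradientEnergy_pressure_le (chainConst_pos _).le)

end EpigraphStokesAdmissible

/-- The squared norms of the data `ρ div u` and `-μ Δu + p ∇q`, and of the gradient of `u`. -/
def epigraphDataEnergy (ρ μ p : ℝ) (k : ℕ) (f : Space d → ℝ) (u : Space d → Space d)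
    (q : Space d → ℝ) : ℝ :=
  ∑ j ∈ Finset.range (k + 2), energyOn (epigraph f) j (fun y => ρ * divergence u y)
    + ∑ j ∈ Finset.range (k + 1), energyOn (epigraph f) j (vectorStokesOp μ p u q)
    + energyOn (epigraph f) 1 u

/-- A constant for the comparison of the data before and after flattening. -/
def flattenDataConst (d : ℕ) (ρ : ℝ) (k : ℕ) : ℝ :=
  (ρ ^ 2)⁻¹ * (∑ j ∈ Finset.range (k + 2), chainConst j)
    + (d + 1) * (∑ j ∈ Finset.range (k + 1), chainConst j) + (d + 1) * chainConst 1

lemma flattenDataConst_pos (d : ℕ) (ρ : ℝ) (k : ℕ) : 0 < flattenDataConst d ρ k := by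
  have hdivergence := sum_chainConst_nonneg (k + 2)
  have hstokes := sum_chainConst_nonneg (k + 1)
  have hgradient := chainConst_pos 1
  rw [flattenDataConst]
  positivity

lemma EpigraphStokesAdmissible.shearDataEnergy_le (h : EpigraphStokesAdmissible k f u q)
    (hf : SmallHeight (k + 2) 1 f) (hρ : ρ ≠ 0) (μ p : ℝ) :
    shearDataEnergy (heightSlope f) μ p k (flatten f u) (q ∘ shear f)
        + ∑ i, energy 1 (flatten f u i)
      ≤ flattenDataConst d ρ k * epigraphDataEnergy ρ μ p k f u q := by
  have hE {F : Type} [NormedAddCommGroup F] [NormedSpace ℝ F] (n : ℕ) (g : Space d → F) :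
      0 ≤ ∑ j ∈ Finset.range n, energyOn (epigraph f) j g :=
    Finset.sum_nonneg fun j _ => energyOn_nonneg _ _ _
  have hdiv := hE (k + 2) fun y => ρ * divergence u y
  have hstokes := hE (k + 1) (vectorStokesOp μ p u q)
  have hgrad := energyOn_nonneg (epigraph f) 1 u
  have hdiv_le := mul_nonneg (mul_nonneg (inv_nonneg.2 (sq_nonneg ρ))
    (sum_chainConst_nonneg (k + 2))) (add_nonneg hstokes hgrad)
  have hstokes_le := mul_nonneg (mul_nonneg (Nat.cast_add_one_pos (α := ℝ) d).le
    (sum_chainConst_nonneg (k + 1))) (add_nonneg hdiv hgrad)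
  have hgrad_le := mul_nonneg (mul_nonneg (Nat.cast_add_one_pos (α := ℝ) d).le
    (chainConst_pos 1).le) (add_nonneg hdiv hstokes)
  rw [shearDataEnergy, flattenDataConst, epigraphDataEnergy]
  linarith [h.sobolevEnergy_shearDiv_le hf hρ, h.sum_sobolevEnergy_shearStokesOp_le hf μ p,
    h.sum_energy_flatten_le hf]

theorem exists_energyOn_epigraph_le (d : ℕ) (hρ : ρ ≠ 0) (hμ : 0 < μ) (hp : 0 < p) (k : ℕ) :
    ∃ ε C : ℝ, 0 < ε ∧ 0 < C ∧ ∀ f : Space d → ℝ, SmallHeight (k + 2) ε f → ∀ u q,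
      EpigraphStokesAdmissible k f u q →
        energyOn (epigraph f) (k + 2) u + energyOn (epigraph f) (k + 1) q
          ≤ C * epigraphDataEnergy ρ μ p k f u q := by
  obtain ⟨ε, C, hε, hC, hflat⟩ := exists_totalEnergy_le_shearDataEnergy d hμ hp k
  have hvelocity := chainConst_pos (k + 2)
  have hpressure := chainConst_pos (k + 1)
  have hdata := flattenDataConst_pos d ρ k
  refine ⟨min ε 1, ((d + 1) * chainConst (k + 2) + chainConst (k + 1))
    * (C * flattenDataConst d ρ k), lt_min hε one_pos, by positivity, fun f hf u q h => ?_⟩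
  have hf1 : SmallHeight (k + 2) 1 f := hf.mono le_rfl (min_le_right _ _)
  have hfε : SmallHeight (k + 2) ε f := hf.mono le_rfl (min_le_left _ _)
  calc energyOn (epigraph f) (k + 2) u + energyOn (epigraph f) (k + 1) q
      ≤ ((d + 1) * chainConst (k + 2) + chainConst (k + 1))
          * totalEnergy k (flatten f u) (q ∘ shear f) := by
        rw [add_mul]
        exact add_le_add (h.energyOn_velocity_le hf1) (h.energyOn_pressure_le hf1)
    _ ≤ ((d + 1) * chainConst (k + 2) + chainConst (k + 1))
          * (C * (flattenDataConst d ρ k * epigraphDataEnergy ρ μ p k f u q)) := by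
        gcongr
        refine (hflat _ hfε.smallMultiplier_hderiv _ _ (h.flatten_admissible hf1)).trans ?_
        gcongr
        exact h.shearDataEnergy_le hf1 hρ μ p
    _ = _ := by ring

end EpigraphStokes

/-! ## Heights in a Sobolev space -/

/-- The tangential projection as a continuous linear map. -/
def tangentialProj : E3 →L[ℝ] E2 := LinearMap.toContinuousLinearMap
  { toFun := proj2
    map_add' := fun x y => by ext i; fin_cases i <;> simp [proj2]
    map_smul' := fun c x => by ext i; fin_cases i <;> simp [proj2] }

lemma tangentialProj_stdVec_zero : tangentialProj (stdVec 0) = 0 := by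
  change proj2 (stdVec 0) = 0
  ext i
  fin_cases i <;> simp [proj2]

lemma norm_tangentialProj_le : ‖tangentialProj‖ ≤ 1 := by
  refine ContinuousLinearMap.opNorm_le_bound _ zero_le_one fun x => ?_
  change ‖proj2 x‖ ≤ 1 * ‖x‖
  rw [one_mul, EuclideanSpace.norm_eq, EuclideanSpace.norm_eq]
  refine Real.sqrt_le_sqrt ?_
  simp only [proj2, Fin.sum_univ_two, Fin.sum_univ_three, Real.norm_eq_abs, sq_abs]
  change x 1 ^ 2 + x 2 ^ 2 ≤ _
  linarith [sq_nonneg (x 0)]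

lemma gph_proj2 {M : E2 → ℝ} {x : E3} (hx : x 0 = M (proj2 x)) : gph M (proj2 x) = x := by
  ext i
  fin_cases i
  · exact hx.symm
  · rfl
  · rfl

lemma norm_iteratedFDeriv_comp_tangentialProj_le {M : E2 → ℝ} {n : ℕ} (hM : ContDiff ℝ n M)
    (x : E3) : ‖iteratedFDeriv ℝ n (M ∘ tangentialProj) x‖
      ≤ ‖iteratedFDeriv ℝ n M (tangentialProj x)‖ := by
  rw [tangentialProj.iteratedFDeriv_comp_right hM x le_rfl]
  refine (ContinuousMultilinearMap.norm_compContinuousLinearMap_le _ _).trans ?_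
  exact mul_le_of_le_one_right (norm_nonneg _)
    (Finset.prod_le_one (fun _ _ => norm_nonneg _) fun _ _ => norm_tangentialProj_le)

lemma smallHeight_comp_tangentialProj {M : E2 → ℝ} {n : ℕ} {ε : ℝ} (hε : 0 ≤ ε)
    (hM : ContDiff ℝ (n + 2 : ℕ) M)
    (hInt : ∀ j ≤ n + 2, Integrable fun y => ‖iteratedFDeriv ℝ j M y‖ ^ 2)
    (hnorm : 6 * ∑ j ∈ Finset.range (n + 3), ∫ y, ‖iteratedFDeriv ℝ j M y‖ ^ 2 ≤ ε ^ 2) :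
    SmallHeight (d := 2) n ε (M ∘ tangentialProj) where
  contDiff := (hM.of_le (by exact_mod_cast (n + 1).le_succ)).comp tangentialProj.contDiff
  normalInvariant x t := by
    have hshift : tangentialProj (x + t • stdVec 0) = tangentialProj x := by
      rw [map_add, map_smul, tangentialProj_stdVec_zero, smul_zero, add_zero]
    exact congrArg M hshift
  norm_le i hi x := by
    have hMi : ContDiff ℝ (i + 2 : ℕ) M :=
      hM.of_le (by exact_mod_cast Nat.add_le_add_right hi 2)
    have hembed := sq_norm_iteratedFDeriv_le_sum_integral hMi
      (fun j hj => hInt j (hj.trans (Nat.add_le_add_right hi 2))) (tangentialProj x)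
    refine (norm_iteratedFDeriv_comp_tangentialProj_le
      (hMi.of_le (by exact_mod_cast Nat.le_add_right i 2)) x).trans
      (abs_le_of_sq_le_sq' (hembed.trans (le_trans ?_ hnorm)) hε).2
    gcongr

lemma vectorStokesOp_eq (μ p : ℝ) (u : E3 → E3) (q : E3 → ℝ) :
    vectorStokesOp (d := 2) μ p u q = fun y => -μ • vlap u y + p • grad q y := by
  funext y
  ext i
  have hpd : coordDeriv (d := 2) = pd := rfl
  simp [vectorStokesOp, vlap, grad, vecE3, hpd]

theorem cattabriga_estimate_uniform_general
    (ρb μh ph : ℝ) (hρb : 0 < ρb) (hμh : 0 < μh) (hph : 0 < ph) (k : ℕ) :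
    ∃ κ C : ℝ, 0 < κ ∧ 0 < C ∧
      ∀ M : E2 → ℝ, ContDiff ℝ (k + 4 : ℕ) M →
        (∀ j ≤ k + 4, Integrable fun x' : E2 => ‖iteratedFDeriv ℝ j M x'‖ ^ 2) →
        (∑ j ∈ Finset.range (k + 5), ∫ x' : E2, ‖iteratedFDeriv ℝ j M x'‖ ^ 2) ≤ κ ^ 2 →
        ∀ (u : E3 → E3) (p : E3 → ℝ),
          ContDiffOn ℝ (k + 2) u (closure (Omg M)) →
          ContDiffOn ℝ (k + 1) p (closure (Omg M)) →
          (∀ j ≤ k + 2, IntegrableOn (fun x => ‖iteratedFDeriv ℝ j u x‖ ^ 2) (Omg M)) →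
          (∀ j ≤ k + 1, IntegrableOn (fun x => ‖iteratedFDeriv ℝ j p x‖ ^ 2) (Omg M)) →
          (∀ x' : E2, u (gph M x') = 0) →
          (∫ x in Omg M, ‖iteratedFDeriv ℝ (k + 2) u x‖ ^ 2) +
              (∫ x in Omg M, ‖iteratedFDeriv ℝ (k + 1) p x‖ ^ 2) ≤
            C * ((∑ j ∈ Finset.range (k + 2),
                ∫ x in Omg M, ‖iteratedFDeriv ℝ j (fun y => ρb * vdiv u y) x‖ ^ 2) +
              (∑ j ∈ Finset.range (k + 1),
                ∫ x in Omg M,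
                  ‖iteratedFDeriv ℝ j (fun y => -μh • vlap u y + ph • grad p y) x‖ ^ 2) +
              ∫ x in Omg M, ‖iteratedFDeriv ℝ 1 u x‖ ^ 2) := by
  obtain ⟨ε, C, hε, hC, hepigraph⟩ := exists_energyOn_epigraph_le 2 hρb.ne' hμh hph k
  refine ⟨ε / 3, C, by positivity, hC, fun M hM hMint hMnorm u p hu hp huint hpint hbdry => ?_⟩
  have hheight : SmallHeight (d := 2) (k + 2) ε (M ∘ tangentialProj) :=
    smallHeight_comp_tangentialProj hε.le hM hMint (by nlinarith [sq_nonneg ε])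
  have hadm : EpigraphStokesAdmissible (d := 2) k (M ∘ tangentialProj) u p :=
    { contDiffOn_velocity := by exact_mod_cast hu
      contDiffOn_pressure := by exact_mod_cast hp
      velocity := ⟨by exact_mod_cast hu.mono subset_closure, huint⟩
      pressure := ⟨by exact_mod_cast hp.mono subset_closure, hpint⟩
      boundary := fun x hx => gph_proj2 (M := M) hx ▸ hbdry (proj2 x) }
  have hestimate := hepigraph _ hheight u p hadm
  rwa [epigraphDataEnergy, vectorStokesOp_eq] at hestimate

theorem cattabriga_estimate_uniform
    (ρb μh ph : ℝ) (hρb : 0 < ρb) (hμh : 0 < μh) (hph : 0 < ph)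
    (k : ℕ) (hk : k ≤ 4) :
    ∃ κ C : ℝ, 0 < κ ∧ 0 < C ∧
      ∀ M : E2 → ℝ, ContDiff ℝ (⊤ : ℕ∞) M →
        (∀ j ≤ 9, Integrable fun x' : E2 => ‖iteratedFDeriv ℝ j M x'‖ ^ 2) →
        (∑ j ∈ Finset.range 10, ∫ x' : E2, ‖iteratedFDeriv ℝ j M x'‖ ^ 2) ≤ κ ^ 2 →
        ∀ (u : E3 → E3) (p : E3 → ℝ),
          ContDiffOn ℝ (k + 2) u (closure (Omg M)) →
          ContDiffOn ℝ (k + 1) p (closure (Omg M)) →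
          (∀ j ≤ k + 2, IntegrableOn (fun x => ‖iteratedFDeriv ℝ j u x‖ ^ 2) (Omg M)) →
          (∀ j ≤ k + 1, IntegrableOn (fun x => ‖iteratedFDeriv ℝ j p x‖ ^ 2) (Omg M)) →
          (∀ j ≤ k + 1, IntegrableOn
            (fun x => ‖iteratedFDeriv ℝ j (fun y => ρb * vdiv u y) x‖ ^ 2) (Omg M)) →
          (∀ j ≤ k, IntegrableOn
            (fun x => ‖iteratedFDeriv ℝ j (fun y => -μh • vlap u y + ph • grad p y) x‖ ^ 2)
            (Omg M)) →
          (∀ x' : E2, u (gph M x') = 0) →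
          Filter.Tendsto u (Bornology.cobounded E3 ⊓ Filter.principal (closure (Omg M))) (nhds 0) →
          (∫ x in Omg M, ‖iteratedFDeriv ℝ (k + 2) u x‖ ^ 2) +
              (∫ x in Omg M, ‖iteratedFDeriv ℝ (k + 1) p x‖ ^ 2) ≤
            C * ((∑ j ∈ Finset.range (k + 2),
                ∫ x in Omg M, ‖iteratedFDeriv ℝ j (fun y => ρb * vdiv u y) x‖ ^ 2) +
              (∑ j ∈ Finset.range (k + 1),
                ∫ x in Omg M,
                  ‖iteratedFDeriv ℝ j (fun y => -μh • vlap u y + ph • grad p y) x‖ ^ 2) +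
              ∫ x in Omg M, ‖iteratedFDeriv ℝ 1 u x‖ ^ 2) := by
  obtain ⟨κ, C, hκ, hC, hestimate⟩ :=
    cattabriga_estimate_uniform_general ρb μh ph hρb hμh hph k
  refine ⟨κ, C, hκ, hC, fun M hM hMint hMnorm u p hu hp huint hpint _ _ hbdry _ => ?_⟩
  refine hestimate M (hM.of_le (WithTop.coe_le_coe.2 le_top)) (fun j hj => hMint j (by lia))
    (le_trans ?_ hMnorm) u p hu hp huint hpint hbdry
  exact Finset.sum_le_sum_of_subset_of_nonneg (Finset.range_mono (by lia))
    fun _ _ _ => integral_nonneg fun _ => sq_nonneg _
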